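/- arXiv:2012.11023 — 3 statements merged into one kernel-verified Lean document; each statement's English description precedes it below -/
import Mathlib

section
/- Let s ≥ 0, and let p, θ > 0 with pθ > 1. If N_s < 2 + α + β, then the Grushin Lane–Emden system −Δ_s u = v^p, −Δ_s v = u^θ, u, v > 0 on ℝ^N admits no smooth stable solution. -/
open MeasureTheory Real

noncomputable section

/-- Euclidean norm on `Fin n → ℝ`. -/
def enorm' {n : ℕ} (x : Fin n → ℝ) : ℝ := Real.sqrt (∑ i, (x i) ^ 2)

/-- Points of `ℝ^N = ℝ^{N₁} × ℝ^{N₂}`. -/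
abbrev Pt (N₁ N₂ : ℕ) := (Fin N₁ → ℝ) × (Fin N₂ → ℝ)

variable {N₁ N₂ : ℕ}

/-- Partial derivative in the variable `x i`. -/
def pX (i : Fin N₁) (w : Pt N₁ N₂ → ℝ) (z : Pt N₁ N₂) : ℝ :=
  deriv (fun t => w (Function.update z.1 i t, z.2)) (z.1 i)

/-- Partial derivative in the variable `y j`. -/
def pY (j : Fin N₂) (w : Pt N₁ N₂ → ℝ) (z : Pt N₁ N₂) : ℝ :=
  deriv (fun t => w (z.1, Function.update z.2 j t)) (z.2 j)

/-- Laplacian in the `x`-variables. -/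
def lapX (w : Pt N₁ N₂ → ℝ) (z : Pt N₁ N₂) : ℝ := ∑ i, pX i (pX i w) z

/-- Laplacian in the `y`-variables. -/
def lapY (w : Pt N₁ N₂ → ℝ) (z : Pt N₁ N₂) : ℝ := ∑ j, pY j (pY j w) z

/-- The Grushin operator `Δ_s w = Δ_x w + |x|^{2s} Δ_y w`. -/
def grushinLap (s : ℝ) (w : Pt N₁ N₂ → ℝ) (z : Pt N₁ N₂) : ℝ :=
  lapX w z + (enorm' z.1) ^ (2 * s) * lapY w z

/-- Norm of the Grushin gradient: `|∇_s w| = (|∇_x w|² + |x|^{2s}|∇_y w|²)^{1/2}`. -/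
def grushinGrad (s : ℝ) (w : Pt N₁ N₂ → ℝ) (z : Pt N₁ N₂) : ℝ :=
  Real.sqrt ((∑ i, (pX i w z) ^ 2) + (enorm' z.1) ^ (2 * s) * ∑ j, (pY j w z) ^ 2)

/-- Hilbert–Schmidt norm of the Grushin Hessian `∇_s² w`. -/
def grushinHess (s : ℝ) (w : Pt N₁ N₂ → ℝ) (z : Pt N₁ N₂) : ℝ :=
  Real.sqrt ((∑ i, ∑ j, (pX i (pX j w) z) ^ 2)
    + 2 * (enorm' z.1) ^ (2 * s) * (∑ i, ∑ k, (pX i (pY k w) z) ^ 2)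
    + (enorm' z.1) ^ (4 * s) * ∑ h, ∑ k, (pY h (pY k w) z) ^ 2)

/-- Norm of the gradient in the `x`-variables only. -/
def gradXNorm (w : Pt N₁ N₂ → ℝ) (z : Pt N₁ N₂) : ℝ := Real.sqrt (∑ i, (pX i w z) ^ 2)

/-- Norm of the gradient in the `y`-variables only. -/
def gradYNorm (w : Pt N₁ N₂ → ℝ) (z : Pt N₁ N₂) : ℝ := Real.sqrt (∑ j, (pY j w z) ^ 2)

/-- HS norm of the Hessian in the `x`-variables only. -/
def hessXNorm (w : Pt N₁ N₂ → ℝ) (z : Pt N₁ N₂) : ℝ :=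
  Real.sqrt (∑ i, ∑ j, (pX i (pX j w) z) ^ 2)

/-- HS norm of the Hessian in the `y`-variables only. -/
def hessYNorm (w : Pt N₁ N₂ → ℝ) (z : Pt N₁ N₂) : ℝ :=
  Real.sqrt (∑ h, ∑ k, (pY h (pY k w) z) ^ 2)

/-- `(u,v)` is a smooth positive solution of the Grushin Lane–Emden system
`-Δ_s u = v^p`, `-Δ_s v = u^θ`, `u, v > 0` on `ℝ^N`. -/
def IsLaneEmdenSol (s p θ : ℝ) (u v : Pt N₁ N₂ → ℝ) : Prop :=
  ContDiff ℝ (⊤ : ℕ∞) u ∧ ContDiff ℝ (⊤ : ℕ∞) v ∧ (∀ z, 0 < u z) ∧ (∀ z, 0 < v z) ∧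
  (∀ z, -grushinLap s u z = (v z) ^ p) ∧ (∀ z, -grushinLap s v z = (u z) ^ θ)

/-- Stability of a solution `(u,v)`: there are `η ≥ 0` and smooth positive `ξ, ζ` with
`-Δ_s ξ = p v^{p-1} ζ + η ξ` and `-Δ_s ζ = θ u^{θ-1} ξ + η ζ`. -/
def IsStable (s p θ : ℝ) (u v : Pt N₁ N₂ → ℝ) : Prop :=
  ∃ (η : ℝ) (ξ ζ : Pt N₁ N₂ → ℝ), 0 ≤ η ∧
    ContDiff ℝ (⊤ : ℕ∞) ξ ∧ ContDiff ℝ (⊤ : ℕ∞) ζ ∧ (∀ z, 0 < ξ z) ∧ (∀ z, 0 < ζ z) ∧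
    (∀ z, -grushinLap s ξ z = p * (v z) ^ (p - 1) * ζ z + η * ξ z) ∧
    (∀ z, -grushinLap s ζ z = θ * (u z) ^ (θ - 1) * ξ z + η * ζ z)

/-!
Stability provides a positive supersolution of the linearized system. For all solutions carrying
such a supersolution, a single constant bounds the integral of a suitable product of powers of `u`
and `v` against a cutoff. The class is invariant under the Grushin scaling
`u ↦ R ^ α u(Rx, R ^ (1 + s) y)`, `v ↦ R ^ β v(Rx, R ^ (1 + s) y)`, which multiplies the integral
near the origin by a positive power of `R` when `N_s < 2 + α + β`, so letting `R → ∞` gives a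
contradiction.

By symmetry there are two cases. If `p ≤ 1`, the linearized system gives the second-order inequality
`pθ ∫ u ^ (θ - 1) φ² ≤ ∫ v ^ (1 - p) (Δ_s φ)²`; testing it with `u` times a cutoff yields coupled
energy estimates, which close because `pθ > 1`. If `1 < θ ≤ p`, it gives the Hardy-type inequality
`√(pθ) ∫ v ^ ((p - 1) / 2) u ^ ((θ - 1) / 2) φ² ≤ ∫ |∇_s φ|²`. A Keller–Osserman bound combined with
rescaling shows `v ^ (p + 1) ≤ (p + 1) / (θ + 1) * u ^ (θ + 1)`, so testing with `u` times a cutoff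
controls the integral of `v ^ ((p - 1) / 2) u ^ ((θ + 3) / 2)` by that of `u ^ 2`, and interpolation
with the integral of `v⁻¹ u ^ (θ + 1 / θ)` closes the estimate.
-/

/-! ### Calculus of the Grushin operator -/

section Calculus

variable {s : ℝ} {k : Fin N₁ ⊕ Fin N₂} {f g h : Pt N₁ N₂ → ℝ} {z : Pt N₁ N₂}

/-- The standard basis of `ℝ^{N₁} × ℝ^{N₂}`: `Sum.inl i` is the `x_i`-direction, `Sum.inr j` the
`y_j`-direction. -/
def coordVec : Fin N₁ ⊕ Fin N₂ → Pt N₁ N₂ :=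
  Sum.elim (fun i => (Pi.single i 1, 0)) (fun j => (0, Pi.single j 1))

/-- The partial derivative along a coordinate of `ℝ^{N₁} × ℝ^{N₂}`; it treats `pX` and `pY`
uniformly. -/
def coordDeriv (k : Fin N₁ ⊕ Fin N₂) (f : Pt N₁ N₂ → ℝ) (z : Pt N₁ N₂) : ℝ :=
  fderiv ℝ f z (coordVec k)

/-- The coefficient of `∂_k²` in the Grushin operator: `1` in the `x`-directions and `|x|^{2s}` in
the `y`-directions. -/
def grushinWeight (s : ℝ) (k : Fin N₁ ⊕ Fin N₂) (z : Pt N₁ N₂) : ℝ :=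
  Sum.elim (fun _ => 1) (fun _ => enorm' z.1 ^ (2 * s)) k

/-- The product `∇_s f · ∇_s g` of two Grushin gradients, i.e. the carré du champ
`(Δ_s (f g) - f Δ_s g - g Δ_s f) / 2`. -/
def grushinInner (s : ℝ) (f g : Pt N₁ N₂ → ℝ) (z : Pt N₁ N₂) : ℝ :=
  ∑ k, grushinWeight s k z * (coordDeriv k f z * coordDeriv k g z)

lemma pX_eq_coordDeriv (hf : Differentiable ℝ f) (i : Fin N₁) :
    pX i f = coordDeriv (Sum.inl i) f := by
  funext z
  have hfz : HasFDerivAt f (fderiv ℝ f z) (Function.update z.1 i (z.1 i), z.2) := by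
    simpa using (hf z).hasFDerivAt
  exact (hfz.comp_hasDerivAt (z.1 i)
    ((hasDerivAt_update z.1 i (z.1 i)).prodMk (hasDerivAt_const _ _))).deriv

lemma pY_eq_coordDeriv (hf : Differentiable ℝ f) (j : Fin N₂) :
    pY j f = coordDeriv (Sum.inr j) f := by
  funext z
  have hfz : HasFDerivAt f (fderiv ℝ f z) (z.1, Function.update z.2 j (z.2 j)) := by
    simpa using (hf z).hasFDerivAt
  exact (hfz.comp_hasDerivAt (z.2 j)
    ((hasDerivAt_const _ _).prodMk (hasDerivAt_update z.2 j (z.2 j)))).deriv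

lemma grushinLap_eq_sum_of_differentiable (hf : Differentiable ℝ f)
    (hf' : ∀ k, Differentiable ℝ (coordDeriv k f)) (s : ℝ) (z : Pt N₁ N₂) :
    grushinLap s f z = ∑ k, grushinWeight s k z * coordDeriv k (coordDeriv k f) z := by
  simp only [grushinLap, lapX, lapY, Fintype.sum_sum_type, Finset.mul_sum, pX_eq_coordDeriv hf,
    pY_eq_coordDeriv hf, pX_eq_coordDeriv (hf' _), pY_eq_coordDeriv (hf' _), grushinWeight,
    Sum.elim_inl, Sum.elim_inr, one_mul]

lemma contDiff_one_coordDeriv (hf : ContDiff ℝ 2 f) (k : Fin N₁ ⊕ Fin N₂) :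
    ContDiff ℝ 1 (coordDeriv k f) :=
  (hf.fderiv_right (m := 1) (by norm_num)).clm_apply contDiff_const

lemma differentiable_coordDeriv (hf : ContDiff ℝ 2 f) (k : Fin N₁ ⊕ Fin N₂) :
    Differentiable ℝ (coordDeriv k f) :=
  (contDiff_one_coordDeriv hf k).differentiable one_ne_zero

lemma continuous_coordDeriv (hf : ContDiff ℝ 1 f) (k : Fin N₁ ⊕ Fin N₂) :
    Continuous (coordDeriv k f) :=
  (hf.continuous_fderiv one_ne_zero).clm_apply continuous_const

lemma grushinLap_eq_sum (hf : ContDiff ℝ 2 f) (s : ℝ) (z : Pt N₁ N₂) :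
    grushinLap s f z = ∑ k, grushinWeight s k z * coordDeriv k (coordDeriv k f) z :=
  grushinLap_eq_sum_of_differentiable (hf.differentiable two_ne_zero)
    (differentiable_coordDeriv hf) s z

lemma grushinWeight_nonneg (s : ℝ) (k : Fin N₁ ⊕ Fin N₂) (z : Pt N₁ N₂) :
    0 ≤ grushinWeight s k z := by
  rcases k with _ | _
  · exact zero_le_one
  · exact Real.rpow_nonneg (Real.sqrt_nonneg _) _

lemma continuous_grushinWeight (hs : 0 ≤ s) (k : Fin N₁ ⊕ Fin N₂) :
    Continuous (grushinWeight s k : Pt N₁ N₂ → ℝ) := by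
  rcases k with _ | _
  · exact continuous_const
  · refine Continuous.rpow_const ?_ fun _ => Or.inr (by positivity)
    unfold enorm'
    fun_prop

/-- The weights only depend on `x`, and those of the `x`-directions are constant: this is why the
Grushin operator is in divergence form. -/
lemma grushinWeight_add_smul_coordVec (s : ℝ) (k : Fin N₁ ⊕ Fin N₂) (z : Pt N₁ N₂) (t : ℝ) :
    grushinWeight s k (z + t • coordVec k) = grushinWeight s k z := by
  rcases k with i | j <;> simp [grushinWeight, coordVec]

lemma coordDeriv_add (hf : DifferentiableAt ℝ f z) (hg : DifferentiableAt ℝ g z) :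
    coordDeriv k (fun z => f z + g z) z = coordDeriv k f z + coordDeriv k g z := by
  simp [coordDeriv, fderiv_fun_add hf hg]

lemma coordDeriv_mul (hf : DifferentiableAt ℝ f z) (hg : DifferentiableAt ℝ g z) :
    coordDeriv k (fun z => f z * g z) z = f z * coordDeriv k g z + g z * coordDeriv k f z := by
  simp [coordDeriv, fderiv_fun_mul hf hg]

lemma coordDeriv_const_mul (c : ℝ) (hf : DifferentiableAt ℝ f z) :
    coordDeriv k (fun z => c * f z) z = c * coordDeriv k f z := by
  simp [coordDeriv, fderiv_const_mul hf]

lemma coordDeriv_comp {φ : ℝ → ℝ} {φ' : ℝ} (hφ : HasDerivAt φ φ' (f z))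
    (hf : DifferentiableAt ℝ f z) :
    coordDeriv k (fun z => φ (f z)) z = φ' * coordDeriv k f z := by
  have hcomp : HasFDerivAt (fun z => φ (f z)) (φ' • fderiv ℝ f z) z :=
    hφ.comp_hasFDerivAt z hf.hasFDerivAt
  simp [coordDeriv, hcomp.fderiv]

lemma coordDeriv_eq_zero_of_notMem_tsupport (hz : z ∉ tsupport f) : coordDeriv k f z = 0 := by
  simp [coordDeriv, fderiv_of_notMem_tsupport ℝ hz]

lemma tsupport_coordDeriv_subset (k : Fin N₁ ⊕ Fin N₂) (f : Pt N₁ N₂ → ℝ) :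
    tsupport (coordDeriv k f) ⊆ tsupport f :=
  closure_minimal (fun _ hz => by_contra fun hz' => hz (coordDeriv_eq_zero_of_notMem_tsupport hz'))
    (isClosed_tsupport f)

lemma grushinInner_comm (s : ℝ) (f g : Pt N₁ N₂ → ℝ) (z : Pt N₁ N₂) :
    grushinInner s f g z = grushinInner s g f z :=
  Finset.sum_congr rfl fun _ _ => by ring

lemma grushinInner_self_nonneg (s : ℝ) (f : Pt N₁ N₂ → ℝ) (z : Pt N₁ N₂) :
    0 ≤ grushinInner s f f z :=
  Finset.sum_nonneg fun k _ => mul_nonneg (grushinWeight_nonneg s k z) (mul_self_nonneg _)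

lemma grushinInner_sq_le_mul (s : ℝ) (f g : Pt N₁ N₂ → ℝ) (z : Pt N₁ N₂) :
    grushinInner s f g z ^ 2 ≤ grushinInner s f f z * grushinInner s g g z :=
  Finset.sum_sq_le_sum_mul_sum_of_sq_le_mul _
    (fun k _ => mul_nonneg (grushinWeight_nonneg s k z) (mul_self_nonneg _))
    (fun k _ => mul_nonneg (grushinWeight_nonneg s k z) (mul_self_nonneg _))
    fun _ _ => le_of_eq (by ring)

lemma mul_grushinInner_le (s : ℝ) (f g : Pt N₁ N₂ → ℝ) (z : Pt N₁ N₂) (a b : ℝ) :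
    2 * (a * b * grushinInner s f g z)
      ≤ a ^ 2 * grushinInner s f f z + b ^ 2 * grushinInner s g g z := by
  simp only [grushinInner, Finset.mul_sum, ← Finset.sum_add_distrib]
  refine Finset.sum_le_sum fun k _ => ?_
  nlinarith [mul_nonneg (grushinWeight_nonneg s k z)
    (sq_nonneg (a * coordDeriv k f z - b * coordDeriv k g z))]

lemma grushinInner_mul_right (s : ℝ) (f : Pt N₁ N₂ → ℝ) (hg : DifferentiableAt ℝ g z)
    (hh : DifferentiableAt ℝ h z) :
    grushinInner s f (fun z => g z * h z) z
      = g z * grushinInner s f h z + h z * grushinInner s f g z := by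
  simp only [grushinInner, Finset.mul_sum, ← Finset.sum_add_distrib]
  exact Finset.sum_congr rfl fun k _ => by rw [coordDeriv_mul hg hh]; ring

lemma grushinInner_comp_right (s : ℝ) (f : Pt N₁ N₂ → ℝ) {φ : ℝ → ℝ} {φ' : ℝ}
    (hφ : HasDerivAt φ φ' (g z)) (hg : DifferentiableAt ℝ g z) :
    grushinInner s f (fun z => φ (g z)) z = φ' * grushinInner s f g z := by
  simp only [grushinInner, Finset.mul_sum]
  exact Finset.sum_congr rfl fun k _ => by rw [coordDeriv_comp hφ hg]; ring

lemma grushinInner_rpow_right (s : ℝ) (f : Pt N₁ N₂ → ℝ) (hg : DifferentiableAt ℝ g z)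
    (hgz : g z ≠ 0) (a : ℝ) :
    grushinInner s f (fun z => g z ^ a) z = a * g z ^ (a - 1) * grushinInner s f g z :=
  grushinInner_comp_right s f (Real.hasDerivAt_rpow_const (Or.inl hgz)) hg

lemma grushinInner_pow_right (s : ℝ) (f : Pt N₁ N₂ → ℝ) (hg : DifferentiableAt ℝ g z) (n : ℕ) :
    grushinInner s f (fun z => g z ^ n) z = n * g z ^ (n - 1) * grushinInner s f g z :=
  grushinInner_comp_right s f (hasDerivAt_pow n (g z)) hg

lemma grushinLap_add (hf : ContDiff ℝ 2 f) (hg : ContDiff ℝ 2 g) :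
    grushinLap s (fun z => f z + g z) z = grushinLap s f z + grushinLap s g z := by
  simp only [grushinLap_eq_sum hf, grushinLap_eq_sum hg, grushinLap_eq_sum (hf.add hg),
    ← Finset.sum_add_distrib]
  refine Finset.sum_congr rfl fun k _ => ?_
  have hsum : coordDeriv k (fun z => f z + g z) = fun z => coordDeriv k f z + coordDeriv k g z :=
    funext fun z => coordDeriv_add (hf.differentiable two_ne_zero z)
      (hg.differentiable two_ne_zero z)
  rw [hsum, coordDeriv_add (differentiable_coordDeriv hf k z) (differentiable_coordDeriv hg k z)]
  ring

lemma grushinLap_mul (hf : ContDiff ℝ 2 f) (hg : ContDiff ℝ 2 g) :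
    grushinLap s (fun z => f z * g z) z
      = f z * grushinLap s g z + g z * grushinLap s f z + 2 * grushinInner s f g z := by
  have df := hf.differentiable two_ne_zero
  have dg := hg.differentiable two_ne_zero
  have df' := differentiable_coordDeriv hf
  have dg' := differentiable_coordDeriv hg
  simp only [grushinLap_eq_sum hf, grushinLap_eq_sum hg, grushinLap_eq_sum (hf.mul hg),
    grushinInner, Finset.mul_sum, ← Finset.sum_add_distrib]
  refine Finset.sum_congr rfl fun k _ => ?_
  have hprod : coordDeriv k (fun z => f z * g z)
      = fun z => f z * coordDeriv k g z + g z * coordDeriv k f z :=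
    funext fun z => coordDeriv_mul (df z) (dg z)
  rw [hprod, coordDeriv_add ((df z).fun_mul (dg' k z)) ((dg z).fun_mul (df' k z)),
    coordDeriv_mul (df z) (dg' k z), coordDeriv_mul (dg z) (df' k z)]
  ring

lemma grushinLap_comp {φ φ' φ'' : ℝ → ℝ} (hφ : ∀ z, HasDerivAt φ (φ' (f z)) (f z))
    (hφ' : ∀ z, HasDerivAt φ' (φ'' (f z)) (f z)) (hf : ContDiff ℝ 2 f) :
    grushinLap s (fun z => φ (f z)) z
      = φ' (f z) * grushinLap s f z + φ'' (f z) * grushinInner s f f z := by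
  have df := hf.differentiable two_ne_zero
  have df' := differentiable_coordDeriv hf
  have dφ : Differentiable ℝ fun z => φ (f z) := fun z => (hφ z).differentiableAt.comp z (df z)
  have dφ' : Differentiable ℝ fun z => φ' (f z) := fun z => (hφ' z).differentiableAt.comp z (df z)
  have hcomp (k) : coordDeriv k (fun z => φ (f z)) = fun z => φ' (f z) * coordDeriv k f z :=
    funext fun z => coordDeriv_comp (hφ z) (df z)
  have dcomp (k) : Differentiable ℝ (coordDeriv k fun z => φ (f z)) :=
    hcomp k ▸ dφ'.mul (df' k)
  rw [grushinLap_eq_sum_of_differentiable dφ dcomp, grushinLap_eq_sum hf]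
  simp only [grushinInner, Finset.mul_sum, ← Finset.sum_add_distrib]
  refine Finset.sum_congr rfl fun k _ => ?_
  rw [hcomp, coordDeriv_mul (dφ' z) (df' k z), coordDeriv_comp (hφ' z) (df z)]
  ring

lemma grushinLap_const_mul (c : ℝ) (hf : ContDiff ℝ 2 f) :
    grushinLap s (fun z => c * f z) z = c * grushinLap s f z := by
  rw [grushinLap_comp (φ := (c * ·)) (φ' := fun _ => c) (φ'' := fun _ => 0)
    (fun z => by simpa using (hasDerivAt_id (f z)).const_mul c) (fun _ => hasDerivAt_const _ _) hf]
  ring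

lemma grushinLap_rpow (hf : ContDiff ℝ 2 f) (hf0 : ∀ z, f z ≠ 0) (a : ℝ) :
    grushinLap s (fun z => f z ^ a) z = a * f z ^ (a - 1) * grushinLap s f z
      + a * (a - 1) * f z ^ (a - 2) * grushinInner s f f z := by
  rw [grushinLap_comp (φ' := fun t => a * t ^ (a - 1))
    (φ'' := fun t => a * ((a - 1) * t ^ (a - 1 - 1)))
    (fun z => Real.hasDerivAt_rpow_const (Or.inl (hf0 z)))
    (fun z => (Real.hasDerivAt_rpow_const (Or.inl (hf0 z))).const_mul a) hf]
  ring_nf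

lemma grushinLap_pow (hf : ContDiff ℝ 2 f) (n : ℕ) :
    grushinLap s (fun z => f z ^ (n + 2)) z = (n + 2) * f z ^ (n + 1) * grushinLap s f z
      + (n + 2) * (n + 1) * f z ^ n * grushinInner s f f z := by
  rw [grushinLap_comp (φ := (· ^ (n + 2))) (φ' := fun t => (n + 2) * t ^ (n + 1))
    (φ'' := fun t => (n + 2) * ((n + 1) * t ^ n))
    (fun z => by simpa using hasDerivAt_pow (n + 2) (f z))
    (fun z => by simpa using (hasDerivAt_pow (n + 1) (f z)).const_mul ((n : ℝ) + 2)) hf]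
  ring

lemma continuous_grushinInner (hs : 0 ≤ s) (hf : ContDiff ℝ 1 f) (hg : ContDiff ℝ 1 g) :
    Continuous (grushinInner s f g) :=
  continuous_finsetSum _ fun k _ => (continuous_grushinWeight hs k).mul
    ((continuous_coordDeriv hf k).mul (continuous_coordDeriv hg k))

lemma continuous_grushinLap (hs : 0 ≤ s) (hf : ContDiff ℝ 2 f) : Continuous (grushinLap s f) := by
  rw [funext (grushinLap_eq_sum hf s)]
  exact continuous_finsetSum _ fun k _ => (continuous_grushinWeight hs k).mul
    (continuous_coordDeriv (contDiff_one_coordDeriv hf k) k)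

lemma hasCompactSupport_grushinLap (s : ℝ) (hf : ContDiff ℝ 2 f) (hc : HasCompactSupport f) :
    HasCompactSupport (grushinLap s f) :=
  HasCompactSupport.intro hc fun z hz => by
    have hz' (k) : z ∉ tsupport (coordDeriv k f) := fun h => hz (tsupport_coordDeriv_subset k f h)
    simp [grushinLap_eq_sum hf, coordDeriv_eq_zero_of_notMem_tsupport (hz' _)]

lemma hasCompactSupport_grushinInner (s : ℝ) (hc : HasCompactSupport f) :
    HasCompactSupport (grushinInner s f g) :=
  HasCompactSupport.intro hc fun z hz => by
    simp [grushinInner, coordDeriv_eq_zero_of_notMem_tsupport hz]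

lemma hasDerivAt_add_smul_coordVec (hf : Differentiable ℝ f) (k : Fin N₁ ⊕ Fin N₂)
    (z : Pt N₁ N₂) (t : ℝ) :
    HasDerivAt (fun t : ℝ => f (z + t • coordVec k)) (coordDeriv k f (z + t • coordVec k)) t := by
  have hline : HasDerivAt (fun t : ℝ => z + t • coordVec k) (coordVec k) t := by
    simpa using ((hasDerivAt_id t).smul_const (coordVec k)).const_add z
  exact (hf _).hasFDerivAt.comp_hasDerivAt t hline

lemma coordDeriv_eq_zero_of_isLocalMax (hz : IsLocalMax f z) : coordDeriv k f z = 0 := by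
  simp [coordDeriv, hz.fderiv_eq_zero]

lemma coordDeriv_coordDeriv_nonpos_of_isLocalMax (hf : ContDiff ℝ 2 f) (hz : IsLocalMax f z) :
    coordDeriv k (coordDeriv k f) z ≤ 0 := by
  by_contra! hpos
  set γ : ℝ → ℝ := fun t => f (z + t • coordVec k)
  have hγ := hasDerivAt_add_smul_coordVec (hf.differentiable two_ne_zero) k z
  have hderiv : deriv γ = fun t => coordDeriv k f (z + t • coordVec k) :=
    funext fun t => (hγ t).deriv
  have hderiv2 : deriv (deriv γ) 0 = coordDeriv k (coordDeriv k f) z := by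
    rw [hderiv, (hasDerivAt_add_smul_coordVec (differentiable_coordDeriv hf k) k z 0).deriv]
    simp
  have hmin : IsLocalMin γ 0 := isLocalMin_of_deriv_deriv_pos (hderiv2 ▸ hpos)
    (by simp [hderiv, coordDeriv_eq_zero_of_isLocalMax hz]) (hγ 0).continuousAt
  have hmax : ∀ᶠ t in nhds (0 : ℝ), γ t ≤ γ 0 := by
    have hline : Filter.Tendsto (fun t : ℝ => z + t • coordVec k) (nhds 0) (nhds z) :=
      Continuous.tendsto' (by fun_prop) _ _ (by simp)
    simpa [γ] using hline.eventually hz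
  have hconst : γ =ᶠ[nhds 0] fun _ => γ 0 := by
    filter_upwards [hmin, hmax] with t hle hge using le_antisymm hge hle
  rw [← hderiv2, hconst.deriv.deriv_eq] at hpos
  simp at hpos

lemma grushinLap_nonpos_of_isLocalMax (hf : ContDiff ℝ 2 f) (hz : IsLocalMax f z) :
    grushinLap s f z ≤ 0 := by
  rw [grushinLap_eq_sum hf]
  exact Finset.sum_nonpos fun k _ => mul_nonpos_of_nonneg_of_nonpos (grushinWeight_nonneg s k z)
    (coordDeriv_coordDeriv_nonpos_of_isLocalMax hf hz)

end Calculus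

/-! ### Integration by parts -/

section IntegrationByParts

/-- `f` is integrable and its integral vanishes. The integrands of the integration by parts
identities below have this property, and multiples of them may be added to any estimate. -/
def HasNullIntegral {X : Type*} [MeasurableSpace X] (f : X → ℝ) (μ : Measure X) : Prop :=
  Integrable f μ ∧ ∫ x, f x ∂μ = 0

namespace HasNullIntegral

variable {X : Type*} [MeasurableSpace X] {μ : Measure X} {f g F G : X → ℝ}

lemma add (hf : HasNullIntegral f μ) (hg : HasNullIntegral g μ) :
    HasNullIntegral (fun x => f x + g x) μ :=
  ⟨hf.1.add hg.1, by rw [integral_add hf.1 hg.1, hf.2, hg.2, add_zero]⟩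

lemma const_mul (hf : HasNullIntegral f μ) (c : ℝ) : HasNullIntegral (fun x => c * f x) μ :=
  ⟨hf.1.const_mul c, by rw [integral_const_mul, hf.2, mul_zero]⟩

lemma integral_le (hN : HasNullIntegral f μ) (hF : Integrable F μ) (hG : Integrable G μ)
    (hle : ∀ x, F x ≤ G x + f x) : ∫ x, F x ∂μ ≤ ∫ x, G x ∂μ := by
  calc ∫ x, F x ∂μ ≤ ∫ x, (G x + f x) ∂μ := integral_mono hF (hG.add hN.1) hle
    _ = ∫ x, G x ∂μ := by rw [integral_add hG hN.1, hN.2, add_zero]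

end HasNullIntegral

variable {s : ℝ} {f g : Pt N₁ N₂ → ℝ}

lemma hasNullIntegral_grushinWeight_mul (hs : 0 ≤ s) (hf : ContDiff ℝ 2 f)
    (hg : ContDiff ℝ 1 g) (hfg : IsCompact (tsupport f ∩ tsupport g)) (k : Fin N₁ ⊕ Fin N₂) :
    HasNullIntegral (fun z => grushinWeight s k z * (coordDeriv k f z * coordDeriv k g z)
      + grushinWeight s k z * coordDeriv k (coordDeriv k f) z * g z) volume := by
  have hw := continuous_grushinWeight (N₁ := N₁) (N₂ := N₂) hs k
  have hf' := contDiff_one_coordDeriv hf k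
  have integrable_of_tsupport {a b : Pt N₁ N₂ → ℝ} (ha : Continuous a) (hb : Continuous b)
      (haf : tsupport a ⊆ tsupport f) (hbg : tsupport b ⊆ tsupport g) :
      Integrable (fun z => grushinWeight s k z * a z * b z) := by
    refine ((hw.mul ha).mul hb).integrable_of_hasCompactSupport
      (HasCompactSupport.intro hfg fun z hz => ?_)
    by_cases hza : z ∈ tsupport a
    · have hzb : z ∉ tsupport b := fun hzb => hz ⟨haf hza, hbg hzb⟩
      simp [image_eq_zero_of_notMem_tsupport hzb]
    · simp [image_eq_zero_of_notMem_tsupport hza]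
  have hD : tsupport (coordDeriv k f) ⊆ tsupport f := tsupport_coordDeriv_subset k f
  have hi1 := integrable_of_tsupport (continuous_coordDeriv hf' k) hg.continuous
    ((tsupport_coordDeriv_subset k _).trans hD) subset_rfl
  have hi2 := integrable_of_tsupport hf'.continuous (continuous_coordDeriv hg k) hD
    (tsupport_coordDeriv_subset k g)
  have hi3 := integrable_of_tsupport hf'.continuous hg.continuous hD subset_rfl
  have : (volume : Measure (Pt N₁ N₂)).IsAddHaarMeasure :=
    Measure.prod.instIsAddHaarMeasure volume volume
  have hparts : ∫ z, grushinWeight s k z * coordDeriv k f z * coordDeriv k g z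
      = -∫ z, grushinWeight s k z * coordDeriv k (coordDeriv k f) z * g z := by
    refine integral_bilinear_hasLineDerivAt_right_eq_neg_left_of_integrable
      (B := ContinuousLinearMap.mul ℝ ℝ) (v := coordVec k) hi1 hi2 hi3 (fun z _ => ?_)
      fun z _ => (hg.differentiable one_ne_zero z).hasFDerivAt.hasLineDerivAt _
    have hline := (differentiable_coordDeriv hf k z).hasFDerivAt.hasLineDerivAt (coordVec k)
    unfold HasLineDerivAt at hline ⊢
    simp only [grushinWeight_add_smul_coordVec]
    exact hline.const_mul _
  simp only [← mul_assoc]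
  exact ⟨hi2.add hi1, by rw [integral_add hi2 hi1, hparts, neg_add_cancel]⟩

lemma hasNullIntegral_grushinInner_add (hs : 0 ≤ s) (hf : ContDiff ℝ 2 f) (hg : ContDiff ℝ 1 g)
    (hfg : IsCompact (tsupport f ∩ tsupport g)) :
    HasNullIntegral (fun z => grushinInner s f g z + grushinLap s f z * g z) volume := by
  have hk := hasNullIntegral_grushinWeight_mul hs hf hg hfg
  simp only [grushinLap_eq_sum hf, grushinInner, Finset.sum_mul, ← Finset.sum_add_distrib]
  refine ⟨integrable_finsetSum _ fun k _ => (hk k).1, ?_⟩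
  rw [integral_finsetSum _ fun k _ => (hk k).1]
  exact Finset.sum_eq_zero fun k _ => (hk k).2

end IntegrationByParts

/-! ### Classical solutions, the linearized system and scaling -/

section Scaling

variable {s p θ α β R : ℝ} {f u v ξ ζ : Pt N₁ N₂ → ℝ}

/-- `(u, v)` is a positive `C²` solution of the Grushin Lane–Emden system. Contrary to
`IsLaneEmdenSol`, this only requires the regularity for which the equations make sense. -/
structure IsC2LaneEmdenSol (s p θ : ℝ) (u v : Pt N₁ N₂ → ℝ) : Prop where
  contDiff_fst : ContDiff ℝ 2 u
  contDiff_snd : ContDiff ℝ 2 v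
  fst_pos : ∀ z, 0 < u z
  snd_pos : ∀ z, 0 < v z
  grushinLap_fst : ∀ z, grushinLap s u z = -v z ^ p
  grushinLap_snd : ∀ z, grushinLap s v z = -u z ^ θ

/-- `(ξ, ζ)` is a positive `C²` supersolution of the linearization of the Lane–Emden system at
`(u, v)`. Its existence is the stability of `(u, v)` with the nonnegative terms `η ξ` and `η ζ`
dropped. -/
structure IsLinearizedSupersol (s p θ : ℝ) (u v ξ ζ : Pt N₁ N₂ → ℝ) : Prop where
  contDiff_fst : ContDiff ℝ 2 ξ
  contDiff_snd : ContDiff ℝ 2 ζ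
  fst_pos : ∀ z, 0 < ξ z
  snd_pos : ∀ z, 0 < ζ z
  grushinLap_fst_le : ∀ z, grushinLap s ξ z ≤ -(p * v z ^ (p - 1) * ζ z)
  grushinLap_snd_le : ∀ z, grushinLap s ζ z ≤ -(θ * u z ^ (θ - 1) * ξ z)

lemma IsC2LaneEmdenSol.swap (h : IsC2LaneEmdenSol s p θ u v) : IsC2LaneEmdenSol s θ p v u :=
  ⟨h.contDiff_snd, h.contDiff_fst, h.snd_pos, h.fst_pos, h.grushinLap_snd, h.grushinLap_fst⟩

lemma IsLinearizedSupersol.swap (h : IsLinearizedSupersol s p θ u v ξ ζ) :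
    IsLinearizedSupersol s θ p v u ζ ξ :=
  ⟨h.contDiff_snd, h.contDiff_fst, h.snd_pos, h.fst_pos, h.grushinLap_snd_le,
    h.grushinLap_fst_le⟩

lemma IsLaneEmdenSol.isC2LaneEmdenSol (h : IsLaneEmdenSol s p θ u v) :
    IsC2LaneEmdenSol s p θ u v := by
  obtain ⟨hu, hv, hu0, hv0, hLu, hLv⟩ := h
  exact ⟨contDiff_infty.mp hu 2, contDiff_infty.mp hv 2, hu0, hv0,
    fun z => neg_eq_iff_eq_neg.mp (hLu z), fun z => neg_eq_iff_eq_neg.mp (hLv z)⟩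

lemma IsStable.exists_isLinearizedSupersol (h : IsStable s p θ u v) :
    ∃ ξ ζ, IsLinearizedSupersol s p θ u v ξ ζ := by
  obtain ⟨η, ξ, ζ, hη, hξ, hζ, hξ0, hζ0, hLξ, hLζ⟩ := h
  refine ⟨ξ, ζ, contDiff_infty.mp hξ 2, contDiff_infty.mp hζ 2, hξ0, hζ0,
    fun z => ?_, fun z => ?_⟩
  · linarith [hLξ z, mul_nonneg hη (hξ0 z).le]
  · linarith [hLζ z, mul_nonneg hη (hζ0 z).le]

/-- The anisotropic dilation `(x, y) ↦ (R x, R^{1+s} y)`, for which the Grushin operator is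
homogeneous of degree two. -/
def dilation (s R : ℝ) : Pt N₁ N₂ →L[ℝ] Pt N₁ N₂ :=
  (R • ContinuousLinearMap.id ℝ (Fin N₁ → ℝ)).prodMap
    (R ^ (1 + s) • ContinuousLinearMap.id ℝ (Fin N₂ → ℝ))

/-- The rescaling `f ↦ R^a f(δ_R ·)` along the anisotropic dilations `δ_R`. -/
def rescale (s R a : ℝ) (f : Pt N₁ N₂ → ℝ) (z : Pt N₁ N₂) : ℝ := R ^ a * f (dilation s R z)

lemma dilation_apply (s R : ℝ) (z : Pt N₁ N₂) :
    dilation s R z = (R • z.1, R ^ (1 + s) • z.2) := rfl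

lemma contDiff_rescale {n : ℕ∞} (hf : ContDiff ℝ n f) (s R a : ℝ) :
    ContDiff ℝ n (rescale s R a f) :=
  contDiff_const.mul (hf.comp (dilation s R).contDiff)

lemma rescale_pos (hR : 0 < R) (hf : ∀ z, 0 < f z) (a : ℝ) (z : Pt N₁ N₂) :
    0 < rescale s R a f z :=
  mul_pos (Real.rpow_pos_of_pos hR a) (hf _)

lemma rescale_rpow (hR : 0 < R) (hf : ∀ z, 0 < f z) (a b : ℝ) (z : Pt N₁ N₂) :
    rescale s R a f z ^ b = R ^ (a * b) * f (dilation s R z) ^ b := by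
  rw [rescale, Real.mul_rpow (Real.rpow_pos_of_pos hR a).le (hf _).le, ← Real.rpow_mul hR.le]

lemma dilation_coordVec (s R : ℝ) (k : Fin N₁ ⊕ Fin N₂) :
    dilation s R (coordVec k) = Sum.elim (fun _ => R) (fun _ => R ^ (1 + s)) k • coordVec k := by
  rcases k with i | j <;> simp [dilation_apply, coordVec]

lemma coordDeriv_comp_dilation (hf : Differentiable ℝ f) (s R : ℝ) (k : Fin N₁ ⊕ Fin N₂)
    (z : Pt N₁ N₂) :
    coordDeriv k (fun z => f (dilation s R z)) z
      = Sum.elim (fun _ => R) (fun _ => R ^ (1 + s)) k * coordDeriv k f (dilation s R z) := by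
  have hcomp : fderiv ℝ (fun z => f (dilation s R z)) z
      = (fderiv ℝ f (dilation s R z)).comp (dilation s R) :=
    ((hf _).hasFDerivAt.comp z (dilation s R).hasFDerivAt).fderiv
  simp [coordDeriv, hcomp, dilation_coordVec]

lemma grushinWeight_dilation (hR : 0 < R) (s : ℝ) (k : Fin N₁ ⊕ Fin N₂) (z : Pt N₁ N₂) :
    grushinWeight s k z * Sum.elim (fun _ => R) (fun _ => R ^ (1 + s)) k ^ 2
      = R ^ 2 * grushinWeight s k (dilation s R z) := by
  rcases k with i | j
  · simp [grushinWeight]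
  have hnorm : enorm' (R • z.1) = R * enorm' z.1 := by
    simp only [enorm', Pi.smul_apply, smul_eq_mul, mul_pow, ← Finset.mul_sum]
    rw [Real.sqrt_mul (sq_nonneg R), Real.sqrt_sq hR.le]
  have hpow : (R ^ (1 + s)) ^ 2 = R ^ 2 * R ^ (2 * s) := by
    rw [Real.rpow_add hR, Real.rpow_one, mul_comm 2 s, Real.rpow_mul hR.le, Real.rpow_two, mul_pow]
  simp only [grushinWeight, Sum.elim_inr, dilation_apply]
  rw [hnorm, Real.mul_rpow hR.le (show 0 ≤ enorm' z.1 from Real.sqrt_nonneg _), hpow]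
  ring

lemma grushinLap_rescale (hf : ContDiff ℝ 2 f) (hR : 0 < R) (a : ℝ) (z : Pt N₁ N₂) :
    grushinLap s (rescale s R a f) z = R ^ (a + 2) * grushinLap s f (dilation s R z) := by
  have hfR : ContDiff ℝ 2 fun z => f (dilation s R z) := hf.comp (dilation s R).contDiff
  have hf' := differentiable_coordDeriv hf
  have hfR' (k) : Differentiable ℝ fun z => coordDeriv k f (dilation s R z) :=
    (hf' k).comp (dilation s R).differentiable
  have hsecond (k) : coordDeriv k (coordDeriv k fun z => f (dilation s R z)) z
      = Sum.elim (fun _ => R) (fun _ => R ^ (1 + s)) k ^ 2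
        * coordDeriv k (coordDeriv k f) (dilation s R z) := by
    rw [funext (coordDeriv_comp_dilation (hf.differentiable two_ne_zero) s R k),
      coordDeriv_const_mul _ (hfR' k z),
      coordDeriv_comp_dilation (hf' k), sq, mul_assoc]
  rw [show rescale s R a f = fun z => R ^ a * f (dilation s R z) from rfl,
    grushinLap_const_mul _ hfR, grushinLap_eq_sum hfR, grushinLap_eq_sum hf, Real.rpow_add hR,
    Real.rpow_two, mul_assoc, Finset.mul_sum (a := R ^ 2)]
  congr 1
  exact Finset.sum_congr rfl fun k _ => by
    rw [hsecond, ← mul_assoc, grushinWeight_dilation hR, mul_assoc]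

lemma IsC2LaneEmdenSol.rescale (h : IsC2LaneEmdenSol s p θ u v) (hβ : β * p = α + 2)
    (hα : α * θ = β + 2) (hR : 0 < R) :
    IsC2LaneEmdenSol s p θ (rescale s R α u) (rescale s R β v) where
  contDiff_fst := contDiff_rescale (n := 2) h.contDiff_fst s R α
  contDiff_snd := contDiff_rescale (n := 2) h.contDiff_snd s R β
  fst_pos := rescale_pos hR h.fst_pos α
  snd_pos := rescale_pos hR h.snd_pos β
  grushinLap_fst z := by
    rw [grushinLap_rescale h.contDiff_fst hR, h.grushinLap_fst, rescale_rpow hR h.snd_pos, hβ,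
      mul_neg]
  grushinLap_snd z := by
    rw [grushinLap_rescale h.contDiff_snd hR, h.grushinLap_snd, rescale_rpow hR h.fst_pos, hα,
      mul_neg]

lemma IsLinearizedSupersol.rescale (h : IsLinearizedSupersol s p θ u v ξ ζ) (hu : ∀ z, 0 < u z)
    (hv : ∀ z, 0 < v z) (hβ : β * p = α + 2) (hα : α * θ = β + 2) (hR : 0 < R) :
    IsLinearizedSupersol s p θ (rescale s R α u) (rescale s R β v) (rescale s R α ξ)
      (rescale s R β ζ) where
  contDiff_fst := contDiff_rescale (n := 2) h.contDiff_fst s R α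
  contDiff_snd := contDiff_rescale (n := 2) h.contDiff_snd s R β
  fst_pos := rescale_pos hR h.fst_pos α
  snd_pos := rescale_pos hR h.snd_pos β
  grushinLap_fst_le z := by
    have hpow : R ^ (α + 2) = R ^ (β * (p - 1)) * R ^ β := by
      rw [← Real.rpow_add hR, ← hβ]; ring_nf
    rw [grushinLap_rescale h.contDiff_fst hR, rescale_rpow hR hv]
    calc R ^ (α + 2) * grushinLap s ξ (dilation s R z)
        ≤ R ^ (α + 2) * -(p * v (dilation s R z) ^ (p - 1) * ζ (dilation s R z)) :=
          mul_le_mul_of_nonneg_left (h.grushinLap_fst_le _) (Real.rpow_pos_of_pos hR _).le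
      _ = _ := by rw [hpow, _root_.rescale]; ring
  grushinLap_snd_le z := by
    have hpow : R ^ (β + 2) = R ^ (α * (θ - 1)) * R ^ α := by
      rw [← Real.rpow_add hR, ← hα]; ring_nf
    rw [grushinLap_rescale h.contDiff_snd hR, rescale_rpow hR hu]
    calc R ^ (β + 2) * grushinLap s ζ (dilation s R z)
        ≤ R ^ (β + 2) * -(θ * u (dilation s R z) ^ (θ - 1) * ξ (dilation s R z)) :=
          mul_le_mul_of_nonneg_left (h.grushinLap_snd_le _) (Real.rpow_pos_of_pos hR _).le
      _ = _ := by rw [hpow, _root_.rescale]; ring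

lemma volume_preimage_dilation (hR : 0 < R) (S : Set (Pt N₁ N₂)) :
    volume (dilation s R ⁻¹' S)
      = ENNReal.ofReal (R ^ (-((N₁ : ℝ) + (1 + s) * N₂))) * volume S := by
  let δ : Pt N₁ N₂ →ₗ[ℝ] Pt N₁ N₂ := (dilation s R : Pt N₁ N₂ →L[ℝ] Pt N₁ N₂)
  have hdet : LinearMap.det δ = R ^ ((N₁ : ℝ) + (1 + s) * N₂) := by
    have hprod : δ = (R • LinearMap.id).prodMap (R ^ (1 + s) • LinearMap.id) := rfl
    rw [hprod, LinearMap.det_prodMap, LinearMap.det_smul, LinearMap.det_smul]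
    simp [Real.rpow_add hR, Real.rpow_mul hR.le]
  have hpos : 0 < R ^ ((N₁ : ℝ) + (1 + s) * N₂) := Real.rpow_pos_of_pos hR _
  have : (volume : Measure (Pt N₁ N₂)).IsAddHaarMeasure :=
    Measure.prod.instIsAddHaarMeasure volume volume
  have hpre := Measure.addHaar_preimage_linearMap volume
    (f := δ) (by rw [hdet]; exact hpos.ne') S
  rwa [hdet, abs_inv, abs_of_pos hpos, ← Real.rpow_neg hR.le] at hpre

lemma preimage_dilation_closedBall_subset (hs : 0 ≤ s) (hR : 1 ≤ R) :
    dilation s R ⁻¹' Metric.closedBall (0 : Pt N₁ N₂) 1 ⊆ Metric.closedBall 0 1 := by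
  intro z hz
  have hR' : 1 ≤ R ^ (1 + s) := Real.one_le_rpow hR (by linarith)
  simp only [Set.mem_preimage, mem_closedBall_zero_iff, dilation_apply, norm_prod_le_iff,
    norm_smul, Real.norm_eq_abs] at hz ⊢
  rw [abs_of_nonneg (zero_le_one.trans hR), abs_of_nonneg (zero_le_one.trans hR')] at hz
  exact ⟨(le_mul_of_one_le_left (norm_nonneg _) hR).trans hz.1,
    (le_mul_of_one_le_left (norm_nonneg _) hR').trans hz.2⟩

end Scaling

/-! ### Elementary inequalities -/

lemma exists_rpow_le_mul_add {r ε : ℝ} (hr0 : 0 ≤ r) (hr1 : r < 1) (hε : 0 < ε) :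
    ∃ K, ∀ T : ℝ, 0 ≤ T → T ^ r ≤ ε * T + K := by
  set B : ℝ := ε ^ (1 / (r - 1))
  have hB : 0 < B := Real.rpow_pos_of_pos hε _
  have hBε : B ^ (1 - r) * ε = 1 := by
    rw [← Real.rpow_mul hε.le, one_div, ← neg_sub r 1, mul_neg,
      inv_mul_cancel₀ (sub_ne_zero.mpr hr1.ne), Real.rpow_neg_one, inv_mul_cancel₀ hε.ne']
  refine ⟨ε * B, fun T hT => ?_⟩
  have hamgm : T ^ r * B ^ (1 - r) ≤ r * T + (1 - r) * B :=
    Real.geom_mean_le_arith_mean2_weighted hr0 (by linarith) hT hB.le (by ring)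
  calc T ^ r = ε * (T ^ r * B ^ (1 - r)) := by linear_combination -T ^ r * hBε
    _ ≤ ε * (r * T + (1 - r) * B) := by gcongr
    _ ≤ ε * (1 * T + 1 * B) := by gcongr; linarith
    _ = ε * T + ε * B := by ring

lemma rpow_rpow_div {x a : ℝ} (hx : 0 ≤ x) (ha : a ≠ 0) (b : ℝ) : (x ^ a) ^ (b / a) = x ^ b := by
  rw [← Real.rpow_mul hx, mul_div_cancel₀ _ ha]

lemma rpow_le_one_add_rpow {t a b : ℝ} (ht : 0 ≤ t) (ha : 0 ≤ a) (hab : a ≤ b) :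
    t ^ a ≤ 1 + t ^ b := by
  rcases le_total t 1 with h | h
  · exact (Real.rpow_le_one ht h ha).trans (by linarith [Real.rpow_nonneg ht b])
  · linarith [Real.rpow_le_rpow_of_exponent_le h hab]

lemma exists_rpow_mul_rpow_mul_pow_le {a b ε : ℝ} {m M : ℕ} (ha : 0 ≤ a) (hb : 0 ≤ b)
    (hab : a + b < 1) (hε : 0 < ε) (hm : m ≠ 0) (hMm : (M : ℝ) * (a + b) ≤ m) :
    ∃ K, ∀ f g x : ℝ, 0 < f → 0 < g → 0 ≤ x → x ≤ 1 →
      f ^ a * g ^ b * x ^ m ≤ ε * (f * x ^ M + g * x ^ M) + K := by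
  obtain ⟨K, hK⟩ := exists_rpow_le_mul_add (add_nonneg ha hb) hab hε
  refine ⟨K, fun f g x hf hg hx0 hx1 => ?_⟩
  have hxM : x ^ m ≤ (x ^ M) ^ (a + b) := by
    rcases hx0.eq_or_lt with rfl | h0
    · rw [zero_pow hm]; positivity
    · rw [← Real.rpow_natCast _ M, ← Real.rpow_mul h0.le, ← Real.rpow_natCast _ m]
      exact Real.rpow_le_rpow_of_exponent_ge h0 hx1 hMm
  have hfg : 0 < f + g := add_pos hf hg
  calc f ^ a * g ^ b * x ^ m
      ≤ (f + g) ^ a * (f + g) ^ b * (x ^ M) ^ (a + b) := by gcongr <;> linarith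
    _ = ((f + g) * x ^ M) ^ (a + b) := by
        rw [← Real.rpow_add hfg, Real.mul_rpow hfg.le (pow_nonneg hx0 M)]
    _ ≤ ε * ((f + g) * x ^ M) + K := hK _ (by positivity)
    _ = ε * (f * x ^ M + g * x ^ M) + K := by ring

lemma eventually_natCast_add_mul_le {r : ℝ} (hr : r < 1) (d : ℕ) :
    ∀ᶠ m : ℕ in Filter.atTop, ((m + d : ℕ) : ℝ) * r ≤ m := by
  have hlim : Filter.Tendsto (fun m : ℕ => (1 - r) * (m : ℝ)) Filter.atTop Filter.atTop :=
    tendsto_natCast_atTop_atTop.const_mul_atTop (sub_pos.mpr hr)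
  filter_upwards [hlim.eventually_ge_atTop (d * r)] with m hm
  push_cast
  linarith

/-! ### Cutoff functions and the blow-down argument -/

section Cutoff

variable {s C a b E ε α β R : ℝ} {χ f g u v : Pt N₁ N₂ → ℝ} {m n M : ℕ}

/-- `χ` is a `C²` cutoff function equal to one on the unit ball of `ℝ^{N₁} × ℝ^{N₂}` (for the sup
norm), and `C` bounds both `|∇_s χ|²` and `|Δ_s χ|`. -/
structure IsCutoff (s C : ℝ) (χ : Pt N₁ N₂ → ℝ) : Prop where
  contDiff : ContDiff ℝ 2 χ
  hasCompactSupport : HasCompactSupport χ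
  nonneg : ∀ z, 0 ≤ χ z
  le_one : ∀ z, χ z ≤ 1
  eq_one : ∀ z ∈ Metric.closedBall (0 : Pt N₁ N₂) 1, χ z = 1
  grushinInner_le : ∀ z, grushinInner s χ χ z ≤ C
  abs_grushinLap_le : ∀ z, |grushinLap s χ z| ≤ C

lemma exists_isCutoff (hs : 0 ≤ s) : ∃ (C : ℝ) (χ : Pt N₁ N₂ → ℝ), IsCutoff s C χ := by
  let χ : ContDiffBump (0 : Pt N₁ N₂) := ⟨1, 2, one_pos, one_lt_two⟩
  have hχ : ContDiff ℝ 2 χ := χ.contDiff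
  have hχ1 : ContDiff ℝ 1 χ := χ.contDiff
  have hinner : HasCompactSupport (grushinInner s χ χ) :=
    hasCompactSupport_grushinInner s χ.hasCompactSupport
  have hlap := hasCompactSupport_grushinLap s hχ χ.hasCompactSupport
  obtain ⟨C₁, hC₁⟩ := hinner.exists_bound_of_continuous (continuous_grushinInner hs hχ1 hχ1)
  obtain ⟨C₂, hC₂⟩ := hlap.exists_bound_of_continuous (continuous_grushinLap hs hχ)
  exact ⟨max C₁ C₂, χ, hχ, χ.hasCompactSupport, fun _ => χ.nonneg, fun _ => χ.le_one,
    fun _ => χ.one_of_mem_closedBall,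
    fun z => (le_abs_self _).trans ((hC₁ z).trans (le_max_left _ _)),
    fun z => (hC₂ z).trans (le_max_right _ _)⟩

namespace IsCutoff

lemma const_nonneg (hχ : IsCutoff s C χ) : 0 ≤ C :=
  (abs_nonneg _).trans (hχ.abs_grushinLap_le 0)

lemma hasCompactSupport_pow (hχ : IsCutoff s C χ) (hm : m ≠ 0) :
    HasCompactSupport fun z => χ z ^ m :=
  hχ.hasCompactSupport.comp_left (g := (· ^ m)) (zero_pow hm)

lemma hasCompactSupport_mul_pow (hχ : IsCutoff s C χ) (f : Pt N₁ N₂ → ℝ) (hm : m ≠ 0) :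
    HasCompactSupport fun z => f z * χ z ^ m :=
  (hχ.hasCompactSupport_pow hm).mul_left

lemma integrable_mul_pow (hχ : IsCutoff s C χ) (hf : Continuous f) (hm : m ≠ 0) :
    Integrable fun z => f z * χ z ^ m :=
  (hf.mul (hχ.contDiff.continuous.pow m)).integrable_of_hasCompactSupport
    (hχ.hasCompactSupport_mul_pow f hm)

lemma pow_succ_le (hχ : IsCutoff s C χ) (n : ℕ) (z : Pt N₁ N₂) : χ z ^ (n + 1) ≤ χ z ^ n :=
  pow_le_pow_of_le_one (hχ.nonneg z) (hχ.le_one z) n.le_succ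

lemma grushinInner_sq_le (hχ : IsCutoff s C χ) (f : Pt N₁ N₂ → ℝ) (z : Pt N₁ N₂) :
    grushinInner s f χ z ^ 2 ≤ C * grushinInner s f f z :=
  calc grushinInner s f χ z ^ 2 ≤ grushinInner s f f z * grushinInner s χ χ z :=
        grushinInner_sq_le_mul s f χ z
    _ ≤ grushinInner s f f z * C :=
        mul_le_mul_of_nonneg_left (hχ.grushinInner_le z) (grushinInner_self_nonneg s f z)
    _ = C * grushinInner s f f z := mul_comm _ _

lemma abs_grushinLap_pow_le (hχ : IsCutoff s C χ) (n : ℕ) (z : Pt N₁ N₂) :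
    |grushinLap s (fun z => χ z ^ (n + 2)) z| ≤ (n + 2) ^ 2 * C * χ z ^ n := by
  have hχn : 0 ≤ χ z ^ n := pow_nonneg (hχ.nonneg z) n
  have hχn1 : 0 ≤ χ z ^ (n + 1) := pow_nonneg (hχ.nonneg z) _
  have hΓ : 0 ≤ grushinInner s χ χ z := grushinInner_self_nonneg s χ z
  have hfirst : |(n + 2 : ℝ) * χ z ^ (n + 1) * grushinLap s χ z| ≤ (n + 2) * χ z ^ n * C := by
    rw [abs_mul, abs_of_nonneg (by positivity)]
    have hle := hχ.pow_succ_le n z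
    have hlap := hχ.abs_grushinLap_le z
    gcongr
  have hsecond : |(n + 2 : ℝ) * (n + 1) * χ z ^ n * grushinInner s χ χ z|
      ≤ (n + 2) * (n + 1) * χ z ^ n * C := by
    rw [abs_of_nonneg (by positivity)]
    have hle := hχ.grushinInner_le z
    gcongr
  rw [grushinLap_pow hχ.contDiff]
  calc _ ≤ _ := abs_add_le _ _
    _ ≤ (n + 2) * χ z ^ n * C + (n + 2) * (n + 1) * χ z ^ n * C := add_le_add hfirst hsecond
    _ = (n + 2) ^ 2 * C * χ z ^ n := by ring

lemma exists_integral_rpow_mul_rpow_le (hχ : IsCutoff s C χ) (ha : 0 ≤ a) (hb : 0 ≤ b)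
    (hab : a + b < 1) (hε : 0 < ε) (hm : m ≠ 0) (hM : M ≠ 0) (hMm : (M : ℝ) * (a + b) ≤ m) :
    ∃ K, ∀ f g : Pt N₁ N₂ → ℝ, Continuous f → Continuous g → (∀ z, 0 < f z) → (∀ z, 0 < g z) →
      ∫ z, f z ^ a * g z ^ b * χ z ^ m
        ≤ ε * ((∫ z, f z * χ z ^ M) + ∫ z, g z * χ z ^ M) + K := by
  obtain ⟨K, hK⟩ := exists_rpow_mul_rpow_mul_pow_le ha hb hab hε hm hMm
  refine ⟨∫ _ in tsupport χ, K, fun f g hf hg hf0 hg0 => ?_⟩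
  have hpointwise (z) : f z ^ a * g z ^ b * χ z ^ m
      ≤ ε * (f z * χ z ^ M + g z * χ z ^ M) + (tsupport χ).indicator (fun _ => K) z := by
    by_cases hz : z ∈ tsupport χ
    · rw [Set.indicator_of_mem hz]
      exact hK _ _ _ (hf0 z) (hg0 z) (hχ.nonneg z) (hχ.le_one z)
    · simp [image_eq_zero_of_notMem_tsupport hz, hm, hM, Set.indicator_of_notMem hz]
  have hmeas : MeasurableSet (tsupport χ) := (isClosed_tsupport χ).measurableSet
  have hfM := hχ.integrable_mul_pow hf hM
  have hgM := hχ.integrable_mul_pow hg hM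
  have hsum : Integrable fun z => ε * (f z * χ z ^ M + g z * χ z ^ M) :=
    (hfM.add hgM).const_mul ε
  have hind : Integrable ((tsupport χ).indicator fun _ : Pt N₁ N₂ => K) :=
    (integrable_indicator_iff hmeas).mpr
      (integrableOn_const hχ.hasCompactSupport.isCompact.measure_ne_top)
  have hfg : Continuous fun z => f z ^ a * g z ^ b :=
    (hf.rpow_const fun z => Or.inl (hf0 z).ne').mul (hg.rpow_const fun z => Or.inl (hg0 z).ne')
  calc ∫ z, f z ^ a * g z ^ b * χ z ^ m
      ≤ ∫ z, (ε * (f z * χ z ^ M + g z * χ z ^ M) + (tsupport χ).indicator (fun _ => K) z) :=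
        integral_mono (hχ.integrable_mul_pow hfg hm) (hsum.add hind) hpointwise
    _ = _ := by
        rw [integral_add hsum hind, integral_const_mul, integral_add hfM hgM,
          integral_indicator hmeas]

lemma mul_measureReal_mul_rpow_le_integral_rescale (hs : 0 ≤ s) (hχ : IsCutoff s C χ)
    (hf : Continuous f) (hf0 : ∀ z, 0 < f z) {c : ℝ}
    (hc : ∀ z ∈ Metric.closedBall (0 : Pt N₁ N₂) 1, c ≤ f z) (hM : M ≠ 0) (hR : 1 ≤ R) :
    c * volume.real (Metric.closedBall (0 : Pt N₁ N₂) 1) * R ^ (E - (N₁ + (1 + s) * N₂))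
      ≤ ∫ z, rescale s R E f z * χ z ^ M := by
  set B : Set (Pt N₁ N₂) := Metric.closedBall 0 1
  have hB : IsCompact B := isCompact_closedBall _ _
  have hR0 : 0 < R := zero_lt_one.trans_le hR
  set S := dilation s R ⁻¹' B
  have hSB : S ⊆ B := preimage_dilation_closedBall_subset hs hR
  have hS : MeasurableSet S := hB.measurableSet.preimage (dilation s R).continuous.measurable
  have hS_ne_top : volume S ≠ ⊤ := ((measure_mono hSB).trans_lt hB.measure_lt_top).ne
  have hSvol : volume.real S = R ^ (-((N₁ : ℝ) + (1 + s) * N₂)) * volume.real B := by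
    rw [measureReal_def, volume_preimage_dilation hR0, ENNReal.toReal_mul,
      ENNReal.toReal_ofReal (Real.rpow_pos_of_pos hR0 _).le, measureReal_def]
  have hf_int : Integrable fun z => rescale s R E f z * χ z ^ M :=
    hχ.integrable_mul_pow (continuous_const.mul (hf.comp (dilation s R).continuous)) hM
  calc c * volume.real B * R ^ (E - (N₁ + (1 + s) * N₂))
      = ∫ _ in S, R ^ E * c := by
        rw [setIntegral_const, hSvol, smul_eq_mul, sub_eq_add_neg, Real.rpow_add hR0]
        ring
    _ ≤ ∫ z in S, rescale s R E f z * χ z ^ M := by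
        refine setIntegral_mono_on (integrableOn_const hS_ne_top) hf_int.integrableOn hS
          fun z hz => ?_
        rw [hχ.eq_one z (hSB hz), one_pow, mul_one]
        exact mul_le_mul_of_nonneg_left (hc _ hz) (Real.rpow_pos_of_pos hR0 _).le
    _ ≤ ∫ z, rescale s R E f z * χ z ^ M :=
        setIntegral_le_integral hf_int (Filter.Eventually.of_forall fun z =>
          mul_nonneg (rescale_pos hR0 hf0 E z).le (pow_nonneg (hχ.nonneg z) M))

lemma exists_lt_integral_rescale_mul_pow (hs : 0 ≤ s) (hχ : IsCutoff s C χ) (hf : Continuous f)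
    (hf0 : ∀ z, 0 < f z) (hE : N₁ + (1 + s) * N₂ < E) (hM : M ≠ 0) (K : ℝ) :
    ∃ R, 1 ≤ R ∧ K < ∫ z, rescale s R E f z * χ z ^ M := by
  set B : Set (Pt N₁ N₂) := Metric.closedBall 0 1
  have hB : IsCompact B := isCompact_closedBall _ _
  have hBvol : 0 < volume.real B :=
    ENNReal.toReal_pos (Metric.measure_closedBall_pos volume _ one_pos).ne' hB.measure_ne_top
  obtain ⟨z₀, -, hz₀⟩ := hB.exists_isMinOn ⟨0, Metric.mem_closedBall_self zero_le_one⟩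
    hf.continuousOn
  have hlim : Filter.Tendsto (fun R : ℝ => f z₀ * volume.real B * R ^ (E - (N₁ + (1 + s) * N₂)))
      Filter.atTop Filter.atTop :=
    (tendsto_rpow_atTop (sub_pos.mpr hE)).const_mul_atTop (mul_pos (hf0 z₀) hBvol)
  obtain ⟨R, hRK, hR⟩ :=
    ((hlim.eventually_gt_atTop K).and (Filter.eventually_ge_atTop 1)).exists
  exact ⟨R, hR, hRK.trans_le
    (hχ.mul_measureReal_mul_rpow_le_integral_rescale hs hf hf0 (fun z hz => hz₀ hz) hM hR)⟩

lemma exists_lt_integral_rescale_rpow_mul (hs : 0 ≤ s) (hχ : IsCutoff s C χ) (hu : Continuous u)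
    (hv : Continuous v) (hu0 : ∀ z, 0 < u z) (hv0 : ∀ z, 0 < v z)
    (hdim : N₁ + (1 + s) * N₂ < α * a + β * b) (hM : M ≠ 0) (K : ℝ) :
    ∃ R, 1 ≤ R ∧ K < ∫ z, rescale s R α u z ^ a * rescale s R β v z ^ b * χ z ^ M := by
  have huv : Continuous fun z => u z ^ a * v z ^ b :=
    (hu.rpow_const fun z => Or.inl (hu0 z).ne').mul (hv.rpow_const fun z => Or.inl (hv0 z).ne')
  have huv0 (z) : 0 < u z ^ a * v z ^ b :=
    mul_pos (Real.rpow_pos_of_pos (hu0 z) a) (Real.rpow_pos_of_pos (hv0 z) b)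
  obtain ⟨R, hR, hK⟩ := hχ.exists_lt_integral_rescale_mul_pow hs huv huv0 hdim hM K
  have hR0 : 0 < R := zero_lt_one.trans_le hR
  refine ⟨R, hR, hK.trans_eq (integral_congr_ae (Filter.Eventually.of_forall fun z => ?_))⟩
  simp only [rescale_rpow hR0 hu0, rescale_rpow hR0 hv0]
  rw [rescale, Real.rpow_add hR0]
  ring

end IsCutoff

end Cutoff

/-! ### The case `p ≤ 1` -/

section SublinearCase

variable {s p θ α β C ε : ℝ} {χ ρ f u v ξ ζ σ φ : Pt N₁ N₂ → ℝ} {m n : ℕ} {z : Pt N₁ N₂}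

lemma grushinLap_mul_mul_self (hσ : ContDiff ℝ 2 σ) (hξ : ContDiff ℝ 2 ξ) :
    grushinLap s (fun z => σ z * (σ z * ξ z)) z
      = 2 * σ z * grushinLap s (fun z => σ z * ξ z) z - σ z ^ 2 * grushinLap s ξ z
        + 2 * ξ z * grushinInner s σ σ z := by
  rw [grushinLap_mul hσ (hσ.mul hξ), grushinLap_mul hσ hξ,
    grushinInner_mul_right s σ (hσ.differentiable two_ne_zero z) (hξ.differentiable two_ne_zero z)]
  ring

lemma IsLinearizedSupersol.mul_rpow_mul_sq_le (h : IsLinearizedSupersol s p θ u v ξ ζ)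
    (hp : 0 ≤ p) (hv0 : 0 < v z) (hσ : ContDiff ℝ 2 σ) :
    p * θ * (u z ^ (θ - 1) * (σ z * ξ z) ^ 2)
      ≤ v z ^ (1 - p) * grushinLap s (fun z => σ z * ξ z) z ^ 2
        + p * (grushinLap s (fun z => σ z * (σ z * ξ z)) z * ζ z
          - grushinLap s ζ z * (σ z * (σ z * ξ z))) := by
  have hξ0 := h.fst_pos z
  have hζ0 := h.snd_pos z
  have hΓ := grushinInner_self_nonneg s σ z
  have hinv : v z ^ (1 - p) * v z ^ (p - 1) = 1 := by rw [← Real.rpow_add hv0]; simp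
  have hζterm : p * (θ * u z ^ (θ - 1) * ξ z) * (σ z ^ 2 * ξ z)
      ≤ p * -grushinLap s ζ z * (σ z ^ 2 * ξ z) := by
    have := h.grushinLap_snd_le z
    gcongr
    linarith
  have hξterm : p * (p * v z ^ (p - 1) * ζ z) * (σ z ^ 2 * ζ z)
      ≤ p * -grushinLap s ξ z * (σ z ^ 2 * ζ z) := by
    have := h.grushinLap_fst_le z
    gcongr
    linarith
  have hΓterm : 0 ≤ p * (2 * ξ z * grushinInner s σ σ z * ζ z) := by positivity
  have hsquare : 0 ≤ v z ^ (1 - p) * (grushinLap s (fun z => σ z * ξ z) z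
      + p * v z ^ (p - 1) * ζ z * σ z) ^ 2 := by positivity
  rw [grushinLap_mul_mul_self hσ h.contDiff_fst]
  generalize grushinLap s (fun z => σ z * ξ z) z = Lφ at *
  linear_combination hζterm + hξterm + hΓterm + hsquare
    + (2 * p * Lφ * ζ z * σ z + p ^ 2 * v z ^ (p - 1) * ζ z ^ 2 * σ z ^ 2) * hinv

lemma integrable_mul_sq (hf : Continuous f) (hφ : Continuous φ) (hc : HasCompactSupport φ) :
    Integrable fun z => f z * φ z ^ 2 :=
  (hf.mul (hφ.pow 2)).integrable_of_hasCompactSupport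
    (hc.comp_left (g := (· ^ 2)) (zero_pow two_ne_zero)).mul_left

lemma IsLinearizedSupersol.mul_integral_rpow_mul_sq_le (h : IsLinearizedSupersol s p θ u v ξ ζ)
    (hs : 0 ≤ s) (hp : 0 ≤ p) (hu : Continuous u) (hv : Continuous v) (hu0 : ∀ z, 0 < u z)
    (hv0 : ∀ z, 0 < v z) (hφ : ContDiff ℝ 2 φ) (hc : HasCompactSupport φ) :
    p * θ * ∫ z, u z ^ (θ - 1) * φ z ^ 2 ≤ ∫ z, v z ^ (1 - p) * grushinLap s φ z ^ 2 := by
  obtain ⟨σ, hσ, rfl⟩ : ∃ σ, ContDiff ℝ 2 σ ∧ φ = fun z => σ z * ξ z :=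
    ⟨fun z => φ z / ξ z, hφ.div h.contDiff_fst fun z => (h.fst_pos z).ne',
      funext fun z => (div_mul_cancel₀ _ (h.fst_pos z).ne').symm⟩
  have hf : ContDiff ℝ 2 fun z => σ z * (σ z * ξ z) := hσ.mul hφ
  have hfc : HasCompactSupport fun z => σ z * (σ z * ξ z) := hc.mul_left
  have hnull_f := hasNullIntegral_grushinInner_add hs hf (h.contDiff_snd.of_le one_le_two)
    (hfc.isCompact.inter_right (isClosed_tsupport _))
  have hnull_ζ := hasNullIntegral_grushinInner_add hs h.contDiff_snd (hf.of_le one_le_two)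
    (hfc.isCompact.inter_left (isClosed_tsupport _))
  have hleft : Integrable fun z => u z ^ (θ - 1) * (σ z * ξ z) ^ 2 :=
    integrable_mul_sq (hu.rpow_const fun z => Or.inl (hu0 z).ne') hφ.continuous hc
  have hright : Integrable fun z => v z ^ (1 - p) * grushinLap s (fun z => σ z * ξ z) z ^ 2 :=
    integrable_mul_sq (hv.rpow_const fun z => Or.inl (hv0 z).ne') (continuous_grushinLap hs hφ)
      (hasCompactSupport_grushinLap s hφ hc)
  rw [← integral_const_mul]
  refine ((hnull_f.const_mul p).add (hnull_ζ.const_mul (-p))).integral_le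
    (hleft.const_mul _) hright fun z => ?_
  rw [grushinInner_comm s ζ]
  linarith [h.mul_rpow_mul_sq_le (z := z) hp (hv0 z) hσ]

lemma add_sq_le_one_add_mul (hε : 0 < ε) (a b : ℝ) :
    (a + b) ^ 2 ≤ (1 + ε) * a ^ 2 + (1 + 1 / ε) * b ^ 2 := by
  have hsquare : 0 ≤ (ε * a - b) ^ 2 / ε := by positivity
  have hexpand : (ε * a - b) ^ 2 / ε = ε * a ^ 2 - 2 * a * b + 1 / ε * b ^ 2 := by
    field_simp
    ring
  linarith

lemma IsCutoff.grushinLap_mul_pow_sq_le (hχ : IsCutoff s C χ) (hε : 0 < ε) (hu : ContDiff ℝ 2 u)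
    (n : ℕ) (z : Pt N₁ N₂) :
    grushinLap s (fun z => u z * χ z ^ (n + 2)) z ^ 2
      ≤ (1 + ε) * (grushinLap s u z ^ 2 * χ z ^ (2 * n + 4))
        + (1 + 1 / ε) * (8 * (n + 2) ^ 2 * C * (grushinInner s u u z * χ z ^ (2 * n + 2))
          + 2 * (n + 2) ^ 4 * C ^ 2 * (u z ^ 2 * χ z ^ (2 * n))) := by
  set Lχ := grushinLap s (fun z => χ z ^ (n + 2)) z
  set Γ := grushinInner s u χ z
  have hproduct : grushinLap s (fun z => u z * χ z ^ (n + 2)) z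
      = χ z ^ (n + 2) * grushinLap s u z + (u z * Lχ + 2 * (n + 2) * χ z ^ (n + 1) * Γ) := by
    rw [grushinLap_mul hu (hχ.contDiff.pow _),
      grushinInner_pow_right s u (hχ.contDiff.differentiable two_ne_zero z)]
    push_cast
    simp only [Lχ, Γ]
    generalize grushinLap s (fun z => χ z ^ (n + 2)) z = Lχ
    ring
  have hLχ : Lχ ^ 2 ≤ ((n + 2) ^ 2 * C * χ z ^ n) ^ 2 :=
    sq_le_sq.mpr ((hχ.abs_grushinLap_pow_le n z).trans (le_abs_self _))
  have hΓ : Γ ^ 2 ≤ C * grushinInner s u u z := hχ.grushinInner_sq_le u z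
  have herror : (u z * Lχ + 2 * (n + 2) * χ z ^ (n + 1) * Γ) ^ 2
      ≤ 8 * (n + 2) ^ 2 * C * (grushinInner s u u z * χ z ^ (2 * n + 2))
        + 2 * (n + 2) ^ 4 * C ^ 2 * (u z ^ 2 * χ z ^ (2 * n)) :=
    calc _ ≤ 2 * ((u z * Lχ) ^ 2 + (2 * (n + 2) * χ z ^ (n + 1) * Γ) ^ 2) := add_sq_le
      _ = 2 * (u z ^ 2 * Lχ ^ 2 + 4 * (n + 2) ^ 2 * (χ z ^ (n + 1)) ^ 2 * Γ ^ 2) := by ring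
      _ ≤ 2 * (u z ^ 2 * ((n + 2) ^ 2 * C * χ z ^ n) ^ 2
          + 4 * (n + 2) ^ 2 * (χ z ^ (n + 1)) ^ 2 * (C * grushinInner s u u z)) := by gcongr
      _ = _ := by ring
  rw [hproduct]
  calc _ ≤ (1 + ε) * (χ z ^ (n + 2) * grushinLap s u z) ^ 2
        + (1 + 1 / ε) * (u z * Lχ + 2 * (n + 2) * χ z ^ (n + 1) * Γ) ^ 2 :=
        add_sq_le_one_add_mul hε _ _
    _ = (1 + ε) * (grushinLap s u z ^ 2 * χ z ^ (2 * n + 4))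
        + (1 + 1 / ε) * (u z * Lχ + 2 * (n + 2) * χ z ^ (n + 1) * Γ) ^ 2 := by ring
    _ ≤ _ := by gcongr

lemma IsCutoff.grushinInner_pow_right (hχ : IsCutoff s C χ) (u : Pt N₁ N₂ → ℝ) (n : ℕ)
    (z : Pt N₁ N₂) :
    grushinInner s u (fun z => χ z ^ (n + 2)) z
      = (n + 2) * χ z ^ (n + 1) * grushinInner s u χ z := by
  rw [_root_.grushinInner_pow_right s u (hχ.contDiff.differentiable two_ne_zero z)]
  push_cast
  rfl

lemma IsCutoff.two_mul_grushinInner_pow_le (hχ : IsCutoff s C χ) (hε : 0 < ε)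
    (u : Pt N₁ N₂ → ℝ) (w : ℝ) (n : ℕ) (z : Pt N₁ N₂) :
    2 * w * grushinInner s u (fun z => χ z ^ (n + 2)) z
      ≤ ε * (w ^ 2 * χ z ^ (n + 2)) + (n + 2) ^ 2 * C / ε * (grushinInner s u u z * χ z ^ n) := by
  have hχn : 0 ≤ χ z ^ n := pow_nonneg (hχ.nonneg z) n
  have hsquare : 0 ≤ χ z ^ n * ((ε * w * χ z - (n + 2) * grushinInner s u χ z) ^ 2 / ε) := by
    positivity
  have hexpand : χ z ^ n * ((ε * w * χ z - (n + 2) * grushinInner s u χ z) ^ 2 / ε)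
      = ε * (w ^ 2 * χ z ^ (n + 2)) - 2 * w * ((n + 2) * χ z ^ (n + 1) * grushinInner s u χ z)
        + (n + 2) ^ 2 / ε * χ z ^ n * grushinInner s u χ z ^ 2 := by
    field_simp
    ring
  have hΓ : (n + 2) ^ 2 / ε * χ z ^ n * grushinInner s u χ z ^ 2
      ≤ (n + 2) ^ 2 / ε * χ z ^ n * (C * grushinInner s u u z) := by
    gcongr
    exact hχ.grushinInner_sq_le u z
  rw [hχ.grushinInner_pow_right]
  linear_combination hsquare + hexpand + hΓ

lemma IsCutoff.two_mul_grushinInner_pow_le_add_mul_sq (hχ : IsCutoff s C χ)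
    (u : Pt N₁ N₂ → ℝ) (w : ℝ) (n : ℕ) (z : Pt N₁ N₂) :
    2 * w * grushinInner s u (fun z => χ z ^ (n + 2)) z
      ≤ grushinInner s u u z * χ z ^ (n + 2) + (n + 2) ^ 2 * C * (w ^ 2 * χ z ^ n) := by
  have hχn : 0 ≤ χ z ^ n := pow_nonneg (hχ.nonneg z) n
  have hyoung := mul_le_mul_of_nonneg_left
    (mul_grushinInner_le s u χ z (χ z) ((n + 2) * w)) hχn
  have hΓ : χ z ^ n * (((n + 2) * w) ^ 2 * grushinInner s χ χ z)
      ≤ χ z ^ n * (((n + 2) * w) ^ 2 * C) := by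
    gcongr
    exact hχ.grushinInner_le z
  rw [hχ.grushinInner_pow_right]
  linear_combination hyoung + hΓ

namespace IsC2LaneEmdenSol

lemma continuous_fst_rpow (h : IsC2LaneEmdenSol s p θ u v) (a : ℝ) :
    Continuous fun z => u z ^ a :=
  h.contDiff_fst.continuous.rpow_const fun z => Or.inl (h.fst_pos z).ne'

lemma continuous_snd_rpow (h : IsC2LaneEmdenSol s p θ u v) (a : ℝ) :
    Continuous fun z => v z ^ a :=
  h.swap.continuous_fst_rpow a

lemma integrable_snd_rpow_mul_grushinInner (h : IsC2LaneEmdenSol s p θ u v) (hs : 0 ≤ s)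
    (hχ : IsCutoff s C χ) (hm : m ≠ 0) :
    Integrable fun z => v z ^ (1 - p) * grushinInner s u u z * χ z ^ m :=
  hχ.integrable_mul_pow ((h.continuous_snd_rpow _).mul
    (continuous_grushinInner hs (h.contDiff_fst.of_le one_le_two)
      (h.contDiff_fst.of_le one_le_two))) hm

lemma integrable_snd_rpow_mul_fst_sq (h : IsC2LaneEmdenSol s p θ u v) (hχ : IsCutoff s C χ)
    (hm : m ≠ 0) : Integrable fun z => v z ^ (1 - p) * u z ^ 2 * χ z ^ m :=
  hχ.integrable_mul_pow ((h.continuous_snd_rpow _).mul (h.contDiff_fst.continuous.pow 2)) hm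

lemma integrable_fst_mul_snd (h : IsC2LaneEmdenSol s p θ u v) (hχ : IsCutoff s C χ)
    (hm : m ≠ 0) : Integrable fun z => u z * v z * χ z ^ m :=
  hχ.integrable_mul_pow (h.contDiff_fst.continuous.mul h.contDiff_snd.continuous) hm

lemma snd_rpow_mul_sq_eq (h : IsC2LaneEmdenSol s p θ u v) (z : Pt N₁ N₂) :
    v z ^ (1 - p) * (v z ^ p) ^ 2 = v z ^ (p + 1) := by
  rw [← Real.rpow_mul_natCast (h.snd_pos z).le, ← Real.rpow_add (h.snd_pos z)]
  congr 1
  push_cast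
  ring

lemma snd_rpow_mul_grushinLap_sq_le (h : IsC2LaneEmdenSol s p θ u v) (hχ : IsCutoff s C χ)
    (hε : 0 < ε) (n : ℕ) (z : Pt N₁ N₂) :
    v z ^ (1 - p) * grushinLap s (fun z => u z * χ z ^ (n + 2)) z ^ 2
      ≤ (1 + ε) * (v z ^ (p + 1) * χ z ^ (2 * n + 4))
        + (1 + 1 / ε) *
          (8 * (n + 2) ^ 2 * C * (v z ^ (1 - p) * grushinInner s u u z * χ z ^ (2 * n + 2))
          + 2 * (n + 2) ^ 4 * C ^ 2 * (v z ^ (1 - p) * u z ^ 2 * χ z ^ (2 * n))) := by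
  refine (mul_le_mul_of_nonneg_left (hχ.grushinLap_mul_pow_sq_le hε h.contDiff_fst n z)
    (Real.rpow_nonneg (h.snd_pos z).le (1 - p))).trans_eq ?_
  rw [h.grushinLap_fst, ← h.snd_rpow_mul_sq_eq]
  ring

lemma mul_integral_fst_rpow_le (h : IsC2LaneEmdenSol s p θ u v)
    (hstab : IsLinearizedSupersol s p θ u v ξ ζ) (hs : 0 ≤ s) (hp : 0 ≤ p) (hχ : IsCutoff s C χ)
    (hn : n ≠ 0) (hε : 0 < ε) :
    p * θ * ∫ z, u z ^ (θ + 1) * χ z ^ (2 * n + 4)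
      ≤ (1 + ε) * (∫ z, v z ^ (p + 1) * χ z ^ (2 * n + 4))
        + (1 + 1 / ε) *
          (8 * (n + 2) ^ 2 * C * (∫ z, v z ^ (1 - p) * grushinInner s u u z * χ z ^ (2 * n + 2))
          + 2 * (n + 2) ^ 4 * C ^ 2 * ∫ z, v z ^ (1 - p) * u z ^ 2 * χ z ^ (2 * n)) := by
  have hφ : ContDiff ℝ 2 fun z => u z * χ z ^ (n + 2) := h.contDiff_fst.mul (hχ.contDiff.pow _)
  have hφc := hχ.hasCompactSupport_mul_pow u (Nat.succ_ne_zero (n + 1))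
  have hleft (z) : u z ^ (θ - 1) * (u z * χ z ^ (n + 2)) ^ 2
      = u z ^ (θ + 1) * χ z ^ (2 * n + 4) := by
    rw [show θ + 1 = θ - 1 + (2 : ℕ) by push_cast; ring, Real.rpow_add_natCast (h.fst_pos z).ne']
    ring
  have hV : Integrable fun z => v z ^ (p + 1) * χ z ^ (2 * n + 4) :=
    hχ.integrable_mul_pow (h.continuous_snd_rpow _) (by lia)
  have hG : Integrable fun z => v z ^ (1 - p) * grushinInner s u u z * χ z ^ (2 * n + 2) :=
    h.integrable_snd_rpow_mul_grushinInner hs hχ (by lia)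
  have hH : Integrable fun z => v z ^ (1 - p) * u z ^ 2 * χ z ^ (2 * n) :=
    h.integrable_snd_rpow_mul_fst_sq hχ (by lia)
  have herror : Integrable fun z => 8 * (n + 2) ^ 2 * C *
      (v z ^ (1 - p) * grushinInner s u u z * χ z ^ (2 * n + 2))
      + 2 * (n + 2) ^ 4 * C ^ 2 * (v z ^ (1 - p) * u z ^ 2 * χ z ^ (2 * n)) :=
    (hG.const_mul _).add (hH.const_mul _)
  have hright := integral_mono_of_nonneg (Filter.Eventually.of_forall fun z =>
    mul_nonneg (Real.rpow_nonneg (h.snd_pos z).le (1 - p)) (sq_nonneg _))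
    ((hV.const_mul (1 + ε)).add (herror.const_mul (1 + 1 / ε)))
    (Filter.Eventually.of_forall (h.snd_rpow_mul_grushinLap_sq_le hχ hε n))
  simp only [Pi.add_apply] at hright
  rw [integral_add (hV.const_mul _) (herror.const_mul _), integral_const_mul, integral_const_mul,
    integral_add (hG.const_mul _) (hH.const_mul _), integral_const_mul, integral_const_mul]
    at hright
  have hstable := hstab.mul_integral_rpow_mul_sq_le hs hp h.contDiff_fst.continuous
    h.contDiff_snd.continuous h.fst_pos h.snd_pos hφ hφc
  simp only [hleft] at hstable
  exact hstable.trans hright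

lemma snd_rpow_mul_eq (h : IsC2LaneEmdenSol s p θ u v) (hρ : ContDiff ℝ 2 ρ) (z : Pt N₁ N₂) :
    v z ^ (p + 1) * ρ z
      = u z ^ (θ + 1) * ρ z + 2 * v z * grushinInner s u ρ z + grushinLap s ρ z * (u z * v z)
        + ((grushinInner s v (fun z => u z * ρ z) z + grushinLap s v z * (u z * ρ z))
          + -1 * (grushinInner s u (fun z => v z * ρ z) z + grushinLap s u z * (v z * ρ z))
          + -1 * (grushinInner s ρ (fun z => u z * v z) z
            + grushinLap s ρ z * (u z * v z))) := by
  have hu := h.contDiff_fst.differentiable two_ne_zero z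
  have hv := h.contDiff_snd.differentiable two_ne_zero z
  have hρ' := hρ.differentiable two_ne_zero z
  rw [grushinInner_mul_right s v hu hρ', grushinInner_mul_right s u hv hρ',
    grushinInner_mul_right s ρ hu hv, grushinInner_comm s v u, grushinInner_comm s ρ,
    grushinInner_comm s ρ, h.grushinLap_fst, h.grushinLap_snd,
    Real.rpow_add_one (h.fst_pos z).ne', Real.rpow_add_one (h.snd_pos z).ne']
  ring

lemma two_mul_snd_mul_grushinInner_le (h : IsC2LaneEmdenSol s p θ u v) (hχ : IsCutoff s C χ)
    (hε : 0 < ε) (m : ℕ) (z : Pt N₁ N₂) :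
    2 * v z * grushinInner s u (fun z => χ z ^ (m + 2)) z
      ≤ ε * (v z ^ (p + 1) * χ z ^ (m + 2))
        + (m + 2) ^ 2 * C / ε * (v z ^ (1 - p) * grushinInner s u u z * χ z ^ m) := by
  have hv : v z ^ (1 - p) * v z ^ p = v z := by rw [← Real.rpow_add (h.snd_pos z)]; simp
  have hyoung := mul_le_mul_of_nonneg_left (hχ.two_mul_grushinInner_pow_le hε u (v z ^ p) m z)
    (Real.rpow_nonneg (h.snd_pos z).le (1 - p))
  rw [← h.snd_rpow_mul_sq_eq]
  linear_combination hyoung - 2 * grushinInner s u (fun z => χ z ^ (m + 2)) z * hv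

lemma integral_snd_rpow_le (h : IsC2LaneEmdenSol s p θ u v) (hs : 0 ≤ s) (hχ : IsCutoff s C χ)
    (hm : m ≠ 0) (hε : 0 < ε) :
    ∫ z, v z ^ (p + 1) * χ z ^ (m + 2)
      ≤ (∫ z, u z ^ (θ + 1) * χ z ^ (m + 2)) + ε * (∫ z, v z ^ (p + 1) * χ z ^ (m + 2))
        + ((m + 2) ^ 2 * C / ε * (∫ z, v z ^ (1 - p) * grushinInner s u u z * χ z ^ m)
          + (m + 2) ^ 2 * C * ∫ z, u z * v z * χ z ^ m) := by
  have hρ : ContDiff ℝ 2 fun z => χ z ^ (m + 2) := hχ.contDiff.pow _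
  have hρ1 : ContDiff ℝ 1 fun z => χ z ^ (m + 2) := hρ.of_le one_le_two
  have hu := h.contDiff_fst
  have hv := h.contDiff_snd
  have hu1 := hu.of_le one_le_two
  have hv1 := hv.of_le one_le_two
  have hU : Integrable fun z => u z ^ (θ + 1) * χ z ^ (m + 2) :=
    hχ.integrable_mul_pow (h.continuous_fst_rpow _) (by lia)
  have hV : Integrable fun z => v z ^ (p + 1) * χ z ^ (m + 2) :=
    hχ.integrable_mul_pow (h.continuous_snd_rpow _) (by lia)
  have hG := h.integrable_snd_rpow_mul_grushinInner hs hχ hm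
  have hL := h.integrable_fst_mul_snd hχ hm
  have hnull_v := hasNullIntegral_grushinInner_add hs hv (hu1.mul hρ1)
    ((hχ.hasCompactSupport_mul_pow u (m + 1).succ_ne_zero).isCompact.inter_left
      (isClosed_tsupport _))
  have hnull_u := hasNullIntegral_grushinInner_add hs hu (hv1.mul hρ1)
    ((hχ.hasCompactSupport_mul_pow v (m + 1).succ_ne_zero).isCompact.inter_left
      (isClosed_tsupport _))
  have hnull_ρ := hasNullIntegral_grushinInner_add hs hρ (hu1.mul hv1)
    ((hχ.hasCompactSupport_pow (m + 1).succ_ne_zero).isCompact.inter_right (isClosed_tsupport _))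
  have hle := ((hnull_v.add (hnull_u.const_mul (-1))).add (hnull_ρ.const_mul (-1))).integral_le hV
    ((hU.add (hV.const_mul ε)).add ((hG.const_mul ((m + 2) ^ 2 * C / ε)).add
      (hL.const_mul ((m + 2) ^ 2 * C)))) fun z => ?_
  · rwa [integral_add' (hU.add (hV.const_mul ε)) ((hG.const_mul _).add (hL.const_mul _)),
      integral_add' hU (hV.const_mul ε), integral_add' (hG.const_mul _) (hL.const_mul _),
      integral_const_mul, integral_const_mul, integral_const_mul] at hle
  · have huv : 0 ≤ u z * v z := (mul_pos (h.fst_pos z) (h.snd_pos z)).le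
    have hLρ := mul_le_mul_of_nonneg_right ((le_abs_self _).trans (hχ.abs_grushinLap_pow_le m z))
      huv
    have hyoung := h.two_mul_snd_mul_grushinInner_le hχ hε m z
    simp only [Pi.add_apply]
    linear_combination h.snd_rpow_mul_eq hρ z + hLρ + hyoung

lemma contDiff_snd_rpow (h : IsC2LaneEmdenSol s p θ u v) (a : ℝ) :
    ContDiff ℝ 2 fun z => v z ^ a :=
  h.contDiff_snd.rpow_const_of_ne fun z => (h.snd_pos z).ne'

lemma grushinLap_snd_rpow_nonpos (h : IsC2LaneEmdenSol s p θ u v) {a : ℝ} (ha0 : 0 ≤ a)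
    (ha1 : a ≤ 1) (z : Pt N₁ N₂) : grushinLap s (fun z => v z ^ a) z ≤ 0 := by
  have hu0 := h.fst_pos z
  have hv0 := h.snd_pos z
  rw [grushinLap_rpow h.contDiff_snd (fun z => (h.snd_pos z).ne'), h.grushinLap_snd]
  have hlap : 0 ≤ a * v z ^ (a - 1) * u z ^ θ := by positivity
  have hΓ : 0 ≤ a * (1 - a) * v z ^ (a - 2) * grushinInner s v v z :=
    mul_nonneg (mul_nonneg (mul_nonneg ha0 (by linarith)) (by positivity))
      (grushinInner_self_nonneg s v z)
  linarith

lemma snd_rpow_mul_grushinInner_mul_eq (h : IsC2LaneEmdenSol s p θ u v) (hρ : ContDiff ℝ 2 ρ)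
    (z : Pt N₁ N₂) :
    2 * (v z ^ (1 - p) * grushinInner s u u z * ρ z)
      = 2 * (u z * v z * ρ z) - 4 * u z * v z ^ (1 - p) * grushinInner s u ρ z
        + grushinLap s (fun z => v z ^ (1 - p)) z * (u z * u z * ρ z)
        - grushinLap s ρ z * (v z ^ (1 - p) * (u z * u z))
        + (2 * (grushinInner s u (fun z => u z * v z ^ (1 - p) * ρ z) z
            + grushinLap s u z * (u z * v z ^ (1 - p) * ρ z))
          + -1 * (grushinInner s (fun z => v z ^ (1 - p)) (fun z => u z * u z * ρ z) z
            + grushinLap s (fun z => v z ^ (1 - p)) z * (u z * u z * ρ z))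
          + (grushinInner s ρ (fun z => v z ^ (1 - p) * (u z * u z)) z
            + grushinLap s ρ z * (v z ^ (1 - p) * (u z * u z)))) := by
  have hu := h.contDiff_fst.differentiable two_ne_zero z
  have hA := (h.contDiff_snd_rpow (1 - p)).differentiable two_ne_zero z
  have hρ' := hρ.differentiable two_ne_zero z
  have hv : v z ^ (1 - p) * v z ^ p = v z := by rw [← Real.rpow_add (h.snd_pos z)]; simp
  have huA : DifferentiableAt ℝ (fun z => u z * v z ^ (1 - p)) z := hu.mul hA
  have huu : DifferentiableAt ℝ (fun z => u z * u z) z := hu.mul hu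
  rw [grushinInner_mul_right s u huA hρ', grushinInner_mul_right s u hu hA,
    grushinInner_mul_right s _ huu hρ', grushinInner_mul_right s _ hu hu,
    grushinInner_mul_right s ρ hA huu, grushinInner_mul_right s ρ hu hu,
    grushinInner_comm s ρ (fun z => v z ^ (1 - p)), grushinInner_comm s ρ u,
    grushinInner_comm s (fun z => v z ^ (1 - p)) u, h.grushinLap_fst]
  linear_combination 2 * u z * ρ z * hv

lemma snd_rpow_mul_grushinInner_mul_le (h : IsC2LaneEmdenSol s p θ u v) (hp : 0 ≤ p)
    (hp1 : p ≤ 1) (hχ : IsCutoff s C χ) (m : ℕ) (z : Pt N₁ N₂) :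
    v z ^ (1 - p) * grushinInner s u u z * χ z ^ (m + 2)
      ≤ 2 * (u z * v z * χ z ^ (m + 2))
        + 5 * (m + 2) ^ 2 * C * (v z ^ (1 - p) * u z ^ 2 * χ z ^ m)
        + (2 * (grushinInner s u (fun z => u z * v z ^ (1 - p) * χ z ^ (m + 2)) z
            + grushinLap s u z * (u z * v z ^ (1 - p) * χ z ^ (m + 2)))
          + -1 * (grushinInner s (fun z => v z ^ (1 - p)) (fun z => u z * u z * χ z ^ (m + 2)) z
            + grushinLap s (fun z => v z ^ (1 - p)) z * (u z * u z * χ z ^ (m + 2)))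
          + (grushinInner s (fun z => χ z ^ (m + 2)) (fun z => v z ^ (1 - p) * (u z * u z)) z
            + grushinLap s (fun z => χ z ^ (m + 2)) z * (v z ^ (1 - p) * (u z * u z)))) := by
  have hu0 := h.fst_pos z
  have hv0 := h.snd_pos z
  have hρ0 := pow_nonneg (hχ.nonneg z) (m + 2)
  have hLA := mul_nonpos_of_nonpos_of_nonneg
    (h.grushinLap_snd_rpow_nonpos (sub_nonneg.2 hp1) (sub_le_self 1 hp) z)
    (show 0 ≤ u z * u z * χ z ^ (m + 2) by positivity)
  have hLρ := mul_le_mul_of_nonneg_right ((neg_le_abs _).trans (hχ.abs_grushinLap_pow_le m z))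
    (show 0 ≤ v z ^ (1 - p) * (u z * u z) by positivity)
  have hyoung := mul_le_mul_of_nonneg_left
    (hχ.two_mul_grushinInner_pow_le_add_mul_sq u (-2 * u z) m z)
    (Real.rpow_nonneg hv0.le (1 - p))
  linear_combination h.snd_rpow_mul_grushinInner_mul_eq (hχ.contDiff.pow (m + 2)) z
    + hLA + hLρ + hyoung

lemma integral_snd_rpow_mul_grushinInner_le (h : IsC2LaneEmdenSol s p θ u v) (hs : 0 ≤ s)
    (hp : 0 ≤ p) (hp1 : p ≤ 1) (hχ : IsCutoff s C χ) (hm : m ≠ 0) :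
    ∫ z, v z ^ (1 - p) * grushinInner s u u z * χ z ^ (m + 2)
      ≤ 2 * (∫ z, u z * v z * χ z ^ (m + 2))
        + 5 * (m + 2) ^ 2 * C * ∫ z, v z ^ (1 - p) * u z ^ 2 * χ z ^ m := by
  have hρ : ContDiff ℝ 2 fun z => χ z ^ (m + 2) := hχ.contDiff.pow _
  have hρ1 : ContDiff ℝ 1 fun z => χ z ^ (m + 2) := hρ.of_le one_le_two
  have hA := h.contDiff_snd_rpow (1 - p)
  have hu1 := h.contDiff_fst.of_le one_le_two
  have hA1 := hA.of_le one_le_two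
  have hG := h.integrable_snd_rpow_mul_grushinInner hs hχ (m + 1).succ_ne_zero
  have hL := h.integrable_fst_mul_snd hχ (m + 1).succ_ne_zero
  have hH := h.integrable_snd_rpow_mul_fst_sq hχ hm
  have hnull_u := hasNullIntegral_grushinInner_add hs h.contDiff_fst ((hu1.mul hA1).mul hρ1)
    ((hχ.hasCompactSupport_mul_pow _ (m + 1).succ_ne_zero).isCompact.inter_left
      (isClosed_tsupport _))
  have hnull_A := hasNullIntegral_grushinInner_add hs hA ((hu1.mul hu1).mul hρ1)
    ((hχ.hasCompactSupport_mul_pow _ (m + 1).succ_ne_zero).isCompact.inter_left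
      (isClosed_tsupport _))
  have hnull_ρ := hasNullIntegral_grushinInner_add hs hρ (hA1.mul (hu1.mul hu1))
    ((hχ.hasCompactSupport_pow (m + 1).succ_ne_zero).isCompact.inter_right (isClosed_tsupport _))
  have hle := (((hnull_u.const_mul 2).add (hnull_A.const_mul (-1))).add hnull_ρ).integral_le hG
    ((hL.const_mul 2).add (hH.const_mul (5 * (m + 2) ^ 2 * C)))
    fun z => h.snd_rpow_mul_grushinInner_mul_le hp hp1 hχ m z
  rwa [integral_add' (hL.const_mul 2) (hH.const_mul _), integral_const_mul, integral_const_mul]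
    at hle

end IsC2LaneEmdenSol

lemma add_le_mul_of_coupled {q U V A B T : ℝ} (hq : 1 < q) (hε : ε = (q - 1) / (2 * (q + 1)))
    (hA : 0 ≤ A) (hB : 0 ≤ B) (hT : 0 ≤ T) (hV : 0 ≤ V) (hUV : q * U ≤ (1 + ε) * V + A * T)
    (hVU : (1 - ε) * V ≤ U + B * T) : U + V ≤ (6 / (q - 1) * (2 * B + A) + 2 * B) * T := by
  have hq1 : 0 < q - 1 := by linarith
  have hε0 : 0 < ε := by rw [hε]; positivity
  have hε1 : ε ≤ 1 / 2 := by rw [hε, div_le_div_iff₀ (by positivity) two_pos]; linarith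
  have hgap : (1 - ε) * q - (1 + ε) = (q - 1) / 2 := by rw [hε]; field_simp; ring
  have hU : (q - 1) / 2 * U ≤ (2 * B + A) * T := by
    have hAT : 0 ≤ ε * (A * T) := by positivity
    have hε2 : 0 ≤ 1 - ε := by linarith
    have hBT : 0 ≤ (1 - ε) * (B * T) := mul_nonneg hε2 (by positivity)
    linear_combination mul_le_mul_of_nonneg_left hUV hε2 + (1 + ε) * hVU + hAT + hBT - U * hgap
  have hU' : 3 * U ≤ 6 / (q - 1) * (2 * B + A) * T := by
    have hscale : 3 * U = 6 / (q - 1) * ((q - 1) / 2 * U) := by field_simp; ring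
    rw [hscale, mul_assoc]
    gcongr
  have hV' : V ≤ 2 * U + 2 * B * T := by
    linear_combination 2 * mul_le_mul_of_nonneg_right hε1 hV + 2 * hVU
  linarith

lemma add_le_mul_of_coupled_of_le {q U V G L H a₁ a₂ b₁ b₂ c e : ℝ} (hq : 1 < q)
    (hε : ε = (q - 1) / (2 * (q + 1))) (ha₁ : 0 ≤ a₁) (ha₂ : 0 ≤ a₂) (hb₁ : 0 ≤ b₁) (hb₂ : 0 ≤ b₂)
    (hc : 0 ≤ c) (he : 0 ≤ e) (hV : 0 ≤ V) (hL : 0 ≤ L) (hH : 0 ≤ H)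
    (hUV : q * U ≤ (1 + ε) * V + e * (a₁ * G + a₂ * H)) (hVU : V ≤ U + ε * V + (b₁ * G + b₂ * L))
    (hG : G ≤ 2 * L + c * H) :
    U + V ≤ (6 / (q - 1) * (2 * (b₁ * (2 + c) + b₂) + e * (a₁ * (2 + c) + a₂))
      + 2 * (b₁ * (2 + c) + b₂)) * (L + H) := by
  have hG' : G ≤ (2 + c) * (L + H) := by
    have hcross : 0 ≤ 2 * H + c * L := by positivity
    linear_combination hG + hcross
  have hA : a₁ * G + a₂ * H ≤ a₁ * ((2 + c) * (L + H)) + a₂ * (L + H) := by gcongr; linarith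
  have hB : b₁ * G + b₂ * L ≤ b₁ * ((2 + c) * (L + H)) + b₂ * (L + H) := by gcongr; linarith
  refine add_le_mul_of_coupled hq hε (by positivity) (by positivity) (by positivity) hV ?_ ?_
  · linear_combination hUV + e * hA
  · linear_combination hVU + hB

lemma exists_energy_le (hs : 0 ≤ s) (hp : 0 ≤ p) (hp1 : p ≤ 1) (hpθ : 1 < p * θ)
    (hχ : IsCutoff s C χ) (hn : n ≠ 0) :
    ∃ K, 0 ≤ K ∧ ∀ u v ξ ζ : Pt N₁ N₂ → ℝ, IsC2LaneEmdenSol s p θ u v →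
      IsLinearizedSupersol s p θ u v ξ ζ →
        (∫ z, u z ^ (θ + 1) * χ z ^ (2 * n + 4)) + ∫ z, v z ^ (p + 1) * χ z ^ (2 * n + 4)
          ≤ K * ((∫ z, u z * v z * χ z ^ (2 * n + 2))
            + ∫ z, v z ^ (1 - p) * u z ^ 2 * χ z ^ (2 * n)) := by
  obtain ⟨ε, hε⟩ : ∃ ε, ε = (p * θ - 1) / (2 * (p * θ + 1)) := ⟨_, rfl⟩
  have hq1 : 0 < p * θ - 1 := by linarith
  have hε0 : 0 < ε := by rw [hε]; positivity
  have hC := hχ.const_nonneg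
  refine ⟨_, ?_, fun u v ξ ζ h hstab => add_le_mul_of_coupled_of_le hpθ hε ?_ ?_ ?_ ?_ ?_ ?_
    (integral_nonneg fun z => ?_) (integral_nonneg fun z => ?_) (integral_nonneg fun z => ?_)
    (h.mul_integral_fst_rpow_le hstab hs hp hχ hn hε0)
    (h.integral_snd_rpow_le hs hχ (2 * n + 1).succ_ne_zero hε0)
    (h.integral_snd_rpow_mul_grushinInner_le hs hp hp1 hχ (mul_ne_zero two_ne_zero hn))⟩
  any_goals positivity
  all_goals
    have hu0 := h.fst_pos z
    have hv0 := h.snd_pos z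
    have hχ0 := hχ.nonneg z
    positivity

lemma le_two_mul_of_le_mul_add {E K K₁ K₂ L H : ℝ} (hK : 0 ≤ K) (hE : 0 ≤ E)
    (hle : E ≤ K * (L + H)) (hL : L ≤ 1 / (4 * (K + 1)) * E + K₁)
    (hH : H ≤ 1 / (4 * (K + 1)) * E + K₂) : E ≤ 2 * K * (K₁ + K₂) := by
  have hsmall : K * (1 / (4 * (K + 1)) * E) ≤ 1 / 4 * E := by
    have hfrac : K / (K + 1) ≤ 1 := div_le_one_of_le₀ (by linarith) (by positivity)
    calc K * (1 / (4 * (K + 1)) * E) = 1 / 4 * (K / (K + 1)) * E := by field_simp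
      _ ≤ 1 / 4 * 1 * E := by gcongr
      _ = 1 / 4 * E := by ring
  have hsum := mul_le_mul_of_nonneg_left (add_le_add hL hH) hK
  linarith

lemma exists_two_mul_add_four_mul_le {r₁ r₂ : ℝ} (hr₁ : r₁ < 1) (hr₂ : r₂ < 1) :
    ∃ n : ℕ, n ≠ 0 ∧ ((2 * n + 4 : ℕ) : ℝ) * r₁ ≤ (2 * n : ℕ) ∧
      ((2 * n + 4 : ℕ) : ℝ) * r₂ ≤ (2 * n : ℕ) := by
  obtain ⟨n, hn⟩ := Filter.eventually_atTop.1
    ((eventually_natCast_add_mul_le hr₁ 4).and (eventually_natCast_add_mul_le hr₂ 4))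
  exact ⟨n + 1, n.succ_ne_zero, hn _ (by lia)⟩

lemma exists_integral_fst_rpow_le (hs : 0 ≤ s) (hp : 0 ≤ p) (hp1 : p ≤ 1) (hθ : 0 ≤ θ)
    (hpθ : 1 < p * θ) (hχ : IsCutoff s C χ) :
    ∃ (M : ℕ) (K : ℝ), M ≠ 0 ∧ ∀ u v ξ ζ : Pt N₁ N₂ → ℝ, IsC2LaneEmdenSol s p θ u v →
      IsLinearizedSupersol s p θ u v ξ ζ → ∫ z, u z ^ (θ + 1) * χ z ^ M ≤ K := by
  have hr₁ : 1 / (θ + 1) + 1 / (p + 1) < 1 := by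
    rw [div_add_div _ _ (by positivity) (by positivity), div_lt_one (by positivity)]
    linarith
  have hr₂ : 2 / (θ + 1) + (1 - p) / (p + 1) < 1 := by
    rw [div_add_div _ _ (by positivity) (by positivity), div_lt_one (by positivity)]
    linarith
  obtain ⟨n, hn, hn₁, hn₂⟩ := exists_two_mul_add_four_mul_le hr₁ hr₂
  obtain ⟨K, hK, henergy⟩ := exists_energy_le hs hp hp1 hpθ hχ hn
  have hδ : 0 < 1 / (4 * (K + 1)) := by positivity
  obtain ⟨K₁, hK₁⟩ := hχ.exists_integral_rpow_mul_rpow_le (by positivity) (by positivity) hr₁ hδ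
    (2 * n + 1).succ_ne_zero (2 * n + 3).succ_ne_zero (hn₁.trans (by push_cast; linarith))
  obtain ⟨K₂, hK₂⟩ := hχ.exists_integral_rpow_mul_rpow_le (by positivity)
    (div_nonneg (sub_nonneg.2 hp1) (by positivity)) hr₂ hδ (mul_ne_zero two_ne_zero hn)
    (2 * n + 3).succ_ne_zero hn₂
  refine ⟨2 * n + 4, 2 * K * (K₁ + K₂), (2 * n + 3).succ_ne_zero, fun u v ξ ζ h hstab => ?_⟩
  have hle := henergy u v ξ ζ h hstab
  have hL := hK₁ _ _ (h.continuous_fst_rpow (θ + 1)) (h.continuous_snd_rpow (p + 1))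
    (fun z => Real.rpow_pos_of_pos (h.fst_pos z) _) fun z => Real.rpow_pos_of_pos (h.snd_pos z) _
  have hH := hK₂ _ _ (h.continuous_fst_rpow (θ + 1)) (h.continuous_snd_rpow (p + 1))
    (fun z => Real.rpow_pos_of_pos (h.fst_pos z) _) fun z => Real.rpow_pos_of_pos (h.snd_pos z) _
  have hu (z) (a : ℝ) : (u z ^ (θ + 1)) ^ (a / (θ + 1)) = u z ^ a :=
    rpow_rpow_div (h.fst_pos z).le (by positivity) a
  have hv (z) (a : ℝ) : (v z ^ (p + 1)) ^ (a / (p + 1)) = v z ^ a :=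
    rpow_rpow_div (h.snd_pos z).le (by positivity) a
  simp only [hu, hv, Real.rpow_one] at hL
  simp only [hu, hv, Real.rpow_two, mul_comm (u _ ^ 2)] at hH
  have hU : 0 ≤ ∫ z, u z ^ (θ + 1) * χ z ^ (2 * n + 4) := integral_nonneg fun z =>
    mul_nonneg (Real.rpow_nonneg (h.fst_pos z).le _) (pow_nonneg (hχ.nonneg z) _)
  have hV : 0 ≤ ∫ z, v z ^ (p + 1) * χ z ^ (2 * n + 4) := integral_nonneg fun z =>
    mul_nonneg (Real.rpow_nonneg (h.snd_pos z).le _) (pow_nonneg (hχ.nonneg z) _)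
  exact (le_add_of_nonneg_right hV).trans
    (le_two_mul_of_le_mul_add hK (add_nonneg hU hV) hle hL hH)

lemma not_isLinearizedSupersol_of_le_one (hs : 0 ≤ s) (hp : 0 ≤ p) (hp1 : p ≤ 1) (hθ : 0 ≤ θ)
    (hpθ : 1 < p * θ) (hβ : β * p = α + 2) (hα : α * θ = β + 2)
    (hdim : N₁ + (1 + s) * N₂ < 2 + α + β) (h : IsC2LaneEmdenSol s p θ u v) :
    ¬ IsLinearizedSupersol s p θ u v ξ ζ := by
  intro hstab
  obtain ⟨C, χ, hχ⟩ := exists_isCutoff (N₁ := N₁) (N₂ := N₂) hs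
  obtain ⟨M, K, hM, hK⟩ := exists_integral_fst_rpow_le hs hp hp1 hθ hpθ hχ
  have hdim' : N₁ + (1 + s) * N₂ < α * (θ + 1) + β * 0 := by linarith
  obtain ⟨R, hR, hlt⟩ := hχ.exists_lt_integral_rescale_rpow_mul hs h.contDiff_fst.continuous
    h.contDiff_snd.continuous h.fst_pos h.snd_pos hdim' hM K
  have hR0 : 0 < R := by linarith
  simp only [Real.rpow_zero, mul_one] at hlt
  exact hlt.not_ge (hK _ _ _ _ (h.rescale hβ hα hR0)
    (hstab.rescale h.fst_pos h.snd_pos hβ hα hR0))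

end SublinearCase

/-! ### Comparison of the components when `θ ≤ p` -/

section Comparison

variable {s p θ α β C : ℝ} {χ f g w u v : Pt N₁ N₂ → ℝ} {n : ℕ} {z : Pt N₁ N₂}

lemma grushinInner_eq_zero_of_isLocalMax (hz : IsLocalMax g z) : grushinInner s f g z = 0 := by
  simp [grushinInner, coordDeriv_eq_zero_of_isLocalMax hz]

lemma IsCutoff.sq_mul_grushinLap_le_of_isLocalMax (hχ : IsCutoff s C χ) (hw : ContDiff ℝ 2 w)
    (hz : IsLocalMax (fun z => χ z ^ (n + 2) * w z) z) (hχz : 0 < χ z) (hwz : 0 ≤ w z) :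
    χ z ^ 2 * grushinLap s w z ≤ 3 * (n + 2) ^ 2 * C * w z := by
  have hρ : ContDiff ℝ 2 fun z => χ z ^ (n + 2) := hχ.contDiff.pow _
  have hcritical : χ z * grushinInner s w χ z = -((n + 2) * w z * grushinInner s χ χ z) := by
    have hzero := grushinInner_eq_zero_of_isLocalMax (s := s) (f := χ) hz
    rw [grushinInner_mul_right s χ (hρ.differentiable two_ne_zero z)
      (hw.differentiable two_ne_zero z), hχ.grushinInner_pow_right, grushinInner_comm s χ w]
      at hzero
    have hfactor : χ z ^ (n + 1) * (χ z * grushinInner s w χ z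
        + (n + 2) * w z * grushinInner s χ χ z) = 0 := by linear_combination hzero
    linear_combination (mul_eq_zero.1 hfactor).resolve_left (pow_pos hχz _).ne'
  have hmax := grushinLap_nonpos_of_isLocalMax (s := s) (hρ.mul hw) hz
  rw [grushinLap_mul hρ hw, grushinInner_comm, hχ.grushinInner_pow_right] at hmax
  have hLρ := mul_le_mul_of_nonneg_left ((neg_le_abs _).trans (hχ.abs_grushinLap_pow_le n z)) hwz
  have hΓ := mul_le_mul_of_nonneg_left (hχ.grushinInner_le z)
    (show 0 ≤ 2 * ((n : ℝ) + 2) ^ 2 * w z * χ z ^ n by positivity)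
  refine le_of_mul_le_mul_left ?_ (pow_pos hχz n)
  linear_combination hmax + hLρ + hΓ - 2 * ((n : ℝ) + 2) * χ z ^ n * hcritical

/-- A Keller–Osserman bound: at a positive maximum of `χ ^ (n + 2) * w` the cutoff costs at most
`χ ^ 2 * Δ_s w ≲ w`, and `n` is so large that `χ ^ ((n + 2) * q) ≤ χ ^ 2`. -/
lemma IsCutoff.pow_mul_le_of_mul_rpow_le_grushinLap {c q : ℝ} (hχ : IsCutoff s C χ) (hc : 0 < c)
    (hq : 0 < q) (hn : 2 ≤ ((n + 2 : ℕ) : ℝ) * q) (hw : ContDiff ℝ 2 w)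
    (hle : ∀ z, 0 < w z → c * w z ^ (q + 1) ≤ grushinLap s w z) (z : Pt N₁ N₂) :
    χ z ^ (n + 2) * w z ≤ (3 * (n + 2) ^ 2 * C / c) ^ q⁻¹ := by
  have hC := hχ.const_nonneg
  obtain ⟨z₀, hz₀⟩ := ((hχ.contDiff.pow _).mul hw).continuous.exists_forall_ge_of_hasCompactSupport
    (hχ.hasCompactSupport_pow (n + 1).succ_ne_zero).mul_right
  refine (hz₀ z).trans ?_
  rcases le_or_gt (χ z₀ ^ (n + 2) * w z₀) 0 with hneg | hpos
  · exact hneg.trans (by positivity)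
  have hχ₀ : 0 < χ z₀ := by
    refine (hχ.nonneg z₀).lt_of_ne' fun h0 => ?_
    simp [h0] at hpos
  have hw₀ : 0 < w z₀ := pos_of_mul_pos_right hpos (pow_nonneg (hχ.nonneg z₀) _)
  have hrpow : c * (χ z₀ ^ 2 * w z₀ ^ q) ≤ 3 * (n + 2) ^ 2 * C := by
    have hlap := hχ.sq_mul_grushinLap_le_of_isLocalMax hw (Filter.Eventually.of_forall hz₀)
      hχ₀ hw₀.le
    have hlow := mul_le_mul_of_nonneg_left (hle z₀ hw₀) (sq_nonneg (χ z₀))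
    rw [Real.rpow_add_one hw₀.ne'] at hlow
    refine le_of_mul_le_mul_right ?_ hw₀
    linarith
  have hpow : (χ z₀ ^ (n + 2)) ^ q ≤ χ z₀ ^ 2 := by
    rw [← Real.rpow_natCast, ← Real.rpow_mul hχ₀.le, ← Real.rpow_natCast]
    exact Real.rpow_le_rpow_of_exponent_ge hχ₀ (hχ.le_one z₀) (by exact_mod_cast hn)
  refine (Real.le_rpow_inv_iff_of_pos hpos.le (by positivity) hq).2 ?_
  calc (χ z₀ ^ (n + 2) * w z₀) ^ q = (χ z₀ ^ (n + 2)) ^ q * w z₀ ^ q :=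
        Real.mul_rpow (by positivity) hw₀.le
    _ ≤ χ z₀ ^ 2 * w z₀ ^ q := by gcongr
    _ ≤ 3 * (n + 2) ^ 2 * C / c := (le_div_iff₀' hc).2 hrpow

lemma sub_rpow_le_rpow_neg_mul {l y τ : ℝ} (hl : 0 < l) (hly : l < y) (hτ : 0 ≤ τ)
    (hτp : τ + 1 ≤ p) : (y - l) ^ (p - τ) ≤ l ^ (-τ) * (y ^ p - l ^ p) := by
  have hy : 0 < y := hl.trans hly
  have hyl : 0 < y - l := sub_pos.2 hly
  calc (y - l) ^ (p - τ) = (y - l) ^ (p - τ - 1) * (y - l) := by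
        rw [← Real.rpow_add_one hyl.ne', sub_add_cancel]
    _ ≤ y ^ (p - τ - 1) * (y - l) := by gcongr <;> linarith
    _ = y ^ (-τ) * (y ^ (p - 1) * (y - l)) := by
        rw [← mul_assoc, ← Real.rpow_add hy]
        ring_nf
    _ ≤ l ^ (-τ) * (y ^ (p - 1) * y - l ^ (p - 1) * l) := by
        have hτ' : y ^ (-τ) ≤ l ^ (-τ) :=
          Real.rpow_le_rpow_of_nonpos hl hly.le (neg_nonpos.2 hτ)
        have hp : l ^ (p - 1) ≤ y ^ (p - 1) := Real.rpow_le_rpow hl.le hly.le (by linarith)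
        have hmul := mul_le_mul_of_nonneg_right hp hl.le
        gcongr
        linarith
    _ = l ^ (-τ) * (y ^ p - l ^ p) := by
        rw [← Real.rpow_add_one hy.ne', ← Real.rpow_add_one hl.ne', sub_add_cancel]

lemma mul_sub_rpow_le_rpow_sub_rpow {K σ x y : ℝ} (hσ0 : 0 < σ) (hσ1 : σ ≤ 1) (hσp : 1 / σ ≤ p)
    (hσθ : σ * (p + 1) = θ + 1) (hK : 0 < K) (hKσ : K ^ (p + 1) * σ = 1) (hx : 0 < x)
    (hy : K * x ^ σ < y) :
    σ * K ^ (1 / σ) * (y - K * x ^ σ) ^ (p - 1 / σ + 1)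
      ≤ K * σ * x ^ (σ - 1) * y ^ p - x ^ θ := by
  obtain ⟨τ, hτ⟩ : ∃ τ, 1 / σ = τ + 1 := ⟨1 / σ - 1, by ring⟩
  have hτ0 : 0 ≤ τ := by linarith [(one_le_div hσ0).2 hσ1]
  have hστ : σ * (-τ) = σ - 1 := by
    have hσ : σ * (1 / σ) = 1 := mul_one_div_cancel hσ0.ne'
    rw [hτ] at hσ
    linarith
  have hxσ : 0 < x ^ σ := Real.rpow_pos_of_pos hx σ
  have hKτ : K ^ (1 / σ) * (K * x ^ σ) ^ (-τ) = K * x ^ (σ - 1) := by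
    rw [hτ, Real.mul_rpow hK.le hxσ.le, ← Real.rpow_mul hx.le, hστ, ← mul_assoc,
      ← Real.rpow_add hK, add_neg_cancel_comm, Real.rpow_one]
  have hxθ : K * σ * x ^ (σ - 1) * (K * x ^ σ) ^ p = x ^ θ := by
    rw [Real.mul_rpow hK.le hxσ.le, ← Real.rpow_mul hx.le,
      show θ = σ - 1 + σ * p by linarith, Real.rpow_add hx]
    rw [Real.rpow_add_one hK.ne'] at hKσ
    linear_combination x ^ (σ - 1) * x ^ (σ * p) * hKσ
  calc σ * K ^ (1 / σ) * (y - K * x ^ σ) ^ (p - 1 / σ + 1)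
      = σ * K ^ (1 / σ) * (y - K * x ^ σ) ^ (p - τ) := by rw [hτ]; ring_nf
    _ ≤ σ * K ^ (1 / σ) * ((K * x ^ σ) ^ (-τ) * (y ^ p - (K * x ^ σ) ^ p)) := by
        gcongr
        exact sub_rpow_le_rpow_neg_mul (by positivity) hy hτ0 (by linarith)
    _ = σ * (K ^ (1 / σ) * (K * x ^ σ) ^ (-τ)) * (y ^ p - (K * x ^ σ) ^ p) := by ring
    _ = K * σ * x ^ (σ - 1) * y ^ p - x ^ θ := by
        rw [hKτ]
        linear_combination -hxθ

namespace IsC2LaneEmdenSol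

lemma contDiff_fst_rpow (h : IsC2LaneEmdenSol s p θ u v) (a : ℝ) :
    ContDiff ℝ 2 fun z => u z ^ a :=
  h.swap.contDiff_snd_rpow a

lemma le_grushinLap_snd_sub_rpow {K σ : ℝ} (h : IsC2LaneEmdenSol s p θ u v) (hK : 0 ≤ K)
    (hσ0 : 0 ≤ σ) (hσ1 : σ ≤ 1) (z : Pt N₁ N₂) :
    K * σ * u z ^ (σ - 1) * v z ^ p - u z ^ θ
      ≤ grushinLap s (fun z => v z + -K * u z ^ σ) z := by
  have hu0 := h.fst_pos z
  have hcurv : 0 ≤ K * (σ * (1 - σ) * u z ^ (σ - 2) * grushinInner s u u z) := by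
    have hΓ := grushinInner_self_nonneg s u z
    have hσ : 0 ≤ 1 - σ := sub_nonneg.2 hσ1
    positivity
  rw [grushinLap_add h.contDiff_snd (contDiff_const.mul (h.contDiff_fst_rpow σ)),
    grushinLap_const_mul _ (h.contDiff_fst_rpow σ),
    grushinLap_rpow h.contDiff_fst fun z => (h.fst_pos z).ne', h.grushinLap_fst, h.grushinLap_snd]
  linear_combination hcurv

end IsC2LaneEmdenSol

lemma exists_mem_closedBall_dilation_eq {R : ℝ} (hs : 0 ≤ s) (hR : 1 ≤ R) (hz : ‖z‖ ≤ R) :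
    ∃ z' ∈ Metric.closedBall (0 : Pt N₁ N₂) 1, dilation s R z' = z := by
  have hR0 : 0 < R := zero_lt_one.trans_le hR
  have hRs : 0 < R ^ (1 + s) := Real.rpow_pos_of_pos hR0 _
  have hRle : R ≤ R ^ (1 + s) := Real.self_le_rpow_of_one_le hR (by linarith)
  refine ⟨(R⁻¹ • z.1, (R ^ (1 + s))⁻¹ • z.2), ?_, ?_⟩
  · rw [norm_prod_le_iff] at hz
    simp only [mem_closedBall_zero_iff, norm_prod_le_iff, norm_smul, norm_inv, Real.norm_eq_abs,
      abs_of_pos hR0, abs_of_pos hRs, inv_mul_le_iff₀ hR0, inv_mul_le_iff₀ hRs, mul_one]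
    exact ⟨hz.1, hz.2.trans hRle⟩
  · simp [dilation_apply, smul_smul, hR0.ne', hRs.ne']

namespace IsC2LaneEmdenSol

lemma exists_snd_sub_rpow_le {K σ : ℝ} (hs : 0 ≤ s) (hσ0 : 0 < σ) (hσ1 : σ ≤ 1)
    (hσp : 1 / σ < p) (hσθ : σ * (p + 1) = θ + 1) (hK : 0 < K) (hKσ : K ^ (p + 1) * σ = 1) :
    ∃ A, ∀ u v : Pt N₁ N₂ → ℝ, IsC2LaneEmdenSol s p θ u v →
      ∀ z ∈ Metric.closedBall (0 : Pt N₁ N₂) 1, v z - K * u z ^ σ ≤ A := by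
  obtain ⟨C, χ, hχ⟩ := exists_isCutoff (N₁ := N₁) (N₂ := N₂) hs
  have hq : 0 < p - 1 / σ := sub_pos.2 hσp
  obtain ⟨n, hn⟩ := exists_nat_ge (2 / (p - 1 / σ))
  have hn' : 2 ≤ ((n + 2 : ℕ) : ℝ) * (p - 1 / σ) := by
    rw [div_le_iff₀ hq] at hn
    push_cast
    linarith
  have hc : 0 < σ * K ^ (1 / σ) := by positivity
  refine ⟨(3 * (n + 2) ^ 2 * C / (σ * K ^ (1 / σ))) ^ (p - 1 / σ)⁻¹, fun u v h z hz => ?_⟩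
  have hw : ContDiff ℝ 2 fun z => v z + -K * u z ^ σ :=
    h.contDiff_snd.add (contDiff_const.mul (h.contDiff_fst_rpow σ))
  have hlap (z) (hwz : 0 < v z + -K * u z ^ σ) :
      σ * K ^ (1 / σ) * (v z + -K * u z ^ σ) ^ (p - 1 / σ + 1)
        ≤ grushinLap s (fun z => v z + -K * u z ^ σ) z := by
    refine le_trans ?_ (h.le_grushinLap_snd_sub_rpow hK.le hσ0.le hσ1 z)
    rw [neg_mul, ← sub_eq_add_neg] at hwz ⊢
    exact mul_sub_rpow_le_rpow_sub_rpow hσ0 hσ1 hσp.le hσθ hK hKσ (h.fst_pos z) (sub_pos.1 hwz)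
  have hbound := hχ.pow_mul_le_of_mul_rpow_le_grushinLap hc hq hn' hw hlap z
  rwa [hχ.eq_one z hz, one_pow, one_mul, neg_mul, ← sub_eq_add_neg] at hbound

lemma snd_le_mul_rpow {K σ : ℝ} (h : IsC2LaneEmdenSol s p θ u v) (hs : 0 ≤ s) (hσ0 : 0 < σ)
    (hσ1 : σ ≤ 1) (hσp : 1 / σ < p) (hσθ : σ * (p + 1) = θ + 1) (hβ : β * p = α + 2)
    (hα : α * θ = β + 2) (hβ0 : 0 < β) (hK : 0 < K) (hKσ : K ^ (p + 1) * σ = 1)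
    (z : Pt N₁ N₂) : v z ≤ K * u z ^ σ := by
  obtain ⟨A, hA⟩ := exists_snd_sub_rpow_le (N₁ := N₁) (N₂ := N₂) hs hσ0 hσ1 hσp hσθ hK hKσ
  have hασ : α * σ = β := by
    have hp : 0 < p + 1 := by linarith [one_div_pos.2 hσ0]
    refine mul_right_cancel₀ hp.ne' ?_
    linear_combination α * hσθ + hα - hβ
  have hscaled : ∀ R, max 1 ‖z‖ ≤ R → R ^ β * (v z - K * u z ^ σ) ≤ A := fun R hR => by
    have hR1 := (le_max_left _ _).trans hR
    have hR0 : 0 < R := zero_lt_one.trans_le hR1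
    obtain ⟨z', hz', rfl⟩ := exists_mem_closedBall_dilation_eq hs hR1 ((le_max_right _ _).trans hR)
    have hle := hA _ _ (h.rescale hβ hα hR0) z' hz'
    rw [_root_.rescale_rpow hR0 h.fst_pos, hασ, _root_.rescale] at hle
    linarith
  by_contra! hlt
  have hgrow := (tendsto_rpow_atTop hβ0).atTop_mul_const (sub_pos.2 hlt)
  obtain ⟨R, hRA, hR⟩ := ((hgrow.eventually_gt_atTop A).and (Filter.eventually_ge_atTop _)).exists
  exact hRA.not_ge (hscaled R hR)

/-- `w = v - K * u ^ σ` with the values of `K`, `σ` in the proof satisfies `c * w ^ (q + 1) ≤ Δ_s w`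
where it is positive, so it is bounded by Keller–Osserman, and then nonpositive by rescaling. -/
lemma snd_rpow_add_one_le (h : IsC2LaneEmdenSol s p θ u v) (hs : 0 ≤ s) (hθ : 1 < θ)
    (hθp : θ ≤ p) (hβ : β * p = α + 2) (hα : α * θ = β + 2) (hβ0 : 0 < β) (z : Pt N₁ N₂) :
    v z ^ (p + 1) ≤ (p + 1) / (θ + 1) * u z ^ (θ + 1) := by
  have hp1 : 0 < p + 1 := by linarith
  have hθ1 : 0 < θ + 1 := by linarith
  obtain ⟨σ, hσ⟩ : ∃ σ, σ = (θ + 1) / (p + 1) := ⟨_, rfl⟩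
  obtain ⟨K, hK⟩ : ∃ K, K = ((p + 1) / (θ + 1)) ^ (1 / (p + 1)) := ⟨_, rfl⟩
  have hK0 : 0 < K := by rw [hK]; positivity
  have hKp : K ^ (p + 1) = (p + 1) / (θ + 1) := by
    rw [hK, ← Real.rpow_mul (by positivity), one_div_mul_cancel hp1.ne', Real.rpow_one]
  have hσθ : σ * (p + 1) = θ + 1 := by rw [hσ, div_mul_cancel₀ _ hp1.ne']
  have hσ1 : σ ≤ 1 := by rw [hσ, div_le_one hp1]; linarith
  have hσp : 1 / σ < p := by
    rw [hσ, one_div_div, div_lt_iff₀ hθ1]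
    nlinarith
  have hle := h.snd_le_mul_rpow hs (by rw [hσ]; positivity) hσ1 hσp hσθ hβ hα hβ0 hK0
    (by rw [hKp, hσ]; field_simp) z
  have hu0 := h.fst_pos z
  calc v z ^ (p + 1) ≤ (K * u z ^ σ) ^ (p + 1) := Real.rpow_le_rpow (h.snd_pos z).le hle hp1.le
    _ = (p + 1) / (θ + 1) * u z ^ (θ + 1) := by
      rw [Real.mul_rpow hK0.le (by positivity), hKp, ← Real.rpow_mul hu0.le, hσθ]

end IsC2LaneEmdenSol

end Comparison

/-! ### The case `1 < θ ≤ p` -/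

section SuperlinearCase

variable {s p θ α β k C : ℝ} {χ f g u v ξ ζ φ : Pt N₁ N₂ → ℝ} {m n : ℕ} {z : Pt N₁ N₂}

lemma grushinInner_mul_self (s : ℝ) (hf : DifferentiableAt ℝ f z) (hg : DifferentiableAt ℝ g z) :
    grushinInner s (fun z => f z * g z) (fun z => f z * g z) z
      = grushinInner s f (fun z => f z * (g z * g z)) z + f z ^ 2 * grushinInner s g g z := by
  have hgg : DifferentiableAt ℝ (fun z => g z * g z) z := hg.mul hg
  rw [grushinInner_mul_right s _ hf hg, grushinInner_comm s _ f, grushinInner_comm s _ g,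
    grushinInner_mul_right s f hf hg, grushinInner_mul_right s g hf hg,
    grushinInner_mul_right s f hf hgg, grushinInner_mul_right s f hg hg, grushinInner_comm s g f]
  ring

lemma integrable_grushinInner (hs : 0 ≤ s) (hf : ContDiff ℝ 1 f) (hg : ContDiff ℝ 1 g)
    (hc : HasCompactSupport f) : Integrable fun z => grushinInner s f g z :=
  (continuous_grushinInner hs hf hg).integrable_of_hasCompactSupport
    (hasCompactSupport_grushinInner s hc)

lemma integrable_neg_grushinLap_div_mul_sq (hs : 0 ≤ s) (hf : ContDiff ℝ 2 f)
    (hf0 : ∀ z, 0 < f z) (hφ : ContDiff ℝ 1 φ) (hc : HasCompactSupport φ) :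
    Integrable fun z => -grushinLap s f z / f z * φ z ^ 2 :=
  integrable_mul_sq ((continuous_grushinLap hs hf).neg.div hf.continuous fun z => (hf0 z).ne')
    hφ.continuous hc

/-- Writing `φ = f σ`, the difference of the two sides is `∫ f² |∇_s σ|²`. -/
lemma integral_neg_grushinLap_div_mul_sq_le (hs : 0 ≤ s) (hf : ContDiff ℝ 2 f)
    (hf0 : ∀ z, 0 < f z) (hφ : ContDiff ℝ 1 φ) (hc : HasCompactSupport φ) :
    ∫ z, -grushinLap s f z / f z * φ z ^ 2 ≤ ∫ z, grushinInner s φ φ z := by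
  have hf_int := integrable_neg_grushinLap_div_mul_sq hs hf hf0 hφ hc
  have hf1 := hf.of_le one_le_two
  obtain ⟨σ, hσ, rfl⟩ : ∃ σ, ContDiff ℝ 1 σ ∧ φ = fun z => f z * σ z :=
    ⟨fun z => φ z / f z, hφ.div hf1 fun z => (hf0 z).ne',
      funext fun z => (mul_div_cancel₀ _ (hf0 z).ne').symm⟩
  have hcompact : HasCompactSupport fun z => f z * (σ z * σ z) := by
    simpa only [Pi.mul_def, mul_assoc] using hc.mul_right (f' := σ)
  have hnull := hasNullIntegral_grushinInner_add hs hf (hf1.mul (hσ.mul hσ))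
    (hcompact.isCompact.inter_left (isClosed_tsupport _))
  refine (hnull.const_mul (-1)).integral_le hf_int (integrable_grushinInner hs hφ hφ hc) fun z => ?_
  have hσσ : 0 ≤ f z ^ 2 * grushinInner s σ σ z :=
    mul_nonneg (sq_nonneg _) (grushinInner_self_nonneg s σ z)
  have hdiv : -grushinLap s f z / f z * (f z * σ z) ^ 2
      = -grushinLap s f z * (f z * (σ z * σ z)) := by
    have := (hf0 z).ne'
    field_simp
  rw [hdiv, grushinInner_mul_self s (hf1.differentiable one_ne_zero z)
    (hσ.differentiable one_ne_zero z)]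
  linarith

lemma IsLinearizedSupersol.two_mul_sqrt_mul_le (h : IsLinearizedSupersol s p θ u v ξ ζ)
    (hp : 0 ≤ p) (hθ : 0 ≤ θ) (hu0 : 0 < u z) (hv0 : 0 < v z) :
    2 * (√(p * θ) * (v z ^ ((p - 1) / 2) * u z ^ ((θ - 1) / 2)))
      ≤ -grushinLap s ξ z / ξ z + -grushinLap s ζ z / ζ z := by
  have hξ0 := h.fst_pos z
  have hζ0 := h.snd_pos z
  have hξ : p * v z ^ (p - 1) * ζ z / ξ z ≤ -grushinLap s ξ z / ξ z := by
    have := h.grushinLap_fst_le z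
    gcongr
    linarith
  have hζ : θ * u z ^ (θ - 1) * ξ z / ζ z ≤ -grushinLap s ζ z / ζ z := by
    have := h.grushinLap_snd_le z
    gcongr
    linarith
  have hV : (v z ^ ((p - 1) / 2)) ^ 2 = v z ^ (p - 1) := by
    rw [← Real.rpow_mul_natCast hv0.le]
    simp
  have hU : (u z ^ ((θ - 1) / 2)) ^ 2 = u z ^ (θ - 1) := by
    rw [← Real.rpow_mul_natCast hu0.le]
    simp
  refine (two_mul_le_add_of_sq_le_mul (by positivity) (by positivity) (Eq.le ?_)).trans
    (add_le_add hξ hζ)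
  rw [mul_pow, mul_pow, Real.sq_sqrt (by positivity), hV, hU]
  field_simp

lemma IsLinearizedSupersol.sqrt_mul_integral_le (h : IsLinearizedSupersol s p θ u v ξ ζ)
    (hs : 0 ≤ s) (hp : 0 ≤ p) (hθ : 0 ≤ θ) (hu : Continuous u) (hv : Continuous v)
    (hu0 : ∀ z, 0 < u z) (hv0 : ∀ z, 0 < v z) (hφ : ContDiff ℝ 1 φ) (hc : HasCompactSupport φ) :
    √(p * θ) * ∫ z, v z ^ ((p - 1) / 2) * u z ^ ((θ - 1) / 2) * φ z ^ 2
      ≤ ∫ z, grushinInner s φ φ z := by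
  have hweight : Integrable fun z => v z ^ ((p - 1) / 2) * u z ^ ((θ - 1) / 2) * φ z ^ 2 :=
    integrable_mul_sq ((hv.rpow_const fun z => Or.inl (hv0 z).ne').mul
      (hu.rpow_const fun z => Or.inl (hu0 z).ne')) hφ.continuous hc
  have hξ := integrable_neg_grushinLap_div_mul_sq hs h.contDiff_fst h.fst_pos hφ hc
  have hζ := integrable_neg_grushinLap_div_mul_sq hs h.contDiff_snd h.snd_pos hφ hc
  have hpointwise (z) :
      2 * √(p * θ) * (v z ^ ((p - 1) / 2) * u z ^ ((θ - 1) / 2) * φ z ^ 2)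
        ≤ -grushinLap s ξ z / ξ z * φ z ^ 2 + -grushinLap s ζ z / ζ z * φ z ^ 2 := by
    linear_combination mul_le_mul_of_nonneg_right
      (h.two_mul_sqrt_mul_le hp hθ (hu0 z) (hv0 z)) (sq_nonneg (φ z))
  have hsum := integral_mono (hweight.const_mul (2 * √(p * θ))) (hξ.add hζ) hpointwise
  rw [integral_const_mul, integral_add' hξ hζ] at hsum
  have hHardy_ξ := integral_neg_grushinLap_div_mul_sq_le hs h.contDiff_fst h.fst_pos hφ hc
  have hHardy_ζ := integral_neg_grushinLap_div_mul_sq_le hs h.contDiff_snd h.snd_pos hφ hc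
  linarith

lemma IsCutoff.integral_grushinInner_mul_pow_le (hχ : IsCutoff s C χ) (hs : 0 ≤ s)
    (hf : ContDiff ℝ 2 f) (n : ℕ) :
    ∫ z, grushinInner s (fun z => f z * χ z ^ (n + 2)) (fun z => f z * χ z ^ (n + 2)) z
      ≤ (∫ z, -grushinLap s f z * f z * χ z ^ (2 * n + 4))
        + (n + 2) ^ 2 * C * ∫ z, f z ^ 2 * χ z ^ (2 * n + 2) := by
  have hρ : ContDiff ℝ 1 fun z => χ z ^ (n + 2) := (hχ.contDiff.pow _).of_le one_le_two
  have hf1 := hf.of_le one_le_two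
  have hnull := hasNullIntegral_grushinInner_add hs hf (hf1.mul (hρ.mul hρ))
    ((hχ.hasCompactSupport_pow (n + 1).succ_ne_zero).mul_right.mul_left.isCompact.inter_left
      (isClosed_tsupport _))
  have hlap : Integrable fun z => -grushinLap s f z * f z * χ z ^ (2 * n + 4) :=
    hχ.integrable_mul_pow ((continuous_grushinLap hs hf).neg.mul hf.continuous) (by lia)
  have hsq : Integrable fun z => f z ^ 2 * χ z ^ (2 * n + 2) :=
    hχ.integrable_mul_pow (hf.continuous.pow 2) (by lia)
  have hφ : ContDiff ℝ 1 fun z => f z * χ z ^ (n + 2) := hf1.mul hρ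
  have hle := hnull.integral_le
    (integrable_grushinInner hs hφ hφ (hχ.hasCompactSupport_mul_pow f (n + 1).succ_ne_zero))
    (hlap.add (hsq.const_mul ((n + 2) ^ 2 * C))) fun z => by
      have hχ2 : 0 ≤ f z ^ 2 * ((n + 2) * χ z ^ (n + 1)) ^ 2 := by positivity
      rw [grushinInner_mul_self s (hf1.differentiable one_ne_zero z)
        (hρ.differentiable one_ne_zero z), hχ.grushinInner_pow_right, grushinInner_comm s _ χ,
        hχ.grushinInner_pow_right]
      simp only [Pi.add_apply]
      linear_combination mul_le_mul_of_nonneg_left (hχ.grushinInner_le z) hχ2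
  rwa [integral_add' hlap (hsq.const_mul _), integral_const_mul] at hle

lemma rpow_mul_le_sqrt_mul {x y c : ℝ} (hx : 0 < x) (hy : 0 < y) (hc : 0 ≤ c)
    (hle : y ^ (p + 1) ≤ c * x ^ (θ + 1)) :
    y ^ p * x ≤ √c * (y ^ ((p - 1) / 2) * x ^ ((θ + 3) / 2)) := by
  have hsqrt : y ^ ((p + 1) / 2) ≤ √c * x ^ ((θ + 1) / 2) := by
    refine le_of_sq_le_sq ?_ (by positivity)
    rw [mul_pow, Real.sq_sqrt hc, ← Real.rpow_mul_natCast hy.le, ← Real.rpow_mul_natCast hx.le]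
    simpa using hle
  have hyp : y ^ p = y ^ ((p - 1) / 2) * y ^ ((p + 1) / 2) := by
    rw [← Real.rpow_add hy]
    ring_nf
  have hxθ : x ^ ((θ + 3) / 2) = x ^ ((θ + 1) / 2) * x := by
    rw [← Real.rpow_add_one hx.ne']
    ring_nf
  calc y ^ p * x = y ^ ((p - 1) / 2) * x * y ^ ((p + 1) / 2) := by rw [hyp]; ring
    _ ≤ y ^ ((p - 1) / 2) * x * (√c * x ^ ((θ + 1) / 2)) := by gcongr
    _ = √c * (y ^ ((p - 1) / 2) * x ^ ((θ + 3) / 2)) := by rw [hxθ]; ring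

lemma sqrt_div_lt_sqrt_mul (hθ : 1 < θ) (hθp : θ ≤ p) : √((p + 1) / (θ + 1)) < √(p * θ) := by
  refine Real.sqrt_lt_sqrt (div_nonneg (by linarith) (by linarith)) ?_
  rw [div_lt_iff₀ (by linarith)]
  nlinarith [mul_pos (show 0 < p by linarith) (show 0 < θ - 1 by linarith)]

namespace IsC2LaneEmdenSol

lemma continuous_snd_rpow_mul_fst_rpow (h : IsC2LaneEmdenSol s p θ u v) (b a : ℝ) :
    Continuous fun z => v z ^ b * u z ^ a :=
  (h.continuous_snd_rpow b).mul (h.continuous_fst_rpow a)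

lemma mul_integral_snd_rpow_mul_fst_rpow_le (h : IsC2LaneEmdenSol s p θ u v)
    (hstab : IsLinearizedSupersol s p θ u v ξ ζ) (hs : 0 ≤ s) (hp : 0 ≤ p) (hθ : 0 ≤ θ)
    (hχ : IsCutoff s C χ) (hcomp : ∀ z, v z ^ (p + 1) ≤ (p + 1) / (θ + 1) * u z ^ (θ + 1))
    (n : ℕ) :
    (√(p * θ) - √((p + 1) / (θ + 1))) *
        ∫ z, v z ^ ((p - 1) / 2) * u z ^ ((θ + 3) / 2) * χ z ^ (2 * n + 4)
      ≤ (n + 2) ^ 2 * C * ∫ z, u z ^ 2 * χ z ^ (2 * n + 2) := by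
  have hφ : ContDiff ℝ 2 fun z => u z * χ z ^ (n + 2) := h.contDiff_fst.mul (hχ.contDiff.pow _)
  have hstable := hstab.sqrt_mul_integral_le hs hp hθ h.contDiff_fst.continuous
    h.contDiff_snd.continuous h.fst_pos h.snd_pos (hφ.of_le one_le_two)
    (hχ.hasCompactSupport_mul_pow u (n + 1).succ_ne_zero)
  have henergy := hχ.integral_grushinInner_mul_pow_le hs h.contDiff_fst n
  have hweight (z) : v z ^ ((p - 1) / 2) * u z ^ ((θ - 1) / 2) * (u z * χ z ^ (n + 2)) ^ 2
      = v z ^ ((p - 1) / 2) * u z ^ ((θ + 3) / 2) * χ z ^ (2 * n + 4) := by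
    rw [show (θ + 3) / 2 = (θ - 1) / 2 + (2 : ℕ) by push_cast; ring,
      Real.rpow_add_natCast (h.fst_pos z).ne']
    ring
  have hsource : ∫ z, v z ^ p * u z * χ z ^ (2 * n + 4) ≤ √((p + 1) / (θ + 1)) *
      ∫ z, v z ^ ((p - 1) / 2) * u z ^ ((θ + 3) / 2) * χ z ^ (2 * n + 4) := by
    rw [← integral_const_mul]
    refine integral_mono
      (hχ.integrable_mul_pow ((h.continuous_snd_rpow p).mul h.contDiff_fst.continuous) (by lia))
      ((hχ.integrable_mul_pow (h.continuous_snd_rpow_mul_fst_rpow _ _) (by lia)).const_mul _)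
      fun z => ?_
    refine (mul_le_mul_of_nonneg_right (rpow_mul_le_sqrt_mul (h.fst_pos z) (h.snd_pos z)
      (by positivity) (hcomp z)) (pow_nonneg (hχ.nonneg z) _)).trans_eq (mul_assoc _ _ _)
  simp only [hweight] at hstable
  simp only [h.grushinLap_fst, neg_neg] at henergy
  linarith

lemma snd_rpow_neg_one_mul_eq (h : IsC2LaneEmdenSol s p θ u v) (hχ : IsCutoff s C χ)
    (k t : ℝ) (m : ℕ) (z : Pt N₁ N₂) :
    v z ^ (-1 : ℝ) * u z ^ (θ + k) * χ z ^ (m + 2)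
      = u z ^ k * χ z ^ m *
          (χ z * (v z)⁻¹ * ((m + 2) * grushinInner s v χ z)
            - (χ z * (v z)⁻¹) ^ 2 * grushinInner s v v z
            + (k * χ z * (u z)⁻¹) * (χ z * (v z)⁻¹) * grushinInner s u v z
            + χ z * (u z)⁻¹ * (t * ((m + 2) * grushinInner s u χ z))
            - t * (1 - k) * ((χ z * (u z)⁻¹) ^ 2 * grushinInner s u u z))
        - t * (v z ^ p * (u z ^ (k - 1) * χ z ^ (m + 2)))
        + (-1 * (grushinInner s v (fun z => u z ^ k * v z ^ (-1 : ℝ) * χ z ^ (m + 2)) z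
            + grushinLap s v z * (u z ^ k * v z ^ (-1 : ℝ) * χ z ^ (m + 2)))
          + -t * (grushinInner s u (fun z => u z ^ (k - 1) * χ z ^ (m + 2)) z
            + grushinLap s u z * (u z ^ (k - 1) * χ z ^ (m + 2)))) := by
  have hu0 := h.fst_pos z
  have hv0 := h.snd_pos z
  have hu := h.contDiff_fst.differentiable two_ne_zero z
  have hv := h.contDiff_snd.differentiable two_ne_zero z
  have hρ : DifferentiableAt ℝ (fun z => χ z ^ (m + 2)) z :=
    (hχ.contDiff.pow _).differentiable two_ne_zero z
  have hU (a : ℝ) : DifferentiableAt ℝ (fun z => u z ^ a) z := hu.rpow_const (Or.inl hu0.ne')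
  have hV (a : ℝ) : DifferentiableAt ℝ (fun z => v z ^ a) z := hv.rpow_const (Or.inl hv0.ne')
  have hUV : DifferentiableAt ℝ (fun z => u z ^ k * v z ^ (-1 : ℝ)) z := (hU k).mul (hV (-1))
  rw [grushinInner_mul_right s v hUV hρ, grushinInner_mul_right s v (hU k) (hV (-1)),
    grushinInner_mul_right s u (hU (k - 1)) hρ, hχ.grushinInner_pow_right,
    hχ.grushinInner_pow_right, grushinInner_rpow_right s v hu hu0.ne',
    grushinInner_rpow_right s v hv hv0.ne', grushinInner_rpow_right s u hu hu0.ne',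
    grushinInner_comm s v u, h.grushinLap_fst, h.grushinLap_snd, Real.rpow_add hu0]
  simp only [Real.rpow_sub_one hu0.ne', Real.rpow_sub_one hv0.ne', Real.rpow_neg_one]
  field_simp
  ring

end IsC2LaneEmdenSol

/-- Of the two integrations by parts behind `snd_rpow_neg_one_mul_eq`, the one for `u` enters with
the weight `t` for which `|∇_s u|²` absorbs both cross terms. -/
lemma IsCutoff.young_le (hχ : IsCutoff s C χ) {t : ℝ} (ht : t * (1 - k) = (k ^ 2 + 1) / 2)
    (u v : Pt N₁ N₂ → ℝ) (a b M : ℝ) (z : Pt N₁ N₂) :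
    χ z * b * (M * grushinInner s v χ z) - (χ z * b) ^ 2 * grushinInner s v v z
        + (k * χ z * a) * (χ z * b) * grushinInner s u v z
        + χ z * a * (t * (M * grushinInner s u χ z))
        - t * (1 - k) * ((χ z * a) ^ 2 * grushinInner s u u z)
      ≤ M ^ 2 / 2 * (1 + t ^ 2) * C := by
  have hvχ := mul_grushinInner_le s v χ z (χ z * b) M
  have huv := mul_grushinInner_le s u v z (k * χ z * a) (χ z * b)
  have huχ := mul_grushinInner_le s u χ z (χ z * a) (t * M)
  have hχχ := mul_le_mul_of_nonneg_left (hχ.grushinInner_le z)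
    (show 0 ≤ M ^ 2 / 2 * (1 + t ^ 2) by positivity)
  rw [ht]
  linarith

namespace IsC2LaneEmdenSol

lemma integral_snd_rpow_neg_one_mul_le (h : IsC2LaneEmdenSol s p θ u v) (hs : 0 ≤ s)
    (hk1 : k < 1) (hχ : IsCutoff s C χ) (hm : m ≠ 0) :
    ∫ z, v z ^ (-1 : ℝ) * u z ^ (θ + k) * χ z ^ (m + 2)
      ≤ (m + 2) ^ 2 / 2 * (1 + ((k ^ 2 + 1) / (2 * (1 - k))) ^ 2) * C
        * ∫ z, u z ^ k * χ z ^ m := by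
  obtain ⟨t, ht⟩ : ∃ t, t = (k ^ 2 + 1) / (2 * (1 - k)) := ⟨_, rfl⟩
  have hk : 0 < 1 - k := sub_pos.2 hk1
  have ht0 : 0 ≤ t := by rw [ht]; positivity
  have htk : t * (1 - k) = (k ^ 2 + 1) / 2 := by rw [ht]; field_simp
  have hρ : ContDiff ℝ 1 fun z => χ z ^ (m + 2) := (hχ.contDiff.pow _).of_le one_le_two
  have hU (a : ℝ) : ContDiff ℝ 1 fun z => u z ^ a := (h.contDiff_fst_rpow a).of_le one_le_two
  have hV : ContDiff ℝ 1 fun z => v z ^ (-1 : ℝ) :=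
    (h.contDiff_snd_rpow (-1)).of_le one_le_two
  have hnull_v := hasNullIntegral_grushinInner_add hs h.contDiff_snd (((hU k).mul hV).mul hρ)
    ((hχ.hasCompactSupport_mul_pow _ (m + 1).succ_ne_zero).isCompact.inter_left
      (isClosed_tsupport _))
  have hnull_u := hasNullIntegral_grushinInner_add hs h.contDiff_fst ((hU (k - 1)).mul hρ)
    ((hχ.hasCompactSupport_mul_pow _ (m + 1).succ_ne_zero).isCompact.inter_left
      (isClosed_tsupport _))
  rw [← ht, ← integral_const_mul]
  refine ((hnull_v.const_mul (-1)).add (hnull_u.const_mul (-t))).integral_le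
    (hχ.integrable_mul_pow (h.continuous_snd_rpow_mul_fst_rpow _ _) (m + 1).succ_ne_zero)
    ((hχ.integrable_mul_pow (h.continuous_fst_rpow k) hm).const_mul _) fun z => ?_
  have hu0 := h.fst_pos z
  have hv0 := h.snd_pos z
  have hχ0 := hχ.nonneg z
  have hdrop : 0 ≤ t * (v z ^ p * (u z ^ (k - 1) * χ z ^ (m + 2))) := by positivity
  have hyoung := mul_le_mul_of_nonneg_left (hχ.young_le htk u v (u z)⁻¹ (v z)⁻¹ (m + 2) z)
    (show 0 ≤ u z ^ k * χ z ^ m by positivity)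
  rw [h.snd_rpow_neg_one_mul_eq hχ k t]
  linarith

end IsC2LaneEmdenSol

lemma exists_interpolation_exponents (hp : 1 < p) (hθ : 1 < θ) :
    ∃ l μ : ℝ, 0 ≤ l ∧ 0 ≤ μ ∧ l + μ < 1 ∧ l = (p - 1) / 2 * μ ∧
      (θ + 1 / θ) * l + (θ + 3) / 2 * μ = 2 := by
  have hp1 : 0 < p - 1 := sub_pos.2 hp
  have hθ0 : 0 < θ := by linarith
  have hD : 0 < (p - 1) * (θ + 1 / θ) + θ + 3 := by positivity
  obtain ⟨μ, hμ⟩ : ∃ μ, μ = 4 / ((p - 1) * (θ + 1 / θ) + θ + 3) := ⟨_, rfl⟩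
  have hμ0 : 0 < μ := by rw [hμ]; positivity
  have hl0 : 0 < (p - 1) / 2 * μ := by positivity
  have hsum : (θ + 1 / θ) * ((p - 1) / 2 * μ) + (θ + 3) / 2 * μ = 2 := by
    rw [eq_div_iff hD.ne'] at hμ
    linear_combination hμ / 2
  have hθ2 : 2 < θ + 1 / θ := by
    have hsq : θ + 1 / θ - 2 = (θ - 1) ^ 2 / θ := by
      field_simp
      ring
    have : 0 < (θ - 1) ^ 2 / θ := div_pos (pow_pos (sub_pos.2 hθ) 2) hθ0
    linarith
  refine ⟨(p - 1) / 2 * μ, μ, hl0.le, hμ0.le, ?_, rfl, hsum⟩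
  linarith [mul_lt_mul_of_pos_right hθ2 hl0, mul_lt_mul_of_pos_right hθ hμ0]

lemma rpow_mul_rpow_mul_rpow_eq_sq {x y a b c l μ : ℝ} (hx : 0 < x) (hy : 0 < y)
    (hl : l = b * μ) (hsum : a * l + c * μ = 2) :
    (y ^ (-1 : ℝ) * x ^ a) ^ l * (y ^ b * x ^ c) ^ μ = x ^ 2 := by
  rw [Real.mul_rpow (by positivity) (by positivity), Real.mul_rpow (by positivity) (by positivity),
    ← Real.rpow_mul hx.le, ← Real.rpow_mul hx.le, ← Real.rpow_mul hy.le, ← Real.rpow_mul hy.le,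
    mul_mul_mul_comm, ← Real.rpow_add hx, ← Real.rpow_add hy, hsum, hl]
  simp

lemma IsCutoff.integral_rpow_mul_pow_le_add (hχ : IsCutoff s C χ) {a b : ℝ} (ha : 0 ≤ a)
    (hab : a ≤ b) (hf : Continuous f) (hf0 : ∀ z, 0 < f z) (hm : m ≠ 0) :
    ∫ z, f z ^ a * χ z ^ m ≤ (∫ z, χ z ^ m) + ∫ z, f z ^ b * χ z ^ m := by
  have hpow (c : ℝ) : Continuous fun z => f z ^ c := hf.rpow_const fun z => Or.inl (hf0 z).ne'
  have hone : Integrable fun z => χ z ^ m := by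
    simpa using hχ.integrable_mul_pow (continuous_const (y := (1 : ℝ))) hm
  rw [← integral_add hone (hχ.integrable_mul_pow (hpow b) hm)]
  refine integral_mono (hχ.integrable_mul_pow (hpow a) hm)
    (hone.add (hχ.integrable_mul_pow (hpow b) hm)) fun z => ?_
  refine (mul_le_mul_of_nonneg_right (rpow_le_one_add_rpow (hf0 z).le ha hab)
    (pow_nonneg (hχ.nonneg z) m)).trans_eq ?_
  rw [add_mul, one_mul]

lemma exists_integral_snd_rpow_mul_fst_rpow_le_mul (hs : 0 ≤ s) (hθ : 1 < θ) (hθp : θ ≤ p)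
    (hβ : β * p = α + 2) (hα : α * θ = β + 2) (hβ0 : 0 < β) (hχ : IsCutoff s C χ) (n : ℕ) :
    ∃ B, 0 ≤ B ∧ ∀ u v ξ ζ : Pt N₁ N₂ → ℝ, IsC2LaneEmdenSol s p θ u v →
      IsLinearizedSupersol s p θ u v ξ ζ →
        ∫ z, v z ^ ((p - 1) / 2) * u z ^ ((θ + 3) / 2) * χ z ^ (2 * n + 4)
          ≤ B * ∫ z, u z ^ 2 * χ z ^ (2 * n + 2) := by
  have hC := hχ.const_nonneg
  have hgap : 0 < √(p * θ) - √((p + 1) / (θ + 1)) := sub_pos.2 (sqrt_div_lt_sqrt_mul hθ hθp)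
  refine ⟨(n + 2) ^ 2 * C / (√(p * θ) - √((p + 1) / (θ + 1))), by positivity,
    fun u v ξ ζ h hstab => ?_⟩
  rw [div_mul_eq_mul_div, le_div_iff₀' hgap]
  exact h.mul_integral_snd_rpow_mul_fst_rpow_le hstab hs (by linarith) (by linarith) hχ
    (h.snd_rpow_add_one_le hs hθ hθp hβ hα hβ0) n

lemma exists_integral_snd_rpow_neg_one_mul_le_mul (p : ℝ) (hs : 0 ≤ s) (hθ : 1 < θ)
    (hχ : IsCutoff s C χ) (hm : m ≠ 0) :
    ∃ D, 0 ≤ D ∧ ∀ u v : Pt N₁ N₂ → ℝ, IsC2LaneEmdenSol s p θ u v →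
      ∫ z, v z ^ (-1 : ℝ) * u z ^ (θ + 1 / θ) * χ z ^ (m + 2)
        ≤ D * ((∫ z, χ z ^ m) + ∫ z, u z ^ 2 * χ z ^ m) := by
  have hθ0 : 0 < θ := by linarith
  have hk1 : 1 / θ < 1 := (div_lt_one hθ0).2 hθ
  have hC := hχ.const_nonneg
  have hD : 0 ≤ (m + 2) ^ 2 / 2 * (1 + (((1 / θ) ^ 2 + 1) / (2 * (1 - 1 / θ))) ^ 2) * C := by
    positivity
  refine ⟨_, hD, fun u v h => (h.integral_snd_rpow_neg_one_mul_le hs hk1 hχ hm).trans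
    (mul_le_mul_of_nonneg_left ?_ hD)⟩
  have hle := hχ.integral_rpow_mul_pow_le_add (one_div_pos.2 hθ0).le (hk1.le.trans one_le_two)
    h.contDiff_fst.continuous h.fst_pos hm
  simpa only [Real.rpow_two] using hle

lemma le_two_mul_of_interpolation {I X Y B D ε K K' : ℝ} (hε : 0 ≤ ε)
    (hsmall : ε * (B + D) ≤ 1 / 2) (hI : 0 ≤ I) (hY : Y ≤ B * I) (hX : X ≤ D * (K' + I))
    (hle : I ≤ ε * (X + Y) + K) : I ≤ 2 * (ε * (D * K') + K) := by
  have hXY : ε * (X + Y) ≤ ε * (D * (K' + I) + B * I) := by gcongr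
  linarith [mul_le_mul_of_nonneg_right hsmall hI]

lemma exists_integral_snd_rpow_mul_fst_rpow_le (hs : 0 ≤ s) (hθ : 1 < θ) (hθp : θ ≤ p)
    (hβ : β * p = α + 2) (hα : α * θ = β + 2) (hβ0 : 0 < β) (hχ : IsCutoff s C χ) :
    ∃ (M : ℕ) (K : ℝ), M ≠ 0 ∧ ∀ u v ξ ζ : Pt N₁ N₂ → ℝ, IsC2LaneEmdenSol s p θ u v →
      IsLinearizedSupersol s p θ u v ξ ζ →
        ∫ z, v z ^ ((p - 1) / 2) * u z ^ ((θ + 3) / 2) * χ z ^ M ≤ K := by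
  obtain ⟨l, μ, hl, hμ, hlμ, hlμ_eq, hsum⟩ := exists_interpolation_exponents (hθ.trans_le hθp) hθ
  obtain ⟨n, hn⟩ : ∃ n : ℕ, ((2 * n + 4 : ℕ) : ℝ) * (l + μ) ≤ (2 * n + 2 : ℕ) := by
    obtain ⟨n, hn⟩ := Filter.eventually_atTop.1 (eventually_natCast_add_mul_le hlμ 2)
    exact ⟨n, hn (2 * n + 2) (by lia)⟩
  obtain ⟨B, hB0, hB⟩ := exists_integral_snd_rpow_mul_fst_rpow_le_mul hs hθ hθp hβ hα hβ0 hχ n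
  obtain ⟨D, hD0, hD⟩ :=
    exists_integral_snd_rpow_neg_one_mul_le_mul p hs hθ hχ (2 * n + 1).succ_ne_zero
  obtain ⟨ε, hε⟩ : ∃ ε, ε = 1 / (2 * (B + D + 1)) := ⟨_, rfl⟩
  have hε0 : 0 < ε := by rw [hε]; positivity
  have hsmall : ε * (B + D) ≤ 1 / 2 := by
    rw [hε, div_mul_eq_mul_div, div_le_div_iff₀ (by positivity) two_pos]
    linarith
  obtain ⟨K, hK⟩ := hχ.exists_integral_rpow_mul_rpow_le hl hμ hlμ hε0
    (2 * n + 1).succ_ne_zero (2 * n + 3).succ_ne_zero hn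
  refine ⟨2 * n + 4, B * (2 * (ε * (D * ∫ z, χ z ^ (2 * n + 2)) + K)), (2 * n + 3).succ_ne_zero,
    fun u v ξ ζ h hstab => ?_⟩
  have hY := hB u v ξ ζ h hstab
  have hpos (b a : ℝ) (z) : 0 < v z ^ b * u z ^ a :=
    mul_pos (Real.rpow_pos_of_pos (h.snd_pos z) b) (Real.rpow_pos_of_pos (h.fst_pos z) a)
  have hI := hK _ _ (h.continuous_snd_rpow_mul_fst_rpow (-1) (θ + 1 / θ))
    (h.continuous_snd_rpow_mul_fst_rpow ((p - 1) / 2) ((θ + 3) / 2)) (hpos _ _) (hpos _ _)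
  simp only [rpow_mul_rpow_mul_rpow_eq_sq (h.fst_pos _) (h.snd_pos _) hlμ_eq hsum] at hI
  have hI0 : 0 ≤ ∫ z, u z ^ 2 * χ z ^ (2 * n + 2) := integral_nonneg fun z =>
    mul_nonneg (sq_nonneg _) (pow_nonneg (hχ.nonneg z) _)
  exact hY.trans (mul_le_mul_of_nonneg_left
    (le_two_mul_of_interpolation hε0.le hsmall hI0 hY (hD u v h) hI) hB0)

lemma not_isLinearizedSupersol_of_one_lt_of_le (hs : 0 ≤ s) (hθ : 1 < θ) (hθp : θ ≤ p)
    (hβ : β * p = α + 2) (hα : α * θ = β + 2) (hβ0 : 0 < β)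
    (hdim : N₁ + (1 + s) * N₂ < 2 + α + β) (h : IsC2LaneEmdenSol s p θ u v) :
    ¬ IsLinearizedSupersol s p θ u v ξ ζ := by
  intro hstab
  obtain ⟨C, χ, hχ⟩ := exists_isCutoff (N₁ := N₁) (N₂ := N₂) hs
  obtain ⟨M, K, hM, hK⟩ := exists_integral_snd_rpow_mul_fst_rpow_le hs hθ hθp hβ hα hβ0 hχ
  have hβα : β ≤ α := by
    have heq : β * (p + 1) = α * (θ + 1) := by linarith
    have hle : β * (θ + 1) ≤ α * (θ + 1) := heq ▸ by gcongr
    exact le_of_mul_le_mul_right hle (by linarith)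
  have hdim' : N₁ + (1 + s) * N₂ < β * ((p - 1) / 2) + α * ((θ + 3) / 2) := by linarith
  obtain ⟨R, hR, hlt⟩ := hχ.exists_lt_integral_rescale_rpow_mul hs h.contDiff_snd.continuous
    h.contDiff_fst.continuous h.snd_pos h.fst_pos hdim' hM K
  have hR0 : 0 < R := by linarith
  exact hlt.not_ge (hK _ _ _ _ (h.rescale hβ hα hR0)
    (hstab.rescale h.fst_pos h.snd_pos hβ hα hR0))

end SuperlinearCase

/-! ### The Liouville theorem -/

lemma not_isLinearizedSupersol_of_subcritical {s p θ α β : ℝ} {u v ξ ζ : Pt N₁ N₂ → ℝ}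
    (hs : 0 ≤ s) (hp : 0 ≤ p) (hθ : 0 ≤ θ) (hpθ : 1 < p * θ) (hβ : β * p = α + 2)
    (hα : α * θ = β + 2) (hα0 : 0 < α) (hβ0 : 0 < β)
    (hdim : N₁ + (1 + s) * N₂ < 2 + α + β) (h : IsC2LaneEmdenSol s p θ u v) :
    ¬ IsLinearizedSupersol s p θ u v ξ ζ := by
  intro hstab
  have hpθ' : 1 < θ * p := mul_comm p θ ▸ hpθ
  have hdim' : N₁ + (1 + s) * N₂ < 2 + β + α := by linarith
  rcases le_or_gt p 1 with hp1 | hp1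
  · exact not_isLinearizedSupersol_of_le_one hs hp hp1 hθ hpθ hβ hα hdim h hstab
  rcases le_or_gt θ 1 with hθ1 | hθ1
  · exact not_isLinearizedSupersol_of_le_one hs hθ hθ1 hp hpθ' hα hβ hdim' h.swap hstab.swap
  rcases le_total θ p with hθp | hpθ_le
  · exact not_isLinearizedSupersol_of_one_lt_of_le hs hθ1 hθp hβ hα hβ0 hdim h hstab
  · exact not_isLinearizedSupersol_of_one_lt_of_le hs hp1 hpθ_le hα hβ hα0 hdim' h.swap hstab.swap

theorem no_stable_solution_general (N₁ N₂ : ℕ) (s p θ : ℝ) (hs : 0 ≤ s) (hp : 0 < p) (hθ : 0 < θ)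
    (hpθ : 1 < p * θ)
    (hdim : (N₁ : ℝ) + (1 + s) * N₂ <
      2 + 2 * (p + 1) / (p * θ - 1) + 2 * (θ + 1) / (p * θ - 1)) :
    ¬ ∃ u v ξ ζ : Pt N₁ N₂ → ℝ,
      IsC2LaneEmdenSol s p θ u v ∧ IsLinearizedSupersol s p θ u v ξ ζ := by
  rintro ⟨u, v, ξ, ζ, h, hstab⟩
  have hpos : 0 < p * θ - 1 := sub_pos.2 hpθ
  have hβ : 2 * (θ + 1) / (p * θ - 1) * p = 2 * (p + 1) / (p * θ - 1) + 2 := by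
    rw [div_mul_eq_mul_div, div_add' _ _ _ hpos.ne']
    congr 1
    ring
  have hα : 2 * (p + 1) / (p * θ - 1) * θ = 2 * (θ + 1) / (p * θ - 1) + 2 := by
    rw [div_mul_eq_mul_div, div_add' _ _ _ hpos.ne']
    congr 1
    ring
  exact not_isLinearizedSupersol_of_subcritical hs hp.le hθ.le hpθ hβ hα (by positivity)
    (by positivity) hdim h hstab

/-- For `s ≥ 0`, `p, θ > 0` with `pθ > 1`, if
`N_s = N₁ + (1+s)N₂ < 2 + α + β` where `α = 2(p+1)/(pθ-1)`, `β = 2(θ+1)/(pθ-1)`,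
then the Grushin Lane–Emden system has no smooth stable solution. -/
theorem no_stable_solution (N₁ N₂ : ℕ) (hN₁ : 1 ≤ N₁) (hN₂ : 1 ≤ N₂)
    (s p θ : ℝ) (hs : 0 ≤ s) (hp : 0 < p) (hθ : 0 < θ) (hpθ : 1 < p * θ)
    (hdim : (N₁ : ℝ) + (1 + s) * N₂ <
      2 + 2 * (p + 1) / (p * θ - 1) + 2 * (θ + 1) / (p * θ - 1)) :
    ¬ ∃ u v : Pt N₁ N₂ → ℝ, IsLaneEmdenSol s p θ u v ∧ IsStable s p θ u v := by
  rintro ⟨u, v, hsol, hstable⟩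
  obtain ⟨ξ, ζ, h⟩ := hstable.exists_isLinearizedSupersol
  exact no_stable_solution_general N₁ N₂ s p θ hs hp hθ hpθ hdim
    ⟨u, v, ξ, ζ, hsol.isC2LaneEmdenSol, h⟩

end
end

section
/- Let 0 < p < 1 and θ > 0, and let (u,v) be a smooth stable solution of the Grushin Lane–Emden system on ℝ^N. Then for every γ ∈ C_c^∞(ℝ^N) one has θp ∫_{ℝ^N} u^{θ−1} γ² dxdy ≤ ∫_{ℝ^N} v^{1−p} |Δ_s γ|² dxdy. -/
open MeasureTheory Real

noncomputable section

variable {N₁ N₂ : ℕ}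

/-!
Let `L = Δ_s` and let `ξ, ζ > 0` satisfy `a ζ ≤ -L ξ` and `b ξ ≤ -L ζ`; stability provides such
functions with `a = p v^{p-1}` and `b = θ u^{θ-1}`. Write `γ = ψ ξ`. Each coefficient of `L` is
constant along the direction it weights, so `L` is symmetric, and testing the second inequality
with `ψ² ξ` gives `∫ b γ² ≤ -∫ ζ L(ψ² ξ)`. The product rule yields
`L(ψ² ξ) = 2 ψ L(ψ ξ) - ψ² L ξ + 2 ξ |∇_s ψ|²`; dropping the last term and using the first
inequality, `-ζ L(ψ² ξ) ≤ -2 ζ ψ L γ - a ζ² ψ² ≤ |L γ|² / a`.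
-/

section DirectionalDerivatives

variable {E : Type*} [NormedAddCommGroup E] [NormedSpace ℝ E]

/-- The second derivative of `w` at `z` in the direction `e`. -/
def secondDirDeriv (e : E) (w : E → ℝ) (z : E) : ℝ := fderiv ℝ (fun y => fderiv ℝ w y e) z e

lemma contDiff_fderiv_apply_const {m n : WithTop ℕ∞} {w : E → ℝ} (hw : ContDiff ℝ n w)
    (hmn : m + 1 ≤ n) (e : E) : ContDiff ℝ m (fun z => fderiv ℝ w z e) :=
  (hw.fderiv_right hmn).clm_apply contDiff_const

lemma continuous_secondDirDeriv {w : E → ℝ} (hw : ContDiff ℝ 2 w) (e : E) :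
    Continuous (secondDirDeriv e w) :=
  (contDiff_fderiv_apply_const (m := 0)
    (contDiff_fderiv_apply_const (m := 1) hw (by norm_num) e) (by norm_num) e).continuous

lemma hasCompactSupport_secondDirDeriv {w : E → ℝ} (hw : HasCompactSupport w) (e : E) :
    HasCompactSupport (secondDirDeriv e w) :=
  (hw.fderiv_apply ℝ e).fderiv_apply ℝ e

lemma fderiv_mul_apply {f g : E → ℝ} {z : E} (hf : DifferentiableAt ℝ f z)
    (hg : DifferentiableAt ℝ g z) (e : E) :
    fderiv ℝ (fun y => f y * g y) z e = fderiv ℝ f z e * g z + f z * fderiv ℝ g z e := by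
  rw [fderiv_fun_mul hf hg]
  simp only [add_apply, smul_apply, smul_eq_mul]
  ring

lemma secondDirDeriv_mul {f g : E → ℝ} (hf : ContDiff ℝ 2 f) (hg : ContDiff ℝ 2 g) (e z : E) :
    secondDirDeriv e (fun y => f y * g y) z =
      secondDirDeriv e f z * g z + 2 * (fderiv ℝ f z e * fderiv ℝ g z e)
        + f z * secondDirDeriv e g z := by
  have hf₀ : Differentiable ℝ f := hf.differentiable two_ne_zero
  have hg₀ : Differentiable ℝ g := hg.differentiable two_ne_zero
  have hf₁ : Differentiable ℝ (fun y => fderiv ℝ f y e) :=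
    (contDiff_fderiv_apply_const (m := 1) hf (by norm_num) e).differentiable one_ne_zero
  have hg₁ : Differentiable ℝ (fun y => fderiv ℝ g y e) :=
    (contDiff_fderiv_apply_const (m := 1) hg (by norm_num) e).differentiable one_ne_zero
  simp only [secondDirDeriv, fderiv_mul_apply (hf₀ _) (hg₀ _)]
  rw [fderiv_fun_add ((hf₁ z).fun_mul (hg₀ z)) ((hf₀ z).fun_mul (hg₁ z)), add_apply,
    fderiv_mul_apply (hf₁ z) (hg₀ z), fderiv_mul_apply (hf₀ z) (hg₁ z)]
  ring

lemma secondDirDeriv_mul_mul_self {ψ ξ : E → ℝ} (hψ : ContDiff ℝ 2 ψ) (hξ : ContDiff ℝ 2 ξ)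
    (e z : E) :
    secondDirDeriv e (fun y => ψ y * (ψ y * ξ y)) z =
      2 * ψ z * secondDirDeriv e (fun y => ψ y * ξ y) z - ψ z ^ 2 * secondDirDeriv e ξ z
        + 2 * ξ z * fderiv ℝ ψ z e ^ 2 := by
  rw [secondDirDeriv_mul hψ (hψ.mul hξ), secondDirDeriv_mul hψ hξ,
    fderiv_mul_apply (hψ.differentiable two_ne_zero z) (hξ.differentiable two_ne_zero z)]
  ring

variable [MeasurableSpace E] [BorelSpace E] [FiniteDimensional ℝ E]
  {μ : Measure E} [μ.IsAddHaarMeasure] {e : E} {a f g : E → ℝ}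

/- The weight `a` need not be differentiable, so the derivative of `a * f` is only a line
derivative. -/
lemma integral_mul_fderiv_eq_neg_of_weight (ha : Continuous a)
    (hae : ∀ z (t : ℝ), a (z + t • e) = a z) (hf : ContDiff ℝ 1 f) (hg : ContDiff ℝ 1 g)
    (hgc : HasCompactSupport g) :
    ∫ z, a z * f z * fderiv ℝ g z e ∂μ = -∫ z, a z * fderiv ℝ f z e * g z ∂μ := by
  have hf' := (contDiff_fderiv_apply_const (m := 0) hf (by norm_num) e).continuous
  have hg' := (contDiff_fderiv_apply_const (m := 0) hg (by norm_num) e).continuous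
  have hasLineDeriv_weight_mul (z : E) :
      HasLineDerivAt ℝ (fun y => a y * f y) (a z * fderiv ℝ f z e) z e := by
    have hfz : HasLineDerivAt ℝ f (fderiv ℝ f z e) z e :=
      (hf.differentiable one_ne_zero z).hasFDerivAt.hasLineDerivAt e
    simpa only [HasLineDerivAt, hae] using HasDerivAt.const_mul (a z) hfz
  exact integral_bilinear_hasLineDerivAt_right_eq_neg_left_of_integrable
    (B := ContinuousLinearMap.mul ℝ ℝ)
    (((ha.mul hf').mul hg.continuous).integrable_of_hasCompactSupport hgc.mul_left)
    (((ha.mul hf.continuous).mul hg').integrable_of_hasCompactSupport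
      (hgc.fderiv_apply ℝ e).mul_left)
    (((ha.mul hf.continuous).mul hg.continuous).integrable_of_hasCompactSupport hgc.mul_left)
    (fun z _ => hasLineDeriv_weight_mul z)
    (fun z _ => (hg.differentiable one_ne_zero z).hasFDerivAt.hasLineDerivAt e)

lemma integral_weight_mul_secondDirDeriv_comm (ha : Continuous a)
    (hae : ∀ z (t : ℝ), a (z + t • e) = a z) (hf : ContDiff ℝ 2 f) (hg : ContDiff ℝ 2 g)
    (hgc : HasCompactSupport g) :
    ∫ z, a z * secondDirDeriv e f z * g z ∂μ = ∫ z, f z * (a z * secondDirDeriv e g z) ∂μ := by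
  have hf₁ : ContDiff ℝ 1 (fun z => fderiv ℝ f z e) :=
    contDiff_fderiv_apply_const hf (by norm_num) e
  have hg₁ : ContDiff ℝ 1 (fun z => fderiv ℝ g z e) :=
    contDiff_fderiv_apply_const hg (by norm_num) e
  calc ∫ z, a z * secondDirDeriv e f z * g z ∂μ
      = -∫ z, a z * fderiv ℝ f z e * fderiv ℝ g z e ∂μ := by
        rw [integral_mul_fderiv_eq_neg_of_weight ha hae hf₁ (hg.of_le one_le_two) hgc, neg_neg]
        rfl
    _ = ∫ z, a z * f z * secondDirDeriv e g z ∂μ :=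
        (integral_mul_fderiv_eq_neg_of_weight ha hae (hf.of_le one_le_two) hg₁
          (hgc.fderiv_apply ℝ e)).symm
    _ = ∫ z, f z * (a z * secondDirDeriv e g z) ∂μ := by
        simp only [mul_left_comm, mul_assoc]

end DirectionalDerivatives

/-- The data of a degenerate elliptic operator `∑ i, aᵢ ∂²/∂eᵢ²`, whose coefficient `aᵢ = weight i`
is constant along `eᵢ = dir i`; this puts the operator in divergence form. -/
structure DegenerateLaplacian (ι E : Type*) [NormedAddCommGroup E] [NormedSpace ℝ E] where
  dir : ι → E
  weight : ι → E → ℝ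
  continuous_weight (i : ι) : Continuous (weight i)
  weight_nonneg (i : ι) (z : E) : 0 ≤ weight i z
  weight_add_smul_dir (i : ι) (z : E) (t : ℝ) : weight i (z + t • dir i) = weight i z

namespace DegenerateLaplacian

variable {ι E : Type*} [Fintype ι] [NormedAddCommGroup E] [NormedSpace ℝ E]
  (L : DegenerateLaplacian ι E)

/-- The operator `∑ i, aᵢ ∂²/∂eᵢ²` applied to the function `w`. -/
def lap (w : E → ℝ) (z : E) : ℝ := ∑ i, L.weight i z * secondDirDeriv (L.dir i) w z

lemma continuous_lap {w : E → ℝ} (hw : ContDiff ℝ 2 w) : Continuous (L.lap w) :=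
  continuous_finsetSum _ fun i _ =>
    (L.continuous_weight i).mul (continuous_secondDirDeriv hw (L.dir i))

lemma hasCompactSupport_lap {w : E → ℝ} (hw : HasCompactSupport w) :
    HasCompactSupport (L.lap w) := by
  have hsum : HasCompactSupport
      (∑ i, fun z => L.weight i z * secondDirDeriv (L.dir i) w z) :=
    HasCompactSupport.finset_sum fun i _ =>
      (hasCompactSupport_secondDirDeriv hw (L.dir i)).mul_left
  rw [Finset.sum_fn] at hsum
  exact hsum

lemma le_lap_mul_mul_self {ψ ξ : E → ℝ} (hψ : ContDiff ℝ 2 ψ) (hξ : ContDiff ℝ 2 ξ) {z : E}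
    (hξ₀ : 0 ≤ ξ z) :
    2 * ψ z * L.lap (fun y => ψ y * ξ y) z - ψ z ^ 2 * L.lap ξ z ≤
      L.lap (fun y => ψ y * (ψ y * ξ y)) z := by
  simp only [lap, Finset.mul_sum, ← Finset.sum_sub_distrib]
  refine Finset.sum_le_sum fun i _ => ?_
  have hgrad : 0 ≤ L.weight i z * (2 * ξ z * fderiv ℝ ψ z (L.dir i) ^ 2) :=
    mul_nonneg (L.weight_nonneg i z) (by positivity)
  rw [secondDirDeriv_mul_mul_self hψ hξ]
  linarith

lemma mul_sq_add_lap_mul_sub_le {ψ ξ ζ : E → ℝ} {a b : ℝ} {z : E} (hψ : ContDiff ℝ 2 ψ)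
    (hξ : ContDiff ℝ 2 ξ) (ha : 0 < a) (hξ₀ : 0 ≤ ξ z) (hζ₀ : 0 ≤ ζ z)
    (hLξ : a * ζ z ≤ -L.lap ξ z) (hLζ : b * ξ z ≤ -L.lap ζ z) :
    b * (ψ z * ξ z) ^ 2 + (L.lap ζ z * (ψ z * (ψ z * ξ z))
        - ζ z * L.lap (fun y => ψ y * (ψ y * ξ y)) z) ≤
      L.lap (fun y => ψ y * ξ y) z ^ 2 / a := by
  set Lγ := L.lap (fun y => ψ y * ξ y) z
  have hLφ : ζ z * (2 * ψ z * Lγ + ψ z ^ 2 * (a * ζ z)) ≤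
      ζ z * L.lap (fun y => ψ y * (ψ y * ξ y)) z := by
    refine mul_le_mul_of_nonneg_left ?_ hζ₀
    linarith [L.le_lap_mul_mul_self hψ hξ hξ₀, mul_le_mul_of_nonneg_left hLξ (sq_nonneg (ψ z))]
  have hφ : b * ξ z * (ψ z ^ 2 * ξ z) ≤ -L.lap ζ z * (ψ z ^ 2 * ξ z) :=
    mul_le_mul_of_nonneg_right hLζ (by positivity)
  have hsq : Lγ ^ 2 / a + 2 * ζ z * ψ z * Lγ + a * (ζ z * ψ z) ^ 2 =
      (Lγ + a * (ζ z * ψ z)) ^ 2 / a := by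
    field_simp
    ring
  have hsq_nonneg : 0 ≤ (Lγ + a * (ζ z * ψ z)) ^ 2 / a := by positivity
  linarith

variable [MeasurableSpace E] [BorelSpace E] [FiniteDimensional ℝ E]
  {μ : Measure E} [μ.IsAddHaarMeasure]

lemma integral_lap_mul_comm {f g : E → ℝ} (hf : ContDiff ℝ 2 f) (hg : ContDiff ℝ 2 g)
    (hgc : HasCompactSupport g) :
    ∫ z, L.lap f z * g z ∂μ = ∫ z, f z * L.lap g z ∂μ := by
  simp only [lap, Finset.sum_mul, Finset.mul_sum]
  rw [integral_finsetSum, integral_finsetSum]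
  · exact Finset.sum_congr rfl fun i _ => integral_weight_mul_secondDirDeriv_comm
      (L.continuous_weight i) (L.weight_add_smul_dir i) hf hg hgc
  · exact fun i _ => (hf.continuous.mul ((L.continuous_weight i).mul
      (continuous_secondDirDeriv hg _))).integrable_of_hasCompactSupport
        (hasCompactSupport_secondDirDeriv hgc _).mul_left.mul_left
  · exact fun i _ => (((L.continuous_weight i).mul (continuous_secondDirDeriv hf _)).mul
      hg.continuous).integrable_of_hasCompactSupport hgc.mul_left

theorem integral_mul_sq_le_integral_lap_sq_div {a b ξ ζ γ : E → ℝ} (ha : Continuous a)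
    (hb : Continuous b) (hξ : ContDiff ℝ 2 ξ) (hζ : ContDiff ℝ 2 ζ) (ha₀ : ∀ z, 0 < a z)
    (hξ₀ : ∀ z, 0 < ξ z) (hζ₀ : ∀ z, 0 ≤ ζ z) (hLξ : ∀ z, a z * ζ z ≤ -L.lap ξ z)
    (hLζ : ∀ z, b z * ξ z ≤ -L.lap ζ z) (hγ : ContDiff ℝ 2 γ) (hγc : HasCompactSupport γ) :
    ∫ z, b z * γ z ^ 2 ∂μ ≤ ∫ z, L.lap γ z ^ 2 / a z ∂μ := by
  obtain ⟨ψ, hψ, rfl⟩ : ∃ ψ : E → ℝ, ContDiff ℝ 2 ψ ∧ γ = fun z => ψ z * ξ z :=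
    ⟨fun z => γ z / ξ z, hγ.div hξ fun z => (hξ₀ z).ne',
      funext fun z => (div_mul_cancel₀ _ (hξ₀ z).ne').symm⟩
  set φ : E → ℝ := fun z => ψ z * (ψ z * ξ z)
  have hφ : ContDiff ℝ 2 φ := hψ.mul hγ
  have hφc : HasCompactSupport φ := hγc.mul_left
  have hint_b : Integrable (fun z => b z * (ψ z * ξ z) ^ 2) μ :=
    (hb.mul (hγ.continuous.pow 2)).integrable_of_hasCompactSupport
      (hγc.comp_left (zero_pow two_ne_zero)).mul_left
  have hint_a : Integrable (fun z => L.lap (fun y => ψ y * ξ y) z ^ 2 / a z) μ :=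
    (((L.continuous_lap hγ).pow 2).div ha fun z => (ha₀ z).ne').integrable_of_hasCompactSupport
      (by
        simp only [div_eq_mul_inv]
        exact ((L.hasCompactSupport_lap hγc).comp_left (zero_pow two_ne_zero)).mul_right)
  have hint_ζφ : Integrable (fun z => L.lap ζ z * φ z) μ :=
    ((L.continuous_lap hζ).mul hφ.continuous).integrable_of_hasCompactSupport hφc.mul_left
  have hint_ζLφ : Integrable (fun z => ζ z * L.lap φ z) μ :=
    (hζ.continuous.mul (L.continuous_lap hφ)).integrable_of_hasCompactSupport
      (L.hasCompactSupport_lap hφc).mul_left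
  have hint_green : Integrable (fun z => L.lap ζ z * φ z - ζ z * L.lap φ z) μ :=
    hint_ζφ.sub hint_ζLφ
  calc ∫ z, b z * (ψ z * ξ z) ^ 2 ∂μ
      = ∫ z, b z * (ψ z * ξ z) ^ 2 + (L.lap ζ z * φ z - ζ z * L.lap φ z) ∂μ := by
        rw [integral_add hint_b hint_green, integral_sub hint_ζφ hint_ζLφ,
          L.integral_lap_mul_comm hζ hφ hφc, sub_self, add_zero]
    _ ≤ ∫ z, L.lap (fun y => ψ y * ξ y) z ^ 2 / a z ∂μ :=
        integral_mono (hint_b.add hint_green) hint_a fun z =>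
          L.mul_sq_add_lap_mul_sub_le hψ hξ (ha₀ z) (hξ₀ z).le (hζ₀ z) (hLξ z) (hLζ z)

end DegenerateLaplacian

lemma pX_eq_fderiv (i : Fin N₁) {w : Pt N₁ N₂ → ℝ} (hw : Differentiable ℝ w) :
    pX i w = fun z => fderiv ℝ w z (Pi.single i 1, 0) := by
  funext z
  have hline : HasDerivAt (fun t => ((Function.update z.1 i t, z.2) : Pt N₁ N₂))
      (Pi.single i 1, 0) (z.1 i) :=
    (hasDerivAt_update z.1 i (z.1 i)).prodMk (hasDerivAt_const _ _)
  have hwz : HasFDerivAt w (fderiv ℝ w z) (Function.update z.1 i (z.1 i), z.2) := by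
    simpa only [Function.update_eq_self] using (hw z).hasFDerivAt
  exact (hwz.comp_hasDerivAt (z.1 i) hline).deriv

lemma pY_eq_fderiv (j : Fin N₂) {w : Pt N₁ N₂ → ℝ} (hw : Differentiable ℝ w) :
    pY j w = fun z => fderiv ℝ w z (0, Pi.single j 1) := by
  funext z
  have hline : HasDerivAt (fun t => ((z.1, Function.update z.2 j t) : Pt N₁ N₂))
      (0, Pi.single j 1) (z.2 j) :=
    (hasDerivAt_const _ _).prodMk (hasDerivAt_update z.2 j (z.2 j))
  have hwz : HasFDerivAt w (fderiv ℝ w z) (z.1, Function.update z.2 j (z.2 j)) := by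
    simpa only [Function.update_eq_self] using (hw z).hasFDerivAt
  exact (hwz.comp_hasDerivAt (z.2 j) hline).deriv

/-- The Grushin operator `Δ_s` as a degenerate Laplacian: weight `1` on the coordinate directions of
`x`, weight `|x|^{2s}` on those of `y`. -/
def grushinOperator (N₁ N₂ : ℕ) {s : ℝ} (hs : 0 ≤ s) :
    DegenerateLaplacian (Fin N₁ ⊕ Fin N₂) (Pt N₁ N₂) where
  dir := Sum.elim (fun i => (Pi.single i 1, 0)) (fun j => (0, Pi.single j 1))
  weight := Sum.elim (fun _ _ => 1) (fun _ z => enorm' z.1 ^ (2 * s))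
  continuous_weight := by
    have hnorm : Continuous fun z : Pt N₁ N₂ => enorm' z.1 := by
      unfold enorm'
      fun_prop
    rintro (_ | _)
    · exact continuous_const
    · exact hnorm.rpow_const fun _ => Or.inr (by positivity)
  weight_nonneg := by
    rintro (_ | _) z
    · exact zero_le_one
    · exact Real.rpow_nonneg (Real.sqrt_nonneg _) _
  weight_add_smul_dir := by
    rintro (_ | _) z t <;>
      simp only [Sum.elim_inl, Sum.elim_inr, Prod.fst_add, Prod.smul_fst, smul_zero, add_zero]

instance : (volume : Measure (Pt N₁ N₂)).IsAddHaarMeasure :=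
  Measure.prod.instIsAddHaarMeasure volume volume

lemma grushinLap_eq_lap {s : ℝ} (hs : 0 ≤ s) {w : Pt N₁ N₂ → ℝ} (hw : ContDiff ℝ 2 w) :
    grushinLap s w = (grushinOperator N₁ N₂ hs).lap w := by
  have hw₀ : Differentiable ℝ w := hw.differentiable two_ne_zero
  have hw₁ (e : Pt N₁ N₂) : Differentiable ℝ (fun z => fderiv ℝ w z e) :=
    (contDiff_fderiv_apply_const (m := 1) hw (by norm_num) e).differentiable one_ne_zero
  funext z
  simp only [grushinLap, lapX, lapY, pX_eq_fderiv _ hw₀, pX_eq_fderiv _ (hw₁ _),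
    pY_eq_fderiv _ hw₀, pY_eq_fderiv _ (hw₁ _), DegenerateLaplacian.lap, grushinOperator,
    secondDirDeriv, Fintype.sum_sum_type, Sum.elim_inl, Sum.elim_inr, one_mul, Finset.mul_sum]

theorem stability_inequality_general {s p θ : ℝ} (hs : 0 ≤ s) (hp : 0 < p) {u v : Pt N₁ N₂ → ℝ}
    (hu : Continuous u) (hv : Continuous v) (hu₀ : ∀ z, 0 < u z) (hv₀ : ∀ z, 0 < v z)
    (hstab : IsStable s p θ u v) {γ : Pt N₁ N₂ → ℝ} (hγ : ContDiff ℝ 2 γ)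
    (hγc : HasCompactSupport γ) :
    θ * p * ∫ z, u z ^ (θ - 1) * γ z ^ 2 ≤ ∫ z, v z ^ (1 - p) * |grushinLap s γ z| ^ 2 := by
  obtain ⟨η, ξ, ζ, hη, hξ_smooth, hζ_smooth, hξ₀, hζ₀, hLξ, hLζ⟩ := hstab
  have hξ : ContDiff ℝ 2 ξ := contDiff_infty.mp hξ_smooth 2
  have hζ : ContDiff ℝ 2 ζ := contDiff_infty.mp hζ_smooth 2
  have hsuper_ξ (z : Pt N₁ N₂) :
      p * v z ^ (p - 1) * ζ z ≤ -(grushinOperator N₁ N₂ hs).lap ξ z := by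
    rw [← grushinLap_eq_lap hs hξ, hLξ]
    exact le_add_of_nonneg_right (mul_nonneg hη (hξ₀ z).le)
  have hsuper_ζ (z : Pt N₁ N₂) :
      θ * u z ^ (θ - 1) * ξ z ≤ -(grushinOperator N₁ N₂ hs).lap ζ z := by
    rw [← grushinLap_eq_lap hs hζ, hLζ]
    exact le_add_of_nonneg_right (mul_nonneg hη (hζ₀ z).le)
  have hineq := (grushinOperator N₁ N₂ hs).integral_mul_sq_le_integral_lap_sq_div
    (μ := volume) (a := fun z => p * v z ^ (p - 1)) (b := fun z => θ * u z ^ (θ - 1))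
    (continuous_const.mul (hv.rpow_const fun z => Or.inl (hv₀ z).ne'))
    (continuous_const.mul (hu.rpow_const fun z => Or.inl (hu₀ z).ne')) hξ hζ
    (fun z => mul_pos hp (Real.rpow_pos_of_pos (hv₀ z) _)) hξ₀ (fun z => (hζ₀ z).le)
    hsuper_ξ hsuper_ζ hγ hγc
  have hweight (z : Pt N₁ N₂) (t : ℝ) :
      t ^ 2 / (p * v z ^ (p - 1)) = p⁻¹ * (v z ^ (1 - p) * |t| ^ 2) := by
    rw [← neg_sub p 1, Real.rpow_neg (hv₀ z).le, sq_abs]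
    field_simp
  simp only [← grushinLap_eq_lap hs hγ, hweight, mul_assoc, integral_const_mul] at hineq
  rw [mul_comm θ p, mul_assoc]
  exact (le_inv_mul_iff₀ hp).mp hineq

/-- stability inequality
`θp ∫ u^{θ-1} γ² ≤ ∫ v^{1-p} |Δ_s γ|²` for all `γ ∈ C_c^∞(ℝ^N)`. -/
theorem stability_inequality (N₁ N₂ : ℕ) (hN₁ : 1 ≤ N₁) (hN₂ : 1 ≤ N₂)
    (s p θ : ℝ) (hs : 0 ≤ s) (hp0 : 0 < p) (hp1 : p < 1) (hθ : 0 < θ)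
    (u v : Pt N₁ N₂ → ℝ) (hsol : IsLaneEmdenSol s p θ u v) (hstab : IsStable s p θ u v)
    (γ : Pt N₁ N₂ → ℝ) (hγ : ContDiff ℝ (⊤ : ℕ∞) γ) (hγc : HasCompactSupport γ) :
    θ * p * ∫ z, (u z) ^ (θ - 1) * (γ z) ^ 2 ≤
      ∫ z, (v z) ^ (1 - p) * |grushinLap s γ z| ^ 2 := by
  obtain ⟨hu, hv, hu₀, hv₀, -, -⟩ := hsol
  exact stability_inequality_general hs hp0 hu.continuous hv.continuous hu₀ hv₀ hstab
    (contDiff_infty.mp hγ 2) hγc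

end
end

section
/- Let p, θ > 0 and let (u,v) be a smooth stable solution of the Grushin Lane–Emden system on ℝ^N. Then there exist smooth positive functions φ, χ on ℝ^N satisfying −Δ_s φ = p v^{p−1} χ and −Δ_s χ = θ u^{θ−1} φ on all of ℝ^N. -/
open MeasureTheory Real

noncomputable section

variable {N₁ N₂ : ℕ}

/-!
The stability system can only hold with `η = 0`, so the functions witnessing stability already
solve the limiting system. Indeed `-Δ_s ξ ≥ η ξ` with `ξ > 0`, and on a large box the product of
cosines `P` that vanishes on the boundary has arbitrarily small `-Δ_s P / P`, provided the box is
taken long enough in `y` to beat the weight `|x|^{2s}`. At a maximum of `P / ξ` over the box, `ξ`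
is touched from below by a multiple of `P`, whence `η ≤ -Δ_s ξ / ξ ≤ -Δ_s P / P` there.
-/

section SecondDerivative

open Topology

theorem iteratedDeriv_two_nonpos_of_isLocalMax {f : ℝ → ℝ} {t : ℝ} (hf : ContinuousAt f t)
    (hmax : IsLocalMax f t) : iteratedDeriv 2 f t ≤ 0 := by
  rw [iteratedDeriv_succ, iteratedDeriv_one]
  by_contra! hpos
  -- Otherwise `t` is also a local minimum, so `f` is locally constant.
  have hmin : IsLocalMin f t := isLocalMin_of_deriv_deriv_pos hpos hmax.deriv_eq_zero hf
  have hconst : f =ᶠ[𝓝 t] fun _ => f t := by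
    filter_upwards [hmin, hmax] with x hx₁ hx₂ using le_antisymm hx₂ hx₁
  simp [hconst.deriv.deriv_eq] at hpos

theorem iteratedDeriv_two_mul_le_of_isLocalMax_div {f g : ℝ → ℝ} {t : ℝ}
    (hf : ContDiffAt ℝ 2 f t) (hg : ContDiffAt ℝ 2 g t) (hgt : 0 < g t)
    (hmax : IsLocalMax (fun x => f x / g x) t) :
    iteratedDeriv 2 f t * g t ≤ f t * iteratedDeriv 2 g t := by
  set c := f t / g t with hc
  have hcg : ContDiffAt ℝ 2 (fun x => c * g x) t := contDiffAt_const.mul hg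
  have hdiff_max : IsLocalMax (f - fun x => c * g x) t := by
    filter_upwards [hmax, hg.continuousAt.eventually (lt_mem_nhds hgt)] with x hx hgx
    have hfx : f x ≤ c * g x := (div_le_iff₀ hgx).1 hx
    have hft : f t = c * g t := (div_mul_cancel₀ _ hgt.ne').symm
    simpa [← hft] using hfx
  have hdiff : iteratedDeriv 2 f t - c * iteratedDeriv 2 g t ≤ 0 := by
    rw [← iteratedDeriv_const_mul c hg, ← iteratedDeriv_sub hf hcg]
    exact iteratedDeriv_two_nonpos_of_isLocalMax (hf.sub hcg).continuousAt hdiff_max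
  calc iteratedDeriv 2 f t * g t
      ≤ c * iteratedDeriv 2 g t * g t := by gcongr; linarith
    _ = f t * iteratedDeriv 2 g t := by rw [hc]; field_simp

theorem iteratedDeriv_two_const_mul_cos_const_mul (A c t : ℝ) :
    iteratedDeriv 2 (fun x => A * cos (c * x)) t = -c ^ 2 * (A * cos (c * t)) := by
  rw [iteratedDeriv_const_mul_field, iteratedDeriv_comp_const_mul contDiff_cos,
    iteratedDeriv_even_cos 1]
  simp only [pow_one, Pi.mul_apply, Pi.neg_apply, Pi.one_apply]
  ring

end SecondDerivative

section Box

open Topology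

theorem eventually_update_mem_Icc {ι α : Type*} [DecidableEq ι] [LinearOrder α]
    [TopologicalSpace α] [OrderClosedTopology α] {a b x : ι → α} (hx : x ∈ Set.Icc a b) {i : ι}
    (hi : x i ∈ Set.Ioo (a i) (b i)) : ∀ᶠ t in 𝓝 (x i), Function.update x i t ∈ Set.Icc a b := by
  filter_upwards [Icc_mem_nhds hi.1 hi.2] with t ht
  exact ⟨le_update_iff.2 ⟨ht.1, fun k _ => hx.1 k⟩, update_le_iff.2 ⟨ht.2, fun k _ => hx.2 k⟩⟩

variable {ι : Type*} [Fintype ι]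

/-- The first Dirichlet eigenfunction of the Laplacian on the box `∏ k, [-r k, r k]`, normalized
to be `1` at the centre. -/
def boxEigenfunction (r x : ι → ℝ) : ℝ := ∏ k, cos (π / (2 * r k) * x k)

theorem continuous_boxEigenfunction (r : ι → ℝ) : Continuous (boxEigenfunction r) := by
  unfold boxEigenfunction
  fun_prop

@[simp]
theorem boxEigenfunction_zero (r : ι → ℝ) : boxEigenfunction r 0 = 1 := by
  simp [boxEigenfunction]

theorem mem_Ioo_of_boxEigenfunction_ne_zero {r x : ι → ℝ} (hr : ∀ k, 0 < r k)
    (hx : x ∈ Set.Icc (-r) r) (hne : boxEigenfunction r x ≠ 0) (k : ι) :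
    x k ∈ Set.Ioo (-r k) (r k) := by
  have hcos : cos (π / (2 * r k) * x k) ≠ 0 := Finset.prod_ne_zero_iff.1 hne k (Finset.mem_univ k)
  have hface : π / (2 * r k) * r k = π / 2 := by have := hr k; field_simp
  refine ⟨(hx.1 k).lt_of_ne fun h => hcos ?_, (hx.2 k).lt_of_ne fun h => hcos ?_⟩
  · rw [← h, Pi.neg_apply, mul_neg, hface, cos_neg, cos_pi_div_two]
  · rw [h, hface, cos_pi_div_two]

variable [DecidableEq ι]

theorem boxEigenfunction_update (r x : ι → ℝ) (i : ι) (t : ℝ) :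
    boxEigenfunction r (Function.update x i t) =
      (∏ k ∈ Finset.univ \ {i}, cos (π / (2 * r k) * x k)) * cos (π / (2 * r i) * t) := by
  simp only [boxEigenfunction, Function.apply_update fun k y => cos (π / (2 * r k) * y)]
  rw [Finset.prod_update_of_mem (Finset.mem_univ i), mul_comm]

theorem iteratedDeriv_two_boxEigenfunction_update (r x : ι → ℝ) (i : ι) :
    iteratedDeriv 2 (fun t => boxEigenfunction r (Function.update x i t)) (x i) =
      -(π / (2 * r i)) ^ 2 * boxEigenfunction r x := by
  simp only [boxEigenfunction_update, iteratedDeriv_two_const_mul_cos_const_mul]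
  rw [← boxEigenfunction_update, Function.update_eq_self]

theorem exists_mem_Icc_forall_le_iteratedDeriv_two_update {r : ι → ℝ} (hr : ∀ k, 0 < r k)
    {f : (ι → ℝ) → ℝ} (hf : ContDiff ℝ 2 f) (hpos : ∀ x ∈ Set.Icc (-r) r, 0 < f x) :
    ∃ x ∈ Set.Icc (-r) r, ∀ i,
      -(π / (2 * r i)) ^ 2 * f x ≤
        iteratedDeriv 2 (fun t => f (Function.update x i t)) (x i) := by
  have hzero : (0 : ι → ℝ) ∈ Set.Icc (-r) r :=
    ⟨fun k => neg_nonpos.2 (hr k).le, fun k => (hr k).le⟩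
  obtain ⟨x, hx, hmax : IsMaxOn (fun y => boxEigenfunction r y / f y) _ x⟩ :=
    isCompact_Icc.exists_isMaxOn ⟨0, hzero⟩
      ((continuous_boxEigenfunction r).continuousOn.div hf.continuous.continuousOn
        fun y hy => (hpos y hy).ne')
  have heig : 0 < boxEigenfunction r x := by
    have h : 0 < boxEigenfunction r x / f x :=
      lt_of_lt_of_le (by simpa using hpos 0 hzero) (hmax hzero)
    exact (div_pos_iff_of_pos_right (hpos x hx)).1 h
  refine ⟨x, hx, fun i => ?_⟩
  have hmax_line : IsLocalMax (fun t => boxEigenfunction r (Function.update x i t) /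
      f (Function.update x i t)) (x i) := by
    filter_upwards [eventually_update_mem_Icc hx
      (mem_Ioo_of_boxEigenfunction_ne_zero hr hx heig.ne' i)] with t ht
    simpa using hmax ht
  have heig_smooth : ContDiff ℝ 2 fun t => boxEigenfunction r (Function.update x i t) := by
    simp only [boxEigenfunction_update]
    fun_prop
  have hf_smooth : ContDiff ℝ 2 fun t => f (Function.update x i t) :=
    hf.comp (contDiff_update 2 x i)
  have hcompare := iteratedDeriv_two_mul_le_of_isLocalMax_div heig_smooth.contDiffAt
    hf_smooth.contDiffAt (by simpa using hpos x hx) hmax_line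
  rw [iteratedDeriv_two_boxEigenfunction_update, Function.update_eq_self] at hcompare
  refine le_of_mul_le_mul_left ?_ heig
  linarith

end Box

section Grushin

open Filter Topology

theorem pX_pX (i : Fin N₁) (w : Pt N₁ N₂ → ℝ) (z : Pt N₁ N₂) :
    pX i (pX i w) z = iteratedDeriv 2 (fun t => w (Function.update z.1 i t, z.2)) (z.1 i) := by
  simp [pX, iteratedDeriv_succ]

theorem pY_pY (j : Fin N₂) (w : Pt N₁ N₂ → ℝ) (z : Pt N₁ N₂) :
    pY j (pY j w) z = iteratedDeriv 2 (fun t => w (z.1, Function.update z.2 j t)) (z.2 j) := by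
  simp [pY, iteratedDeriv_succ]

theorem exists_le_lapX_and_le_lapY {ξ : Pt N₁ N₂ → ℝ} (hξ : ContDiff ℝ 2 ξ) (hpos : ∀ z, 0 < ξ z)
    {R S : ℝ} (hR : 0 < R) (hS : 0 < S) :
    ∃ z : Pt N₁ N₂, z.1 ∈ Set.Icc (fun _ => -R) (fun _ => R) ∧
      -(N₁ * (π / (2 * R)) ^ 2) * ξ z ≤ lapX ξ z ∧
      -(N₂ * (π / (2 * S)) ^ 2) * ξ z ≤ lapY ξ z := by
  let e : (Fin N₁ ⊕ Fin N₂ → ℝ) → Pt N₁ N₂ := fun x => (x ∘ Sum.inl, x ∘ Sum.inr)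
  let r : Fin N₁ ⊕ Fin N₂ → ℝ := Sum.elim (fun _ => R) (fun _ => S)
  have he : ContDiff ℝ 2 e := by unfold e Function.comp; fun_prop
  obtain ⟨x, hx, hle⟩ := exists_mem_Icc_forall_le_iteratedDeriv_two_update (r := r)
    (Sum.rec (fun _ => hR) fun _ => hS) (hξ.comp he) fun y _ => hpos (e y)
  have hX (i : Fin N₁) : -(π / (2 * R)) ^ 2 * ξ (e x) ≤ pX i (pX i ξ) (e x) := by
    simpa [pX_pX, e, r] using hle (Sum.inl i)
  have hY (j : Fin N₂) : -(π / (2 * S)) ^ 2 * ξ (e x) ≤ pY j (pY j ξ) (e x) := by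
    simpa [pY_pY, e, r] using hle (Sum.inr j)
  refine ⟨e x, ⟨fun i => hx.1 (Sum.inl i), fun i => hx.2 (Sum.inl i)⟩, ?_, ?_⟩
  · simpa [lapX, mul_assoc] using Finset.card_nsmul_le_sum Finset.univ _ _ fun i _ => hX i
  · simpa [lapY, mul_assoc] using Finset.card_nsmul_le_sum Finset.univ _ _ fun j _ => hY j

theorem tendsto_const_mul_pi_div_two_mul_sq_atTop (C : ℝ) :
    Tendsto (fun R : ℝ => C * (π / (2 * R)) ^ 2) atTop (𝓝 0) := by
  have h : Tendsto (fun R : ℝ => π / (2 * R)) atTop (𝓝 0) :=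
    tendsto_const_nhds.div_atTop (tendsto_id.const_mul_atTop two_pos)
  simpa using (h.pow 2).const_mul C

theorem nonpos_of_mul_le_neg_lapX_add_mul_lapY {a : (Fin N₁ → ℝ) → ℝ} (ha : Continuous a)
    (ha₀ : ∀ x, 0 ≤ a x) {η : ℝ} {ξ : Pt N₁ N₂ → ℝ} (hξ : ContDiff ℝ 2 ξ) (hpos : ∀ z, 0 < ξ z)
    (hle : ∀ z, η * ξ z ≤ -(lapX ξ z + a z.1 * lapY ξ z)) : η ≤ 0 := by
  refine ge_of_tendsto (tendsto_const_mul_pi_div_two_mul_sq_atTop N₁) ?_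
  filter_upwards [eventually_gt_atTop 0] with R hR
  obtain ⟨M, hM⟩ := (isCompact_Icc (a := fun _ : Fin N₁ => -R) (b := fun _ => R)).bddAbove_image
    ha.continuousOn
  -- The bound `M` depends on `R`, so `S` has to tend to infinity first.
  have hlim : Tendsto
      (fun S : ℝ => N₁ * (π / (2 * R)) ^ 2 + M * N₂ * (π / (2 * S)) ^ 2) atTop
      (𝓝 (N₁ * (π / (2 * R)) ^ 2)) := by
    simpa using (tendsto_const_mul_pi_div_two_mul_sq_atTop (M * N₂)).const_add _
  refine ge_of_tendsto hlim ?_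
  filter_upwards [eventually_gt_atTop 0] with S hS
  obtain ⟨z, hz, hX, hY⟩ := exists_le_lapX_and_le_lapY hξ hpos hR hS
  refine le_of_mul_le_mul_right ?_ (hpos z)
  have haM : a z.1 ≤ M := hM (Set.mem_image_of_mem a hz)
  calc η * ξ z ≤ -(lapX ξ z + a z.1 * lapY ξ z) := hle z
    _ ≤ N₁ * (π / (2 * R)) ^ 2 * ξ z + a z.1 * (N₂ * (π / (2 * S)) ^ 2 * ξ z) := by
        have := mul_le_mul_of_nonneg_left hY (ha₀ z.1)
        linarith
    _ ≤ N₁ * (π / (2 * R)) ^ 2 * ξ z + M * (N₂ * (π / (2 * S)) ^ 2 * ξ z) := by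
        have := hpos z
        gcongr
    _ = (N₁ * (π / (2 * R)) ^ 2 + M * N₂ * (π / (2 * S)) ^ 2) * ξ z := by ring

theorem enorm'_nonneg {n : ℕ} (x : Fin n → ℝ) : 0 ≤ enorm' x := Real.sqrt_nonneg _

theorem continuous_enorm' {n : ℕ} : Continuous (enorm' : (Fin n → ℝ) → ℝ) := by
  unfold enorm'
  fun_prop

theorem nonpos_of_mul_le_neg_grushinLap {s η : ℝ} (hs : 0 ≤ s) {ξ : Pt N₁ N₂ → ℝ}
    (hξ : ContDiff ℝ 2 ξ) (hpos : ∀ z, 0 < ξ z) (hle : ∀ z, η * ξ z ≤ -grushinLap s ξ z) :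
    η ≤ 0 :=
  nonpos_of_mul_le_neg_lapX_add_mul_lapY
    (continuous_enorm'.rpow_const fun _ => Or.inr (by positivity))
    (fun x => rpow_nonneg (enorm'_nonneg x) _) hξ hpos hle

theorem exists_positive_system_general {s η : ℝ} (hs : 0 ≤ s) (hη : 0 ≤ η)
    {V W ξ ζ : Pt N₁ N₂ → ℝ} (hV : ∀ z, 0 ≤ V z)
    (hξ : ContDiff ℝ (⊤ : ℕ∞) ξ) (hζ : ContDiff ℝ (⊤ : ℕ∞) ζ)
    (hξ_pos : ∀ z, 0 < ξ z) (hζ_pos : ∀ z, 0 < ζ z)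
    (hξ_eq : ∀ z, -grushinLap s ξ z = V z * ζ z + η * ξ z)
    (hζ_eq : ∀ z, -grushinLap s ζ z = W z * ξ z + η * ζ z) :
    ∃ φ χ : Pt N₁ N₂ → ℝ, ContDiff ℝ (⊤ : ℕ∞) φ ∧ ContDiff ℝ (⊤ : ℕ∞) χ ∧
      (∀ z, 0 < φ z) ∧ (∀ z, 0 < χ z) ∧
      (∀ z, -grushinLap s φ z = V z * χ z) ∧ (∀ z, -grushinLap s χ z = W z * φ z) := by
  have hle (z : Pt N₁ N₂) : η * ξ z ≤ -grushinLap s ξ z := by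
    rw [hξ_eq z]
    exact le_add_of_nonneg_left (mul_nonneg (hV z) (hζ_pos z).le)
  obtain rfl : η = 0 :=
    (nonpos_of_mul_le_neg_grushinLap hs (contDiff_infty.1 hξ 2) hξ_pos hle).antisymm hη
  exact ⟨ξ, ζ, hξ, hζ, hξ_pos, hζ_pos, by simpa using hξ_eq, by simpa using hζ_eq⟩

end Grushin

/-- for a stable solution there are smooth positive `φ, χ` with
`-Δ_s φ = p v^{p-1} χ` and `-Δ_s χ = θ u^{θ-1} φ` on all of `ℝ^N`. -/
theorem exists_positive_system (N₁ N₂ : ℕ) (hN₁ : 1 ≤ N₁) (hN₂ : 1 ≤ N₂)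
    (s p θ : ℝ) (hs : 0 ≤ s) (hp : 0 < p) (hθ : 0 < θ)
    (u v : Pt N₁ N₂ → ℝ) (hsol : IsLaneEmdenSol s p θ u v) (hstab : IsStable s p θ u v) :
    ∃ φ χ : Pt N₁ N₂ → ℝ, ContDiff ℝ (⊤ : ℕ∞) φ ∧ ContDiff ℝ (⊤ : ℕ∞) χ ∧
      (∀ z, 0 < φ z) ∧ (∀ z, 0 < χ z) ∧
      (∀ z, -grushinLap s φ z = p * (v z) ^ (p - 1) * χ z) ∧
      (∀ z, -grushinLap s χ z = θ * (u z) ^ (θ - 1) * φ z) := by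
  obtain ⟨η, ξ, ζ, hη, hξ, hζ, hξ_pos, hζ_pos, hξ_eq, hζ_eq⟩ := hstab
  have hV z : 0 ≤ p * v z ^ (p - 1) := mul_nonneg hp.le (rpow_nonneg (hsol.2.2.2.1 z).le _)
  exact exists_positive_system_general hs hη hV hξ hζ hξ_pos hζ_pos hξ_eq hζ_eq

end
end
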